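/- arXiv:2407.11903 — 3 statements merged into one kernel-verified Lean document; each statement's English description precedes it below -/
import Mathlib

section
/- (Yuan's rigidity theorem for the special Lagrangian equation) Let n ≥ 2, let Θ be a real constant with |Θ| > (n−2)π/2, and let u : ℝⁿ → ℝ be a smooth function such that ∑_{i=1}^n arctan λᵢ(x) = Θ for every x ∈ ℝⁿ, where λ₁(x),…,λₙ(x) are the eigenvalues of D²u(x). Then u is a quadratic polynomial. -/
open Real

/-- Second partial derivative matrix (Hessian) of `u` at `x`. -/
noncomputable def hessianMatrix {n : ℕ} (u : EuclideanSpace ℝ (Fin n) → ℝ)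
    (x : EuclideanSpace ℝ (Fin n)) : Matrix (Fin n) (Fin n) ℝ :=
  Matrix.of fun i j =>
    fderiv ℝ (fun y => fderiv ℝ u y (EuclideanSpace.single j 1)) x (EuclideanSpace.single i 1)

/-- `u` is a quadratic polynomial. -/
def IsQuadraticPoly {n : ℕ} (u : EuclideanSpace ℝ (Fin n) → ℝ) : Prop :=
  ∃ (A : Matrix (Fin n) (Fin n) ℝ) (b : Fin n → ℝ) (c : ℝ), A.IsSymm ∧
    ∀ x, u x = (1/2) * (∑ i, ∑ j, A i j * x i * x j) + (∑ i, b i * x i) + c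

/-!
Replacing `u` by `-u` if necessary, assume `Θ > (n - 2)π/2`. Then every Lagrangian angle
`arctan λᵢ` is bounded below by more than `-π/2`, so that rotating the graph of `∇u` in each plane
`(xᵢ, pᵢ)` by a small angle produces the graph of another gradient map over all of `ℝⁿ`, now with
bounded Hessian `H` and still with supercritical phase. Such a graph is minimal, with metric
`1 + H²` uniformly equivalent to the Euclidean one, and in the supercritical range all the second
derivatives `⟨H e, e⟩` are subharmonic on it. By the weak Harnack inequality a bounded subharmonic
function is close to its supremum on most of every large ball, so finitely many directions can be
almost maximised at a common point, and by compactness some limit `A` of values of `H` dominates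
all of them. The phase of `A` is that of `H`, and the phase is strictly monotone, so `H` equals `A`
where it is close to `A`, and hence everywhere by connectedness.
-/

namespace SpecialLagrangian

open MeasureTheory Set Filter Topology Matrix
open scoped ContDiff ENNReal

variable {n : ℕ}

local notation "𝔼" n:max => EuclideanSpace ℝ (Fin n)

/-! ### Partial derivatives -/

section VectorValued

variable {F : Type*} [NormedAddCommGroup F] [NormedSpace ℝ F] {f g : 𝔼 n → F} {x : 𝔼 n}

/-- The partial derivative of `f` in the `k`-th coordinate direction. -/
noncomputable def pderiv (k : Fin n) (f : 𝔼 n → F) (x : 𝔼 n) : F :=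
  fderiv ℝ f x (EuclideanSpace.single k 1)

theorem contDiff_pderiv {m m' : WithTop ℕ∞} (hf : ContDiff ℝ m' f)
    (h : m + 1 ≤ m') (k : Fin n) : ContDiff ℝ m (pderiv k f) :=
  (hf.fderiv_right h).clm_apply contDiff_const

theorem contDiff_infty_pderiv (hf : ContDiff ℝ ∞ f) (k : Fin n) : ContDiff ℝ ∞ (pderiv k f) :=
  contDiff_pderiv hf (by simp) k

theorem continuous_pderiv (hf : ContDiff ℝ 1 f) (k : Fin n) : Continuous (pderiv k f) :=
  (contDiff_pderiv (m := 0) hf (by simp) k).continuous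

theorem pderiv_const (k : Fin n) (c : F) : pderiv k (fun _ => c) x = 0 := by
  simp [pderiv]

theorem pderiv_add (k : Fin n) (hf : DifferentiableAt ℝ f x) (hg : DifferentiableAt ℝ g x) :
    pderiv k (fun y => f y + g y) x = pderiv k f x + pderiv k g x := by
  simp [pderiv, fderiv_fun_add hf hg]

theorem pderiv_clm_comp {G : Type*} [NormedAddCommGroup G] [NormedSpace ℝ G] (k : Fin n)
    (L : F →L[ℝ] G) (hf : DifferentiableAt ℝ f x) :
    pderiv k (fun y => L (f y)) x = L (pderiv k f x) :=
  DFunLike.congr_fun (L.hasFDerivAt.comp x hf.hasFDerivAt).fderiv _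

theorem pderiv_mul {𝔸 : Type*} [NormedRing 𝔸] [NormedAlgebra ℝ 𝔸] {f g : 𝔼 n → 𝔸} (k : Fin n)
    (hf : DifferentiableAt ℝ f x) (hg : DifferentiableAt ℝ g x) :
    pderiv k (fun y => f y * g y) x = pderiv k f x * g x + f x * pderiv k g x := by
  simp [pderiv, fderiv_fun_mul' hf hg, add_comm]

end VectorValued

theorem contDiff_coord (i : Fin n) : ContDiff ℝ ∞ fun x : 𝔼 n => x i :=
  (EuclideanSpace.proj i : 𝔼 n →L[ℝ] ℝ).contDiff

theorem contDiff_coord_sub (i : Fin n) (t : ℝ) : ContDiff ℝ ∞ fun x : 𝔼 n => x i - t :=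
  (contDiff_coord i).sub contDiff_const

section Rules

variable {f g : 𝔼 n → ℝ} {x : 𝔼 n} (k : Fin n)

theorem pderiv_sub (hf : DifferentiableAt ℝ f x) (hg : DifferentiableAt ℝ g x) :
    pderiv k (fun y => f y - g y) x = pderiv k f x - pderiv k g x := by
  simp [pderiv, fderiv_fun_sub hf hg]

theorem pderiv_const_mul (hf : DifferentiableAt ℝ f x) (c : ℝ) :
    pderiv k (fun y => c * f y) x = c * pderiv k f x := by
  simp [pderiv_mul k (differentiableAt_const c) hf, pderiv_const]

theorem pderiv_sum {ι : Type*} (s : Finset ι) {F : ι → 𝔼 n → ℝ}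
    (hF : ∀ i ∈ s, DifferentiableAt ℝ (F i) x) :
    pderiv k (fun y => ∑ i ∈ s, F i y) x = ∑ i ∈ s, pderiv k (F i) x := by
  simp [pderiv, fderiv_fun_sum hF]

theorem pderiv_comp {φ : ℝ → ℝ} {φ' : ℝ} (hφ : HasDerivAt φ φ' (f x))
    (hf : DifferentiableAt ℝ f x) : pderiv k (fun y => φ (f y)) x = φ' * pderiv k f x := by
  have h : HasFDerivAt (fun y => φ (f y)) (φ' • fderiv ℝ f x) x :=
    hφ.comp_hasFDerivAt x hf.hasFDerivAt
  simp [pderiv, h.fderiv]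

theorem pderiv_coord (i : Fin n) : pderiv k (fun y : 𝔼 n => y i) x = if k = i then 1 else 0 := by
  change fderiv ℝ (EuclideanSpace.proj i : 𝔼 n →L[ℝ] ℝ) x _ = _
  rw [ContinuousLinearMap.fderiv]
  simp [eq_comm]

theorem pderiv_coord_sub (i : Fin n) (t : ℝ) :
    pderiv k (fun y : 𝔼 n => y i - t) x = if k = i then 1 else 0 := by
  rw [pderiv_sub k ((contDiff_coord i).differentiable (by simp) x) (differentiableAt_const t),
    pderiv_coord, pderiv_const, sub_zero]

end Rules

theorem pderiv_pderiv_eq_fderiv_fderiv {f : 𝔼 n → ℝ} (hf : ContDiff ℝ 2 f) (k l : Fin n)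
    (x : 𝔼 n) : pderiv k (pderiv l f) x =
      fderiv ℝ (fderiv ℝ f) x (EuclideanSpace.single k 1) (EuclideanSpace.single l 1) := by
  have hd : DifferentiableAt ℝ (fderiv ℝ f) x :=
    (hf.fderiv_right (m := 1) (by norm_num)).differentiable (by simp) x
  change fderiv ℝ (fun y => fderiv ℝ f y (EuclideanSpace.single l 1)) x _ = _
  simp [fderiv_clm_apply hd (differentiableAt_const _)]

theorem pderiv_comm {f : 𝔼 n → ℝ} (hf : ContDiff ℝ 2 f) (k l : Fin n) (x : 𝔼 n) :
    pderiv k (pderiv l f) x = pderiv l (pderiv k f) x := by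
  have hsymm : IsSymmSndFDerivAt ℝ f x := hf.contDiffAt.isSymmSndFDerivAt (by simp)
  rw [pderiv_pderiv_eq_fderiv_fderiv hf, pderiv_pderiv_eq_fderiv_fderiv hf]
  exact hsymm _ _

theorem fderiv_apply_eq_sum_pderiv (f : 𝔼 n → ℝ) (x v : 𝔼 n) :
    fderiv ℝ f x v = ∑ k, v k * pderiv k f x := by
  conv_lhs => rw [← (EuclideanSpace.basisFun (Fin n) ℝ).sum_repr v]
  simp [map_sum, pderiv]

theorem norm_fderiv_sq_le_sum_pderiv_sq (f : 𝔼 n → ℝ) (x : 𝔼 n) :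
    ‖fderiv ℝ f x‖ ^ 2 ≤ ∑ k, pderiv k f x ^ 2 := by
  have h0 : 0 ≤ ∑ k, pderiv k f x ^ 2 := Finset.sum_nonneg fun _ _ => sq_nonneg _
  refine (Real.le_sqrt (norm_nonneg _) h0).1 <|
    ContinuousLinearMap.opNorm_le_bound _ (sqrt_nonneg _) fun v => ?_
  rw [fderiv_apply_eq_sum_pderiv, Real.norm_eq_abs, EuclideanSpace.norm_eq, ← Real.sqrt_mul h0]
  refine Real.abs_le_sqrt ?_
  simp only [Real.norm_eq_abs, sq_abs]
  rw [mul_comm]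
  exact Finset.sum_mul_sq_le_sq_mul_sq _ _ _

theorem eq_const_of_pderiv_eq_zero {f : 𝔼 n → ℝ} (hf : Differentiable ℝ f)
    (h : ∀ k x, pderiv k f x = 0) (x y : 𝔼 n) : f x = f y :=
  is_const_of_fderiv_eq_zero hf
    (fun z => by ext v; simp [fderiv_apply_eq_sum_pderiv, h]) x y

theorem tsupport_pderiv_subset (f : 𝔼 n → ℝ) (k : Fin n) :
    tsupport (pderiv k f) ⊆ tsupport f := by
  refine (closure_mono fun y hy => ?_).trans (tsupport_fderiv_subset ℝ (f := f))
  exact fun h => hy (by simp [pderiv, h])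

theorem hasCompactSupport_pderiv {f : 𝔼 n → ℝ} (hf : HasCompactSupport f) (k : Fin n) :
    HasCompactSupport (pderiv k f) :=
  hf.of_isClosed_subset (isClosed_tsupport _) (tsupport_pderiv_subset f k)

theorem integral_pderiv_eq_zero {f : 𝔼 n → ℝ} (hf : ContDiff ℝ 1 f) (hc : HasCompactSupport f)
    (k : Fin n) : ∫ x, pderiv k f x = 0 := by
  have h := integral_mul_fderiv_eq_neg_fderiv_mul_of_integrable (μ := (volume : Measure (𝔼 n)))
    (f := fun _ : 𝔼 n => (1:ℝ)) (g := f) (v := EuclideanSpace.single k 1)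
    (by simp) ?_ ?_ (fun _ _ => by fun_prop) (fun x _ => hf.differentiable (by simp) x)
  · simpa [pderiv] using h
  · simp only [one_mul]
    exact (continuous_pderiv hf k).integrable_of_hasCompactSupport (hasCompactSupport_pderiv hc k)
  · simpa only [one_mul] using hf.continuous.integrable_of_hasCompactSupport hc

section PosPartPow

theorem hasDerivAt_max_zero_pow_at_zero (m : ℕ) :
    HasDerivAt (fun t : ℝ => max t 0 ^ (m + 2)) 0 0 := by
  have hO : (fun t : ℝ => max t 0 ^ (m + 2)) =O[𝓝 0] fun t : ℝ => t ^ (m + 2) := by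
    refine Asymptotics.IsBigO.of_bound 1 (.of_forall fun t => ?_)
    rw [norm_pow, norm_pow, one_mul]
    gcongr
    rw [Real.norm_eq_abs, Real.norm_eq_abs, abs_of_nonneg (le_max_right _ _)]
    exact max_le (le_abs_self _) (abs_nonneg _)
  have ho : (fun t : ℝ => t ^ (m + 2)) =o[𝓝 0] fun t : ℝ => t := by
    simpa using Asymptotics.isLittleO_pow_pow (𝕜 := ℝ) (m := 1) (n := m + 2) (by omega)
  rw [hasDerivAt_iff_isLittleO]
  simpa using hO.trans_isLittleO ho

theorem hasDerivAt_max_zero_pow (m : ℕ) (t : ℝ) :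
    HasDerivAt (fun t : ℝ => max t 0 ^ (m + 2)) ((m + 2) * max t 0 ^ (m + 1)) t := by
  rcases lt_trichotomy t 0 with h | rfl | h
  · have heq : (fun t : ℝ => max t 0 ^ (m + 2)) =ᶠ[𝓝 t] fun _ => 0 := by
      filter_upwards [Iio_mem_nhds h] with s hs
      simp [max_eq_right (mem_Iio.1 hs).le]
    simpa [max_eq_right h.le] using (hasDerivAt_const t (0:ℝ)).congr_of_eventuallyEq heq
  · simpa using hasDerivAt_max_zero_pow_at_zero m
  · have heq : (fun t : ℝ => max t 0 ^ (m + 2)) =ᶠ[𝓝 t] fun t => t ^ (m + 2) := by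
      filter_upwards [Ioi_mem_nhds h] with s hs
      simp [max_eq_left (mem_Ioi.1 hs).le]
    simpa [max_eq_left h.le] using (hasDerivAt_pow (m + 2) t).congr_of_eventuallyEq heq

theorem contDiff_max_zero_pow (m : ℕ) : ContDiff ℝ m fun t : ℝ => max t 0 ^ (m + 1) := by
  induction m with
  | zero => simpa using (by fun_prop : Continuous fun t : ℝ => max t 0)
  | succ m ih =>
    have hderiv : deriv (fun t : ℝ => max t 0 ^ (m + 2)) =
        fun t => ((m : ℝ) + 2) * max t 0 ^ (m + 1) :=
      funext fun t => (hasDerivAt_max_zero_pow m t).deriv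
    rw [Nat.cast_succ, contDiff_succ_iff_deriv]
    refine ⟨fun t => (hasDerivAt_max_zero_pow m t).differentiableAt, by simp, ?_⟩
    rw [hderiv]
    exact contDiff_const.mul ih

end PosPartPow

/-! ### Elliptic operators in divergence form -/

/-- A second order operator `∑ aᵢⱼ ∂ᵢ∂ⱼ` on `ℝⁿ` with symmetric, uniformly positive coefficients
whose columns are divergence free, so that it is also in divergence form `∑ ∂ᵢ(aᵢⱼ ∂ⱼ)`. -/
structure EllipticOperator (n : ℕ) where
  coeff : Fin n → Fin n → 𝔼 n → ℝ
  contDiff_coeff : ∀ i j, ContDiff ℝ 1 (coeff i j)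
  coeff_comm : ∀ i j x, coeff i j x = coeff j i x
  div_coeff : ∀ j x, ∑ i, pderiv i (coeff i j) x = 0
  ellip : ℝ
  ellip_pos : 0 < ellip
  ellip_le : ∀ x (ξ : Fin n → ℝ), ellip * ∑ i, ξ i ^ 2 ≤ ∑ i, ∑ j, coeff i j x * ξ i * ξ j

namespace EllipticOperator

variable (L : EllipticOperator n) {f g φ ψ : 𝔼 n → ℝ}

/-- The value `∑ aᵢⱼ ∂ᵢ∂ⱼ f` of the operator at `f`. -/
noncomputable def lap (f : 𝔼 n → ℝ) (x : 𝔼 n) : ℝ :=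
  ∑ i, ∑ j, L.coeff i j x * pderiv i (pderiv j f) x

/-- The carré du champ `∑ aᵢⱼ ∂ᵢf ∂ⱼg` of the operator. -/
noncomputable def gam (f g : 𝔼 n → ℝ) (x : 𝔼 n) : ℝ :=
  ∑ i, ∑ j, L.coeff i j x * pderiv i f x * pderiv j g x

theorem gam_comm (f g : 𝔼 n → ℝ) (x : 𝔼 n) : L.gam f g x = L.gam g f x := by
  unfold gam
  rw [Finset.sum_comm]
  refine Finset.sum_congr rfl fun i _ => Finset.sum_congr rfl fun j _ => ?_
  rw [L.coeff_comm j i]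
  ring

theorem quadForm_nonneg (x : 𝔼 n) (ξ : Fin n → ℝ) : 0 ≤ ∑ i, ∑ j, L.coeff i j x * ξ i * ξ j :=
  (mul_nonneg L.ellip_pos.le (Finset.sum_nonneg fun _ _ => sq_nonneg _)).trans (L.ellip_le x ξ)

theorem gam_self_nonneg (f : 𝔼 n → ℝ) (x : 𝔼 n) : 0 ≤ L.gam f f x :=
  L.quadForm_nonneg x fun k => pderiv k f x

theorem two_mul_gam_le (a b : ℝ) (f g : 𝔼 n → ℝ) (x : 𝔼 n) :
    2 * a * b * L.gam f g x ≤ a ^ 2 * L.gam f f x + b ^ 2 * L.gam g g x := by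
  have hsq := L.quadForm_nonneg x fun k => a * pderiv k f x - b * pderiv k g x
  have hexpand : ∑ i, ∑ j, L.coeff i j x * (a * pderiv i f x - b * pderiv i g x) *
      (a * pderiv j f x - b * pderiv j g x) =
      a ^ 2 * L.gam f f x - a * b * L.gam f g x - a * b * L.gam g f x + b ^ 2 * L.gam g g x := by
    simp only [gam, Finset.mul_sum, ← Finset.sum_add_distrib, ← Finset.sum_sub_distrib]
    refine Finset.sum_congr rfl fun i _ => Finset.sum_congr rfl fun j _ => ?_
    ring
  rw [hexpand, L.gam_comm g f] at hsq
  linarith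

theorem continuous_lap (hf : ContDiff ℝ 2 f) : Continuous (L.lap f) :=
  continuous_finsetSum _ fun i _ => continuous_finsetSum _ fun j _ =>
    (L.contDiff_coeff i j).continuous.mul
      (continuous_pderiv (contDiff_pderiv hf (by norm_num) j) i)

theorem continuous_gam (hf : ContDiff ℝ 1 f) (hg : ContDiff ℝ 1 g) : Continuous (L.gam f g) :=
  continuous_finsetSum _ fun i _ => continuous_finsetSum _ fun j _ =>
    ((L.contDiff_coeff i j).continuous.mul (continuous_pderiv hf i)).mul (continuous_pderiv hg j)

theorem hasCompactSupport_lap (hf : HasCompactSupport f) : HasCompactSupport (L.lap f) := by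
  refine HasCompactSupport.of_support_subset_isCompact hf.isCompact fun x hx => ?_
  by_contra h
  refine hx (Finset.sum_eq_zero fun i _ => Finset.sum_eq_zero fun j _ => ?_)
  have hij : x ∉ tsupport (pderiv i (pderiv j f)) := fun h' =>
    h (tsupport_pderiv_subset f j (tsupport_pderiv_subset _ i h'))
  simp [image_eq_zero_of_notMem_tsupport hij]

theorem hasCompactSupport_gam_right (f : 𝔼 n → ℝ) (hg : HasCompactSupport g) :
    HasCompactSupport (L.gam f g) := by
  refine HasCompactSupport.of_support_subset_isCompact hg.isCompact fun x hx => ?_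
  by_contra h
  refine hx (Finset.sum_eq_zero fun i _ => Finset.sum_eq_zero fun j _ => ?_)
  have hj : x ∉ tsupport (pderiv j g) := fun h' => h (tsupport_pderiv_subset g j h')
  simp [image_eq_zero_of_notMem_tsupport hj]

theorem mul_lap_add_gam_eq_div (hφ : ContDiff ℝ 1 φ) (hψ : ContDiff ℝ 2 ψ) (x : 𝔼 n) :
    φ x * L.lap ψ x + L.gam φ ψ x =
      ∑ i, ∑ j, pderiv i (fun y => φ y * (L.coeff i j y * pderiv j ψ y)) x := by
  have product_rule (i j) : pderiv i (fun y => φ y * (L.coeff i j y * pderiv j ψ y)) x =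
      L.coeff i j x * pderiv i φ x * pderiv j ψ x + φ x * (pderiv i (L.coeff i j) x * pderiv j ψ x)
        + φ x * (L.coeff i j x * pderiv i (pderiv j ψ) x) := by
    have hdφ := hφ.differentiable (by simp) x
    have hda := (L.contDiff_coeff i j).differentiable (by simp) x
    have hdψ : DifferentiableAt ℝ (pderiv j ψ) x :=
      (contDiff_pderiv (m := 1) hψ (by norm_num) j).differentiable (by simp) x
    rw [pderiv_mul i hdφ (hda.fun_mul hdψ), pderiv_mul i hda hdψ]
    ring
  have div_free : ∑ i, ∑ j, φ x * (pderiv i (L.coeff i j) x * pderiv j ψ x) = 0 := by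
    rw [Finset.sum_comm]
    refine Finset.sum_eq_zero fun j _ => ?_
    rw [← Finset.mul_sum, ← Finset.sum_mul, L.div_coeff, zero_mul, mul_zero]
  simp only [product_rule, Finset.sum_add_distrib, div_free, lap, gam, Finset.mul_sum]
  ring

theorem integral_mul_lap_add_gam (hφ : ContDiff ℝ 1 φ) (hψ : ContDiff ℝ 2 ψ)
    (hc : HasCompactSupport φ ∨ HasCompactSupport ψ) :
    ∫ x, (φ x * L.lap ψ x + L.gam φ ψ x) = 0 := by
  set F : Fin n → Fin n → 𝔼 n → ℝ := fun i j x => φ x * (L.coeff i j x * pderiv j ψ x)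
  have hFd (i j) : ContDiff ℝ 1 (F i j) :=
    hφ.mul ((L.contDiff_coeff i j).mul (contDiff_pderiv hψ (by norm_num) j))
  have hFc (i j) : HasCompactSupport (F i j) :=
    hc.elim (fun h => h.mul_right) fun h => (hasCompactSupport_pderiv h j).mul_left.mul_left
  have hint (i j) : Integrable (pderiv i (F i j)) :=
    (continuous_pderiv (hFd i j) i).integrable_of_hasCompactSupport
      (hasCompactSupport_pderiv (hFc i j) i)
  simp only [L.mul_lap_add_gam_eq_div hφ hψ]
  rw [integral_finsetSum _ fun i _ => integrable_finsetSum _ fun j _ => hint i j]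
  refine Finset.sum_eq_zero fun i _ => ?_
  rw [integral_finsetSum _ fun j _ => hint i j]
  exact Finset.sum_eq_zero fun j _ => integral_pderiv_eq_zero (hFd i j) (hFc i j) i

theorem integrable_mul_lap_add_gam (hφ : ContDiff ℝ 1 φ) (hψ : ContDiff ℝ 2 ψ)
    (hc : HasCompactSupport φ) : Integrable fun x => φ x * L.lap ψ x + L.gam φ ψ x := by
  have hgam : L.gam φ ψ = L.gam ψ φ := funext (L.gam_comm φ ψ)
  refine ((hφ.continuous.mul (L.continuous_lap hψ)).add
    (L.continuous_gam hφ (hψ.of_le one_le_two))).integrable_of_hasCompactSupport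
    (hc.mul_right.add ?_)
  exact hgam ▸ L.hasCompactSupport_gam_right ψ hc

theorem integral_mul_lap_comm (hf : ContDiff ℝ 2 f) (hψ : ContDiff ℝ 2 ψ)
    (hc : HasCompactSupport ψ) : ∫ x, f x * L.lap ψ x = ∫ x, ψ x * L.lap f x := by
  have hf1 : ContDiff ℝ 1 f := hf.of_le (by norm_num)
  have hψ1 : ContDiff ℝ 1 ψ := hψ.of_le (by norm_num)
  have hfψ := L.integral_mul_lap_add_gam hf1 hψ (.inr hc)
  have hψf := L.integral_mul_lap_add_gam hψ1 hf (.inl hc)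
  have int_fψ : Integrable fun x => f x * L.lap ψ x :=
    (hf.continuous.mul (L.continuous_lap hψ)).integrable_of_hasCompactSupport
      (L.hasCompactSupport_lap hc).mul_left
  have int_ψf : Integrable fun x => ψ x * L.lap f x :=
    (hψ.continuous.mul (L.continuous_lap hf)).integrable_of_hasCompactSupport hc.mul_right
  have int_gam : Integrable (L.gam f ψ) :=
    (L.continuous_gam hf1 hψ1).integrable_of_hasCompactSupport
      (L.hasCompactSupport_gam_right f hc)
  simp only [L.gam_comm ψ f] at hψf
  rw [integral_add int_fψ int_gam] at hfψ
  rw [integral_add int_ψf int_gam] at hψf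
  linarith

theorem lap_comp {φ φ' : ℝ → ℝ} {φ'' : ℝ} (hf : ContDiff ℝ 2 f) (x : 𝔼 n)
    (hφ : ∀ y, HasDerivAt φ (φ' (f y)) (f y)) (hφ' : HasDerivAt φ' φ'' (f x)) :
    L.lap (fun y => φ (f y)) x = φ' (f x) * L.lap f x + φ'' * L.gam f f x := by
  have hd : Differentiable ℝ f := hf.differentiable (by simp)
  have first (j) : pderiv j (fun y => φ (f y)) = fun y => φ' (f y) * pderiv j f y :=
    funext fun y => pderiv_comp j (hφ y) (hd y)
  have second (i j) : pderiv i (fun y => φ' (f y) * pderiv j f y) x =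
      φ'' * pderiv i f x * pderiv j f x + φ' (f x) * pderiv i (pderiv j f) x := by
    have hdj : DifferentiableAt ℝ (pderiv j f) x :=
      (contDiff_pderiv (m := 1) hf (by norm_num) j).differentiable (by simp) x
    have hdφ' : DifferentiableAt ℝ (fun y => φ' (f y)) x := hφ'.differentiableAt.comp x (hd x)
    rw [pderiv_mul i hdφ' hdj, pderiv_comp i hφ' (hd x)]
  simp only [lap, gam, first, second, Finset.mul_sum, ← Finset.sum_add_distrib]
  refine Finset.sum_congr rfl fun i _ => Finset.sum_congr rfl fun j _ => ?_
  ring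

theorem gam_comp_left {φ : ℝ → ℝ} {φ' : ℝ} {x : 𝔼 n} (hf : DifferentiableAt ℝ f x)
    (hφ : HasDerivAt φ φ' (f x)) : L.gam (fun y => φ (f y)) g x = φ' * L.gam f g x := by
  simp only [gam, pderiv_comp _ hφ hf, Finset.mul_sum]
  refine Finset.sum_congr rfl fun i _ => Finset.sum_congr rfl fun j _ => ?_
  ring

section LogQuotient

variable {w : 𝔼 n → ℝ} {ε : ℝ}

theorem hasDerivAt_log_add_sub_log {t : ℝ} (ht : t ≠ 0) (htε : t + ε ≠ 0) :
    HasDerivAt (fun t => log (t + ε) - log t) ((t + ε)⁻¹ - t⁻¹) t := by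
  convert! (((hasDerivAt_id t).add_const ε).log htε).sub (hasDerivAt_log ht) using 1
  simp only [id_eq, one_div]

theorem hasDerivAt_inv_add_sub_inv {t : ℝ} (ht : t ≠ 0) (htε : t + ε ≠ 0) :
    HasDerivAt (fun t => (t + ε)⁻¹ - t⁻¹) (-((t + ε) ^ 2)⁻¹ + (t ^ 2)⁻¹) t := by
  convert! (((hasDerivAt_id t).add_const ε).inv htε).sub (hasDerivAt_inv ht) using 1
  simp [neg_div, one_div, sub_eq_add_neg]

theorem gam_le_lap_log_add_sub_log (hw : ContDiff ℝ 2 w) (hw0 : ∀ x, 0 < w x)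
    (hL : ∀ x, L.lap w x ≤ 0) (hε : 0 < ε) (x : 𝔼 n) :
    L.gam (fun x => log (w x + ε) - log (w x)) (fun x => log (w x + ε) - log (w x)) x ≤
      L.lap (fun x => log (w x + ε) - log (w x)) x := by
  have hwε (y) : 0 < w y + ε := add_pos (hw0 y) hε
  have hφ (y) := hasDerivAt_log_add_sub_log (hw0 y).ne' (hwε y).ne'
  have hgam (g : 𝔼 n → ℝ) : L.gam (fun x => log (w x + ε) - log (w x)) g x =
      ((w x + ε)⁻¹ - (w x)⁻¹) * L.gam w g x :=
    L.gam_comp_left (φ := fun t => log (t + ε) - log t) (hw.differentiable two_ne_zero x) (hφ x)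
  rw [hgam, L.gam_comm w, hgam, L.lap_comp (φ := fun t => log (t + ε) - log t) hw x hφ
    (hasDerivAt_inv_add_sub_inv (hw0 x).ne' (hwε x).ne')]
  have hinv : (w x + ε)⁻¹ ≤ (w x)⁻¹ := inv_anti₀ (hw0 x) (by linarith)
  have hpos : 0 < (w x + ε)⁻¹ := inv_pos.2 (hwε x)
  have hfirst : 0 ≤ ((w x + ε)⁻¹ - (w x)⁻¹) * L.lap w x :=
    mul_nonneg_of_nonpos_of_nonpos (by linarith) (hL x)
  have hsecond : ((w x + ε)⁻¹ - (w x)⁻¹) ^ 2 ≤ -((w x + ε) ^ 2)⁻¹ + (w x ^ 2)⁻¹ := by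
    rw [← inv_pow, ← inv_pow]
    nlinarith
  have := mul_le_mul_of_nonneg_right hsecond (L.gam_self_nonneg w x)
  linarith

end LogQuotient

end EllipticOperator

/-! ### The mean value inequality on minimal graphs -/

/-- What the intrinsic Laplacian of an entire minimal graph with bounded gradient offers in graph
coordinates: `density` is the area density, the operator is `density` times the Laplacian, and
`sqDist x₀ x` is the squared distance in the ambient space between the points above `x₀` and `x`. -/
structure MinimalGraphOperator (n : ℕ) extends EllipticOperator n where
  density : 𝔼 n → ℝ
  continuous_density : Continuous density
  one_le_density : ∀ x, 1 ≤ density x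
  densityBound : ℝ
  density_le : ∀ x, density x ≤ densityBound
  sqDist : 𝔼 n → 𝔼 n → ℝ
  contDiff_sqDist : ∀ x₀, ContDiff ℝ 2 (sqDist x₀)
  distortion : ℝ
  one_le_distortion : 1 ≤ distortion
  norm_sq_le_sqDist : ∀ x₀ x, ‖x - x₀‖ ^ 2 ≤ sqDist x₀ x
  sqDist_le : ∀ x₀ x, sqDist x₀ x ≤ distortion * ‖x - x₀‖ ^ 2
  lap_sqDist : ∀ x₀ x, toEllipticOperator.lap (sqDist x₀) x = 2 * n * density x
  gam_sqDist_le : ∀ x₀ x,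
    toEllipticOperator.gam (sqDist x₀) (sqDist x₀) x ≤ 4 * sqDist x₀ x * density x

namespace MinimalGraphOperator

variable (M : MinimalGraphOperator n) {f : 𝔼 n → ℝ} {x₀ x : 𝔼 n} {r : ℝ}

theorem sqDist_nonneg (x₀ x : 𝔼 n) : 0 ≤ M.sqDist x₀ x :=
  (sq_nonneg _).trans (M.norm_sq_le_sqDist x₀ x)

theorem continuous_sqDist (x₀ : 𝔼 n) : Continuous (M.sqDist x₀) :=
  (M.contDiff_sqDist x₀).continuous

theorem density_nonneg (x : 𝔼 n) : 0 ≤ M.density x := zero_le_one.trans (M.one_le_density x)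

/-- The Lipschitz cutoff `(1 - s / r²)₊`, supported in the extrinsic ball of radius `r`. -/
noncomputable def cutoff (x₀ : 𝔼 n) (r : ℝ) (x : 𝔼 n) : ℝ := max (1 - M.sqDist x₀ x / r ^ 2) 0

theorem cutoff_nonneg (x₀ : 𝔼 n) (r : ℝ) (x : 𝔼 n) : 0 ≤ M.cutoff x₀ r x := le_max_right _ _

theorem cutoff_le_one (x₀ : 𝔼 n) (r : ℝ) (x : 𝔼 n) : M.cutoff x₀ r x ≤ 1 :=
  max_le (sub_le_self _ (div_nonneg (M.sqDist_nonneg _ _) (sq_nonneg _))) zero_le_one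

theorem sqDist_lt_of_cutoff_ne_zero (hr : 0 < r) (hx : M.cutoff x₀ r x ≠ 0) :
    M.sqDist x₀ x < r ^ 2 := by
  by_contra! h
  exact hx (max_eq_right (sub_nonpos.2 ((one_le_div (by positivity)).2 h)))

theorem cutoff_eq_zero (hr : 0 < r) (hx : r ≤ ‖x - x₀‖) : M.cutoff x₀ r x = 0 := by
  by_contra h
  have h1 : r ^ 2 ≤ ‖x - x₀‖ ^ 2 := by gcongr
  exact absurd (M.sqDist_lt_of_cutoff_ne_zero hr h)
    (not_lt.2 (h1.trans (M.norm_sq_le_sqDist x₀ x)))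

theorem continuous_cutoff (x₀ : 𝔼 n) (r : ℝ) : Continuous (M.cutoff x₀ r) :=
  (continuous_const.sub ((M.continuous_sqDist x₀).div_const _)).max continuous_const

theorem hasCompactSupport_cutoff (x₀ : 𝔼 n) (hr : 0 < r) : HasCompactSupport (M.cutoff x₀ r) := by
  refine HasCompactSupport.of_support_subset_isCompact (isCompact_closedBall x₀ r) fun x hx => ?_
  by_contra h
  rw [Metric.mem_closedBall, dist_eq_norm, not_le] at h
  exact hx (M.cutoff_eq_zero hr h.le)

theorem hasCompactSupport_cutoff_pow (x₀ : 𝔼 n) (hr : 0 < r) {m : ℕ} (hm : m ≠ 0) :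
    HasCompactSupport fun x => M.cutoff x₀ r x ^ m :=
  (M.hasCompactSupport_cutoff x₀ hr).comp_left (g := fun t => t ^ m) (zero_pow hm)

theorem contDiff_cutoff_pow (x₀ : 𝔼 n) (r : ℝ) {m : ℕ} (hm : m ≤ 2) :
    ContDiff ℝ m fun x => M.cutoff x₀ r x ^ (m + 1) := by
  have hs : ContDiff ℝ m (M.sqDist x₀) := (M.contDiff_sqDist x₀).of_le (by exact_mod_cast hm)
  exact (contDiff_max_zero_pow m).comp (contDiff_const.sub (hs.div_const (r ^ 2)))

theorem integrable_mul_cutoff {g : 𝔼 n → ℝ} (hg : Continuous g) (x₀ : 𝔼 n) (hr : 0 < r) {m : ℕ}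
    (hm : m ≠ 0) : Integrable fun x => g x * M.cutoff x₀ r x ^ m :=
  (hg.mul ((M.continuous_cutoff x₀ r).pow m)).integrable_of_hasCompactSupport
    (M.hasCompactSupport_cutoff_pow x₀ hr hm).mul_left

theorem hasDerivAt_max_one_sub_div_pow (r : ℝ) (m : ℕ) (t : ℝ) :
    HasDerivAt (fun t : ℝ => max (1 - t / r ^ 2) 0 ^ (m + 2))
      (-((m + 2) / r ^ 2) * max (1 - t / r ^ 2) 0 ^ (m + 1)) t := by
  have h1 : HasDerivAt (fun t : ℝ => 1 - t / r ^ 2) (-(1 / r ^ 2)) t :=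
    ((hasDerivAt_id t).div_const (r ^ 2)).const_sub 1
  convert! (hasDerivAt_max_zero_pow m (1 - t / r ^ 2)).comp t h1 using 1
  ring

/-- The integral of `f` over the extrinsic ball of radius `r` about `x₀`, smoothed by `cutoff`. -/
noncomputable def mass (f : 𝔼 n → ℝ) (x₀ : 𝔼 n) (r : ℝ) : ℝ :=
  ∫ x, f x * M.density x * M.cutoff x₀ r x ^ 2

/-- The derivative in `r` of the integrand of `mass`. -/
noncomputable def massDeriv (f : 𝔼 n → ℝ) (x₀ : 𝔼 n) (r : ℝ) (x : 𝔼 n) : ℝ :=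
  f x * M.density x * (4 * M.sqDist x₀ x / r ^ 3) * M.cutoff x₀ r x

theorem continuous_massDeriv (hf : Continuous f) (x₀ : 𝔼 n) (r : ℝ) :
    Continuous (M.massDeriv f x₀ r) :=
  ((hf.mul M.continuous_density).mul
    (((M.continuous_sqDist x₀).const_mul 4).div_const _)).mul (M.continuous_cutoff x₀ r)

theorem integrable_massDeriv (hf : Continuous f) (x₀ : 𝔼 n) (hr : 0 < r) :
    Integrable (M.massDeriv f x₀ r) :=
  (M.continuous_massDeriv hf x₀ r).integrable_of_hasCompactSupport
    (M.hasCompactSupport_cutoff x₀ hr).mul_left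

theorem norm_massDeriv_le (f : 𝔼 n → ℝ) (x₀ x : 𝔼 n) (hr : 0 < r) {t : ℝ}
    (ht : t ∈ Metric.ball r (r / 2)) :
    ‖M.massDeriv f x₀ t x‖ ≤ (Metric.closedBall x₀ (2 * r)).indicator
      (fun x => ‖f x * M.density x‖ * (4 * M.sqDist x₀ x / (r / 2) ^ 3)) x := by
  rw [Metric.mem_ball, Real.dist_eq, abs_lt] at ht
  have ht0 : 0 < t := by linarith
  have hs := M.sqDist_nonneg x₀ x
  by_cases hx : x ∈ Metric.closedBall x₀ (2 * r)
  · rw [indicator_of_mem hx, massDeriv, norm_mul, norm_mul,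
      Real.norm_of_nonneg (M.cutoff_nonneg x₀ t x),
      Real.norm_of_nonneg (show 0 ≤ 4 * M.sqDist x₀ x / t ^ 3 by positivity)]
    refine (mul_le_of_le_one_right (by positivity) (M.cutoff_le_one x₀ t x)).trans ?_
    gcongr
    linarith
  · rw [indicator_of_notMem hx]
    rw [Metric.mem_closedBall, dist_eq_norm, not_le] at hx
    simp [massDeriv, M.cutoff_eq_zero ht0 (by linarith)]

theorem hasDerivAt_mass_integrand (f : 𝔼 n → ℝ) (x₀ x : 𝔼 n) (hr : r ≠ 0) :
    HasDerivAt (fun r => f x * M.density x * M.cutoff x₀ r x ^ 2) (M.massDeriv f x₀ r x) r := by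
  have hinner :
      HasDerivAt (fun t : ℝ => 1 - M.sqDist x₀ x / t ^ 2) (2 * M.sqDist x₀ x / r ^ 3) r := by
    convert! ((hasDerivAt_const r (M.sqDist x₀ x)).div (hasDerivAt_pow 2 r)
      (by positivity)).const_sub 1 using 1
    field_simp
    push_cast
    ring
  convert! ((hasDerivAt_max_zero_pow 0 _).comp r hinner).const_mul (f x * M.density x) using 1
  simp only [massDeriv, cutoff]
  push_cast
  ring

theorem hasDerivAt_mass (hf : Continuous f) (x₀ : 𝔼 n) (hr : 0 < r) :
    HasDerivAt (M.mass f x₀) (∫ x, M.massDeriv f x₀ r x) r := by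
  have hfJ := hf.mul M.continuous_density
  refine (hasDerivAt_integral_of_dominated_loc_of_deriv_le (𝕜 := ℝ)
    (F := fun r x => f x * M.density x * M.cutoff x₀ r x ^ 2) (F' := M.massDeriv f x₀)
    (Metric.ball_mem_nhds r (half_pos hr)) (.of_forall fun t => ?_)
    (M.integrable_mul_cutoff hfJ x₀ hr two_ne_zero)
    (M.continuous_massDeriv hf x₀ r).aestronglyMeasurable
    (.of_forall fun x t ht => M.norm_massDeriv_le f x₀ x hr ht) ?_
    (.of_forall fun x t ht => M.hasDerivAt_mass_integrand f x₀ x ?_)).2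
  · exact (hfJ.mul ((M.continuous_cutoff x₀ t).pow 2)).aestronglyMeasurable
  · rw [integrable_indicator_iff Metric.isClosed_closedBall.measurableSet]
    exact (hfJ.norm.mul (((M.continuous_sqDist x₀).const_mul 4).div_const _)).continuousOn
      |>.integrableOn_compact (isCompact_closedBall _ _)
  · rw [Metric.mem_ball, Real.dist_eq, abs_lt] at ht
    linarith

theorem lap_cutoff_pow_three (x₀ : 𝔼 n) (r : ℝ) (x : 𝔼 n) :
    M.lap (fun y => M.cutoff x₀ r y ^ 3) x =
      -(6 * n / r ^ 2) * (M.density x * M.cutoff x₀ r x ^ 2) +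
        6 / r ^ 4 * M.cutoff x₀ r x * M.gam (M.sqDist x₀) (M.sqDist x₀) x := by
  have h := M.lap_comp (φ := fun t : ℝ => max (1 - t / r ^ 2) 0 ^ 3)
    (φ' := fun t => -(3 / r ^ 2) * max (1 - t / r ^ 2) 0 ^ 2)
    (φ'' := -(3 / r ^ 2) * (-(2 / r ^ 2) * max (1 - M.sqDist x₀ x / r ^ 2) 0))
    (M.contDiff_sqDist x₀) x (fun y => ?_) ?_
  · simp only [cutoff]
    rw [h, M.lap_sqDist]
    ring
  · convert! hasDerivAt_max_one_sub_div_pow r 1 (M.sqDist x₀ y) using 1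
    norm_num
  · simpa using (hasDerivAt_max_one_sub_div_pow r 0 (M.sqDist x₀ x)).const_mul (-(3 / r ^ 2))

theorem mul_lap_cutoff_le (hf0 : ∀ x, 0 ≤ f x) (x₀ x : 𝔼 n) (hr : 0 < r) :
    f x * M.lap (fun y => M.cutoff x₀ r y ^ 3) x ≤
      -(6 * n / r ^ 2) * (f x * M.density x * M.cutoff x₀ r x ^ 2) +
        6 / r * M.massDeriv f x₀ r x := by
  have hf := hf0 x
  have hτ := M.cutoff_nonneg x₀ r x
  calc f x * M.lap (fun y => M.cutoff x₀ r y ^ 3) x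
      ≤ f x * (-(6 * n / r ^ 2) * (M.density x * M.cutoff x₀ r x ^ 2) +
          6 / r ^ 4 * M.cutoff x₀ r x * (4 * M.sqDist x₀ x * M.density x)) := by
        rw [lap_cutoff_pow_three]
        gcongr
        exact M.gam_sqDist_le x₀ x
    _ = _ := by
        rw [massDeriv]
        field_simp

theorem card_mul_mass_le (hf : ContDiff ℝ 2 f) (hf0 : ∀ x, 0 ≤ f x) (hL : ∀ x, 0 ≤ M.lap f x)
    (x₀ : 𝔼 n) (hr : 0 < r) : n * M.mass f x₀ r ≤ r * ∫ x, M.massDeriv f x₀ r x := by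
  have hτ3 : ContDiff ℝ 2 fun x => M.cutoff x₀ r x ^ 3 := M.contDiff_cutoff_pow x₀ r le_rfl
  have hτ3c := M.hasCompactSupport_cutoff_pow x₀ hr three_ne_zero
  have int_mass := (M.integrable_mul_cutoff (hf.continuous.mul M.continuous_density) x₀ hr
    two_ne_zero).const_mul (-(6 * n / r ^ 2))
  have int_deriv := (M.integrable_massDeriv hf.continuous x₀ hr).const_mul (6 / r)
  have int_lap : Integrable fun x => f x * M.lap (fun y => M.cutoff x₀ r y ^ 3) x :=
    (hf.continuous.mul (M.continuous_lap hτ3)).integrable_of_hasCompactSupport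
      (M.hasCompactSupport_lap hτ3c).mul_left
  have nonneg : 0 ≤ -(6 * n / r ^ 2) * M.mass f x₀ r + 6 / r * ∫ x, M.massDeriv f x₀ r x := calc
    0 ≤ ∫ x, M.cutoff x₀ r x ^ 3 * M.lap f x :=
      integral_nonneg fun x => mul_nonneg (pow_nonneg (M.cutoff_nonneg _ _ _) _) (hL x)
    _ = ∫ x, f x * M.lap (fun y => M.cutoff x₀ r y ^ 3) x :=
      (M.integral_mul_lap_comm hf hτ3 hτ3c).symm
    _ ≤ _ := integral_mono int_lap (int_mass.add int_deriv) (M.mul_lap_cutoff_le hf0 x₀ · hr)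
    _ = _ := by
      rw [mass, ← integral_const_mul, ← integral_const_mul]
      exact integral_add int_mass int_deriv
  have scale : r ^ 2 / 6 * (-(6 * n / r ^ 2) * M.mass f x₀ r + 6 / r * ∫ x, M.massDeriv f x₀ r x)
      = r * (∫ x, M.massDeriv f x₀ r x) - n * M.mass f x₀ r := by
    field_simp
    ring
  have := mul_nonneg (show 0 ≤ r ^ 2 / 6 by positivity) nonneg
  linarith

theorem monotoneOn_mass_div_pow (hf : ContDiff ℝ 2 f) (hf0 : ∀ x, 0 ≤ f x)
    (hL : ∀ x, 0 ≤ M.lap f x) (x₀ : 𝔼 n) :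
    MonotoneOn (fun r => M.mass f x₀ r / r ^ n) (Ioi 0) := by
  have hd (r) (hr : r ∈ Ioi (0:ℝ)) : HasDerivAt (fun r => M.mass f x₀ r / r ^ n) _ r :=
    (M.hasDerivAt_mass hf.continuous x₀ hr).div (hasDerivAt_pow n r) (pow_ne_zero _ (ne_of_gt hr))
  refine monotoneOn_of_hasDerivWithinAt_nonneg (convex_Ioi 0)
    (fun r hr => (hd r hr).continuousAt.continuousWithinAt)
    (fun r hr => (hd r (interior_subset hr)).hasDerivWithinAt) fun r hr => ?_
  have hr : 0 < r := interior_subset hr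
  have hpow : r * (n * r ^ (n - 1)) = n * r ^ n := by
    cases n with
    | zero => simp
    | succ m => rw [Nat.add_sub_cancel, pow_succ]; ring
  refine div_nonneg (nonneg_of_mul_nonneg_right (a := r) ?_ hr) (by positivity)
  have := mul_le_mul_of_nonneg_left (M.card_mul_mass_le hf hf0 hL x₀ hr) (pow_pos hr n).le
  linear_combination this + M.mass f x₀ r * hpow

end MinimalGraphOperator

/-! ### A Poincaré inequality on balls -/

section Poincare

open Module (finrank)

variable {E F : Type*} [NormedAddCommGroup E] [NormedSpace ℝ E] [NormedAddCommGroup F]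
  [NormedSpace ℝ F]

theorem hasDerivAt_comp_segment {f : E → F} (hf : Differentiable ℝ f) (x y : E) (t : ℝ) :
    HasDerivAt (fun t : ℝ => f ((1 - t) • y + t • x))
      (fderiv ℝ f ((1 - t) • y + t • x) (x - y)) t := by
  have hseg : HasDerivAt (fun t : ℝ => (1 - t) • y + t • x) (x - y) t := by
    convert! (((hasDerivAt_id t).const_sub 1).smul_const y).add
      ((hasDerivAt_id t).smul_const x) using 1
    simp only [neg_smul, one_smul]
    abel
  exact (hf _).hasFDerivAt.comp_hasDerivAt t hseg

theorem enorm_sub_le_lintegral_segment [CompleteSpace F] {f : E → F} (hf : ContDiff ℝ 1 f)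
    (x y : E) :
    ‖f x - f y‖ₑ ≤ ‖x - y‖ₑ * ∫⁻ t in Ioo (0 : ℝ) 1, ‖fderiv ℝ f ((1 - t) • y + t • x)‖ₑ := by
  have hcont : Continuous fun t : ℝ => fderiv ℝ f ((1 - t) • y + t • x) :=
    (hf.continuous_fderiv one_ne_zero).comp (by fun_prop)
  have hftc := intervalIntegral.integral_eq_sub_of_hasDerivAt (a := 0) (b := 1)
    (fun t _ => hasDerivAt_comp_segment (hf.differentiable one_ne_zero) x y t)
    ((hcont.clm_apply continuous_const).intervalIntegrable _ _)
  simp only [sub_zero, one_smul, zero_smul, add_zero, sub_self, zero_add] at hftc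
  rw [← hftc, intervalIntegral.integral_of_le zero_le_one, integral_Ioc_eq_integral_Ioo,
    mul_comm, ← lintegral_mul_const' _ _ enorm_ne_top]
  exact (enorm_integral_le_lintegral_enorm _).trans
    (lintegral_mono fun t => ContinuousLinearMap.le_opENorm _ _)

variable [FiniteDimensional ℝ E] [MeasurableSpace E] [BorelSpace E]
  (μ : Measure E) [μ.IsAddHaarMeasure] {h : E → ℝ≥0∞} {s : Set E}

theorem lintegral_comp_add_smul_le (hh : Measurable h) (b : E) {t : ℝ} (ht : 1 / 2 ≤ t) :
    ∫⁻ x, h (b + t • x) ∂μ ≤ 2 ^ finrank ℝ E * ∫⁻ x, h x ∂μ := by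
  have ht0 : 0 < t := by linarith
  have hjac : |(t ^ finrank ℝ E)⁻¹| ≤ 2 ^ finrank ℝ E := by
    rw [abs_of_pos (by positivity), ← inv_pow]
    gcongr
    rw [inv_le_comm₀ ht0 two_pos]
    linarith
  calc ∫⁻ x, h (b + t • x) ∂μ
      = ∫⁻ y, h (b + y) ∂(μ.map (t • ·)) := by
        rw [lintegral_map (by fun_prop) (by fun_prop)]
    _ = ENNReal.ofReal |(t ^ finrank ℝ E)⁻¹| * ∫⁻ y, h y ∂μ := by
        rw [Measure.map_addHaar_smul _ ht0.ne', lintegral_smul_measure,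
          lintegral_add_left_eq_self (fun y => h y) b, smul_eq_mul]
    _ ≤ 2 ^ finrank ℝ E * ∫⁻ x, h x ∂μ := by
        gcongr
        refine (ENNReal.ofReal_le_ofReal hjac).trans_eq ?_
        rw [ENNReal.ofReal_pow two_pos.le, ENNReal.ofReal_ofNat]

/-- Whichever of the two weights is at least `1/2` allows a change of variables with bounded
Jacobian. -/
theorem lintegral_lintegral_segment_le (hh : Measurable h) (s : Set E) (t : ℝ) :
    ∫⁻ x in s, ∫⁻ y in s, h ((1 - t) • y + t • x) ∂μ ∂μ ≤
      2 ^ finrank ℝ E * (∫⁻ z, h z ∂μ) * μ s := by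
  have : ProperSpace E := FiniteDimensional.proper_real E
  rcases le_total (1 / 2) t with ht | ht
  · have hmeas : Measurable fun p : E × E => h ((1 - t) • p.2 + t • p.1) :=
      hh.comp (by fun_prop : Continuous fun p : E × E => (1 - t) • p.2 + t • p.1).measurable
    rw [lintegral_lintegral_swap (f := fun x y => h ((1 - t) • y + t • x)) hmeas.aemeasurable,
      ← setLIntegral_const]
    exact lintegral_mono fun y =>
      (setLIntegral_le_lintegral _ _).trans (lintegral_comp_add_smul_le μ hh _ ht)
  · rw [← setLIntegral_const]
    refine lintegral_mono fun x => (setLIntegral_le_lintegral _ _).trans ?_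
    simpa only [add_comm] using
      lintegral_comp_add_smul_le μ hh (t • x) (t := 1 - t) (by linarith)

theorem lintegral_lintegral_lintegral_segment_le (hh : Measurable h) (s : Set E) :
    ∫⁻ x in s, ∫⁻ y in s, (∫⁻ t in Ioo (0 : ℝ) 1, h ((1 - t) • y + t • x)) ∂μ ∂μ ≤
      2 ^ finrank ℝ E * (∫⁻ z, h z ∂μ) * μ s := by
  have : ProperSpace E := FiniteDimensional.proper_real E
  have hmeas : Measurable fun p : (E × ℝ) × E => h ((1 - p.1.2) • p.2 + p.1.2 • p.1.1) :=
    hh.comp (by fun_prop : Continuous fun p : (E × ℝ) × E =>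
      (1 - p.1.2) • p.2 + p.1.2 • p.1.1).measurable
  have hswap (x : E) : ∫⁻ y in s, (∫⁻ t in Ioo (0 : ℝ) 1, h ((1 - t) • y + t • x)) ∂μ =
      ∫⁻ t in Ioo (0 : ℝ) 1, ∫⁻ y in s, h ((1 - t) • y + t • x) ∂μ :=
    lintegral_lintegral_swap (hmeas.comp
      (by fun_prop : Measurable fun p : E × ℝ => ((x, p.2), p.1))).aemeasurable
  calc ∫⁻ x in s, ∫⁻ y in s, (∫⁻ t in Ioo (0 : ℝ) 1, h ((1 - t) • y + t • x)) ∂μ ∂μ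
      = ∫⁻ t in Ioo (0 : ℝ) 1, ∫⁻ x in s, ∫⁻ y in s, h ((1 - t) • y + t • x) ∂μ ∂μ := by
        simp only [hswap]
        exact lintegral_lintegral_swap hmeas.lintegral_prod_right'.aemeasurable
    _ ≤ ∫⁻ t in Ioo (0 : ℝ) 1, 2 ^ finrank ℝ E * (∫⁻ z, h z ∂μ) * μ s :=
        lintegral_mono fun t => lintegral_lintegral_segment_le μ hh s t
    _ = 2 ^ finrank ℝ E * (∫⁻ z, h z ∂μ) * μ s := by
        rw [setLIntegral_const, Real.volume_Ioo, sub_zero, ENNReal.ofReal_one, mul_one]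

theorem lintegral_lintegral_enorm_sub_le [CompleteSpace F] {f : E → F} (hf : ContDiff ℝ 1 f)
    (hs : Convex ℝ s) (hsm : MeasurableSet s) {D : ℝ≥0∞}
    (hD : ∀ x ∈ s, ∀ y ∈ s, ‖x - y‖ₑ ≤ D) :
    ∫⁻ x in s, ∫⁻ y in s, ‖f x - f y‖ₑ ∂μ ∂μ ≤
      D * (2 ^ finrank ℝ E * (∫⁻ z in s, ‖fderiv ℝ f z‖ₑ ∂μ) * μ s) := by
  have : ProperSpace E := FiniteDimensional.proper_real E
  set h : E → ℝ≥0∞ := s.indicator fun z => ‖fderiv ℝ f z‖ₑ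
  have hh : Measurable h :=
    (hf.continuous_fderiv one_ne_zero).enorm.measurable.indicator hsm
  have hmeas : Measurable fun p : E × E => ∫⁻ t in Ioo (0 : ℝ) 1, h ((1 - t) • p.2 + t • p.1) :=
    (hh.comp (by fun_prop : Continuous fun p : (E × E) × ℝ =>
      (1 - p.2) • p.1.2 + p.2 • p.1.1).measurable).lintegral_prod_right'
  have hpointwise {x y : E} (hx : x ∈ s) (hy : y ∈ s) :
      ‖f x - f y‖ₑ ≤ D * ∫⁻ t in Ioo (0 : ℝ) 1, h ((1 - t) • y + t • x) := by
    refine (enorm_sub_le_lintegral_segment hf x y).trans (mul_le_mul' (hD x hx y hy) ?_)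
    refine setLIntegral_mono' measurableSet_Ioo fun t ht => ?_
    have hmem := hs hy hx (sub_nonneg.2 ht.2.le) ht.1.le (sub_add_cancel 1 t)
    simp only [h, indicator_of_mem hmem, le_refl]
  calc ∫⁻ x in s, ∫⁻ y in s, ‖f x - f y‖ₑ ∂μ ∂μ
      ≤ ∫⁻ x in s, ∫⁻ y in s, D * (∫⁻ t in Ioo (0 : ℝ) 1, h ((1 - t) • y + t • x)) ∂μ ∂μ :=
        setLIntegral_mono' hsm fun x hx => setLIntegral_mono' hsm fun y hy => hpointwise hx hy
    _ = D * ∫⁻ x in s, ∫⁻ y in s, (∫⁻ t in Ioo (0 : ℝ) 1, h ((1 - t) • y + t • x)) ∂μ ∂μ := by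
        rw [← lintegral_const_mul _ hmeas.lintegral_prod_right']
        exact lintegral_congr fun x => lintegral_const_mul _ (hmeas.comp measurable_prodMk_left)
    _ ≤ D * (2 ^ finrank ℝ E * (∫⁻ z in s, ‖fderiv ℝ f z‖ₑ ∂μ) * μ s) := by
        rw [← lintegral_indicator hsm fun z => ‖fderiv ℝ f z‖ₑ]
        gcongr
        exact lintegral_lintegral_lintegral_segment_le μ hh s

theorem measure_mul_lintegral_le {α : Type*} [MeasurableSpace α] {μ : Measure α} {f : α → ℝ}
    {A B : Set α} (hf0 : ∀ x, 0 ≤ f x) (hA : A ⊆ B) (hAm : MeasurableSet A) (hAt : μ A ≠ ⊤) {l : ℝ}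
    (hl0 : 0 ≤ l)
    (hl : ∀ x ∈ A, f x ≤ l) :
    μ A * ∫⁻ x in B, ‖f x‖ₑ ∂μ ≤
      μ A * μ B * ‖l‖ₑ + ∫⁻ x in B, ∫⁻ y in B, ‖f x - f y‖ₑ ∂μ ∂μ := by
  have hpoint (x y : α) (hy : y ∈ A) : ‖f x‖ₑ ≤ ‖l‖ₑ + ‖f x - f y‖ₑ := by
    calc ‖f x‖ₑ = ‖f y + (f x - f y)‖ₑ := by rw [add_sub_cancel]
      _ ≤ ‖f y‖ₑ + ‖f x - f y‖ₑ := enorm_add_le _ _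
      _ ≤ ‖l‖ₑ + ‖f x - f y‖ₑ := by
        rw [Real.enorm_of_nonneg (hf0 y), Real.enorm_of_nonneg hl0]
        gcongr
        exact hl y hy
  calc μ A * ∫⁻ x in B, ‖f x‖ₑ ∂μ = ∫⁻ x in B, ∫⁻ _ in A, ‖f x‖ₑ ∂μ ∂μ := by
        rw [← lintegral_const_mul' _ _ hAt]
        simp only [setLIntegral_const, mul_comm]
    _ ≤ ∫⁻ x in B, (μ A * ‖l‖ₑ + ∫⁻ y in B, ‖f x - f y‖ₑ ∂μ) ∂μ := by
        refine lintegral_mono fun x => (setLIntegral_mono' hAm (hpoint x)).trans ?_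
        rw [lintegral_add_left measurable_const, setLIntegral_const, mul_comm]
        gcongr
    _ = μ A * μ B * ‖l‖ₑ + ∫⁻ x in B, ∫⁻ y in B, ‖f x - f y‖ₑ ∂μ ∂μ := by
        rw [lintegral_add_left measurable_const, setLIntegral_const]
        ring

end Poincare

section Ball

open Metric

variable {f : 𝔼 n → ℝ} {x₀ : 𝔼 n} {R : ℝ}

theorem measureReal_ball_pos (x : 𝔼 n) (hR : 0 < R) : 0 < volume.real (ball x R) :=
  ENNReal.toReal_pos (measure_ball_pos _ _ hR).ne' measure_ball_lt_top.ne

theorem measureReal_ball (x : 𝔼 n) (hR : 0 < R) :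
    volume.real (ball x R) = R ^ n * volume.real (ball (0 : 𝔼 n) 1) := by
  rw [measureReal_def, Measure.addHaar_ball_of_pos _ _ hR, finrank_euclideanSpace_fin,
    ENNReal.toReal_mul, ENNReal.toReal_ofReal (by positivity), measureReal_def]

theorem integrableOn_ball (hf : Continuous f) (x₀ : 𝔼 n) (R : ℝ) : IntegrableOn f (ball x₀ R) :=
  (hf.continuousOn.integrableOn_compact (isCompact_closedBall x₀ R)).mono_set
    ball_subset_closedBall

theorem measureReal_mul_integral_ball_le (hf : ContDiff ℝ 1 f) (hf0 : ∀ x, 0 ≤ f x) (hR : 0 ≤ R)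
    {A : Set (𝔼 n)} (hA : A ⊆ ball x₀ R) (hAm : MeasurableSet A) {l : ℝ} (hl0 : 0 ≤ l)
    (hl : ∀ x ∈ A, f x ≤ l) :
    volume.real A * ∫ x in ball x₀ R, f x ≤ volume.real A * volume.real (ball x₀ R) * l +
      2 * R * (2 ^ n * (∫ z in ball x₀ R, ‖fderiv ℝ f z‖) * volume.real (ball x₀ R)) := by
  have hdf : Continuous (fderiv ℝ f) := hf.continuous_fderiv one_ne_zero
  have hBt : volume (ball x₀ R) ≠ ⊤ := measure_ball_lt_top.ne
  have hAt : volume A ≠ ⊤ := ((measure_mono hA).trans_lt measure_ball_lt_top).ne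
  have hdiam : ∀ x ∈ ball x₀ R, ∀ y ∈ ball x₀ R, ‖x - y‖ₑ ≤ ENNReal.ofReal (2 * R) := by
    intro x hx y hy
    rw [← ofReal_norm, ← dist_eq_norm]
    refine ENNReal.ofReal_le_ofReal ?_
    linarith [dist_triangle_right x y x₀, mem_ball.1 hx, mem_ball.1 hy]
  have hle := (measure_mul_lintegral_le hf0 hA hAm hAt hl0 hl).trans
    (add_le_add_right (lintegral_lintegral_enorm_sub_le volume hf (convex_ball x₀ R)
      measurableSet_ball hdiam) _)
  have hnorm : ∫⁻ z in ball x₀ R, ‖fderiv ℝ f z‖ₑ =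
      ENNReal.ofReal (∫ z in ball x₀ R, ‖fderiv ℝ f z‖) :=
    (ofReal_integral_norm_eq_lintegral_enorm
      ((hdf.continuousOn.integrableOn_compact (isCompact_closedBall x₀ R)).mono_set
        ball_subset_closedBall)).symm
  have hint : ∫⁻ x in ball x₀ R, ‖f x‖ₑ = ENNReal.ofReal (∫ x in ball x₀ R, f x) := by
    rw [← ofReal_integral_norm_eq_lintegral_enorm (integrableOn_ball hf.continuous x₀ R)]
    simp only [Real.norm_of_nonneg (hf0 _)]
  rw [hnorm, hint, Real.enorm_of_nonneg hl0] at hle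
  have hreal := ENNReal.toReal_mono (by finiteness) hle
  rw [ENNReal.toReal_add (by finiteness) (by finiteness)] at hreal
  simpa only [ENNReal.toReal_mul, ENNReal.toReal_ofReal (integral_nonneg hf0),
    ENNReal.toReal_ofReal (integral_nonneg fun _ => norm_nonneg _), ENNReal.toReal_ofReal hl0,
    ENNReal.toReal_ofReal (by positivity : 0 ≤ 2 * R), ENNReal.toReal_pow, ENNReal.toReal_ofNat,
    measureReal_def, finrank_euclideanSpace_fin] using hreal

end Ball

/-! ### The weak Harnack inequality -/

theorem two_mul_integral_norm_fderiv_le {f : 𝔼 n → ℝ} (hf : ContDiff ℝ 1 f) (x₀ : 𝔼 n) (R : ℝ) :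
    2 * R * ∫ x in Metric.ball x₀ R, ‖fderiv ℝ f x‖ ≤
      R ^ 2 * (∫ x in Metric.ball x₀ R, ∑ k, pderiv k f x ^ 2) +
        volume.real (Metric.ball x₀ R) := by
  have hdf : Continuous (fderiv ℝ f) := hf.continuous_fderiv one_ne_zero
  have hsum : Continuous fun x => ∑ k, pderiv k f x ^ 2 :=
    continuous_finsetSum _ fun k _ => (continuous_pderiv hf k).pow 2
  have hpoint (x : 𝔼 n) : 2 * R * ‖fderiv ℝ f x‖ ≤ R ^ 2 * (∑ k, pderiv k f x ^ 2) + 1 := calc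
    2 * R * ‖fderiv ℝ f x‖ ≤ R ^ 2 * ‖fderiv ℝ f x‖ ^ 2 + 1 := by
      linarith [sq_nonneg (R * ‖fderiv ℝ f x‖ - 1)]
    _ ≤ R ^ 2 * (∑ k, pderiv k f x ^ 2) + 1 := by
      gcongr
      exact norm_fderiv_sq_le_sum_pderiv_sq f x
  have hint := setIntegral_mono (integrableOn_ball (hdf.norm.const_mul (2 * R)) x₀ R)
    (integrableOn_ball ((hsum.const_mul (R ^ 2)).add continuous_const) x₀ R) hpoint
  simp only [Pi.add_apply] at hint
  rwa [integral_const_mul, integral_add (integrableOn_ball (hsum.const_mul _) _ _)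
    (integrableOn_ball continuous_const _ _), integral_const_mul, setIntegral_const,
    smul_eq_mul, mul_one] at hint

namespace MinimalGraphOperator

open Metric

variable (M : MinimalGraphOperator n) {f : 𝔼 n → ℝ} {x₀ x : 𝔼 n} {r R : ℝ}

theorem one_le_densityBound : 1 ≤ M.densityBound := (M.one_le_density 0).trans (M.density_le 0)

/-- The ratio of radii for which the extrinsic cutoff is at least `1/2` on the smaller Euclidean
ball. -/
noncomputable def scale : ℝ := √(2 * M.distortion)

theorem scale_sq : M.scale ^ 2 = 2 * M.distortion :=
  Real.sq_sqrt (by linarith [M.one_le_distortion])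

theorem one_le_scale : 1 ≤ M.scale := Real.one_le_sqrt.2 (by linarith [M.one_le_distortion])

theorem scale_pos : 0 < M.scale := zero_lt_one.trans_le M.one_le_scale

theorem half_le_cutoff (hr : 0 < r) (hx : M.scale * ‖x - x₀‖ ≤ r) : 1 / 2 ≤ M.cutoff x₀ r x := by
  have hsq : (M.scale * ‖x - x₀‖) ^ 2 ≤ r ^ 2 :=
    pow_le_pow_left₀ (mul_nonneg M.scale_pos.le (norm_nonneg _)) hx 2
  rw [mul_pow, M.scale_sq] at hsq
  have hdiv : M.sqDist x₀ x / r ^ 2 ≤ 1 / 2 := by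
    rw [div_le_iff₀ (by positivity)]
    linarith [M.sqDist_le x₀ x]
  exact le_max_of_le_left (by linarith)

theorem mass_le (hf : Continuous f) (hf0 : ∀ x, 0 ≤ f x) (x₀ : 𝔼 n) (hR : 0 < R) :
    M.mass f x₀ R ≤ M.densityBound * ∫ x in ball x₀ R, f x := by
  rw [mass, ← integral_const_mul, ← integral_indicator measurableSet_ball]
  refine integral_mono
    (M.integrable_mul_cutoff (hf.mul M.continuous_density) x₀ hR two_ne_zero) ?_ fun x => ?_
  · exact (integrable_indicator_iff measurableSet_ball).2 ((integrableOn_ball hf x₀ R).const_mul _)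
  by_cases hx : x ∈ ball x₀ R
  · simp only [indicator_of_mem hx]
    have hτ := pow_le_one₀ (n := 2) (M.cutoff_nonneg x₀ R x) (M.cutoff_le_one x₀ R x)
    calc f x * M.density x * M.cutoff x₀ R x ^ 2
        ≤ f x * M.density x :=
          mul_le_of_le_one_right (mul_nonneg (hf0 x) (M.density_nonneg x)) hτ
      _ ≤ f x * M.densityBound := mul_le_mul_of_nonneg_left (M.density_le x) (hf0 x)
      _ = M.densityBound * f x := mul_comm _ _
  · rw [mem_ball, dist_eq_norm, not_lt] at hx
    simp [hx, dist_eq_norm, M.cutoff_eq_zero hR hx]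

theorem le_mass (hf : Continuous f) (hf0 : ∀ x, 0 ≤ f x) (hr : 0 < r) {m : ℝ}
    (hm : ∀ x ∈ ball x₀ r, m ≤ f x) :
    m / 4 * volume.real (ball x₀ (r / M.scale)) ≤ M.mass f x₀ r := by
  have hsmall : m / 4 * volume.real (ball x₀ (r / M.scale)) =
      ∫ x in ball x₀ (r / M.scale), m / 4 := by
    rw [setIntegral_const, smul_eq_mul, mul_comm]
  rw [hsmall, ← integral_indicator measurableSet_ball, mass]
  refine integral_mono ?_
    (M.integrable_mul_cutoff (hf.mul M.continuous_density) x₀ hr two_ne_zero) fun x => ?_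
  · exact (integrable_indicator_iff measurableSet_ball).2 (integrableOn_ball continuous_const _ _)
  have hfJ : 0 ≤ f x * M.density x := mul_nonneg (hf0 x) (M.density_nonneg x)
  by_cases hx : x ∈ ball x₀ (r / M.scale)
  · simp only [indicator_of_mem hx]
    have hfx : m ≤ f x :=
      hm x (ball_subset_ball (div_le_self hr.le M.one_le_scale) hx)
    rw [mem_ball, dist_eq_norm, lt_div_iff₀ M.scale_pos, mul_comm] at hx
    calc m / 4 = m * 1 * (1 / 2) ^ 2 := by ring
      _ ≤ f x * M.density x * M.cutoff x₀ r x ^ 2 := by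
        gcongr
        exacts [hf0 x, M.one_le_density x, M.half_le_cutoff hr hx.le]
  · simp only [indicator_of_notMem hx]
    positivity

/-- Let `r → 0` in the monotonicity of the mass ratio. -/
theorem mul_volume_ball_le_integral (hf : ContDiff ℝ 2 f) (hf0 : ∀ x, 0 ≤ f x)
    (hL : ∀ x, 0 ≤ M.lap f x) (x₀ : 𝔼 n) (hR : 0 < R) :
    f x₀ * volume.real (ball x₀ R) ≤
      8 * M.scale ^ n * M.densityBound * ∫ x in ball x₀ R, f x := by
  have hscale := M.scale_pos
  have hbound := M.one_le_densityBound
  rcases (hf0 x₀).eq_or_lt with hzero | hpos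
  · rw [← hzero, zero_mul]
    have : 0 ≤ ∫ x in ball x₀ R, f x := integral_nonneg hf0
    positivity
  obtain ⟨ρ, hρ, hball⟩ := Metric.eventually_nhds_iff_ball.1
    (hf.continuous.continuousAt.eventually (lt_mem_nhds (half_lt_self hpos)))
  set r := min R ρ
  have hr : 0 < r := lt_min hR hρ
  have hlower := M.le_mass hf.continuous hf0 hr fun x hx =>
    (hball x (ball_subset_ball (min_le_right _ _) hx)).le
  have hmono := M.monotoneOn_mass_div_pow hf hf0 hL x₀ (mem_Ioi.2 hr) (mem_Ioi.2 hR)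
    (min_le_left _ _)
  have hupper := M.mass_le hf.continuous hf0 x₀ hR
  rw [measureReal_ball x₀ (div_pos hr hscale), div_pow] at hlower
  rw [measureReal_ball x₀ hR]
  set v₁ := volume.real (ball (0 : 𝔼 n) 1)
  calc f x₀ * (R ^ n * v₁)
      = 8 * M.scale ^ n * R ^ n * (f x₀ / 2 / 4 * (r ^ n / M.scale ^ n * v₁) / r ^ n) := by
        field_simp
        ring
    _ ≤ 8 * M.scale ^ n * R ^ n * (M.mass f x₀ R / R ^ n) := by
        refine mul_le_mul_of_nonneg_left ?_ (by positivity)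
        exact (div_le_div_of_nonneg_right hlower (by positivity)).trans hmono
    _ = 8 * M.scale ^ n * M.mass f x₀ R := by field_simp
    _ ≤ 8 * M.scale ^ n * (M.densityBound * ∫ x in ball x₀ R, f x) := by gcongr
    _ = _ := by ring

theorem gam_cutoff_sq (g : 𝔼 n → ℝ) (x₀ x : 𝔼 n) (r : ℝ) :
    M.gam (fun x => M.cutoff x₀ r x ^ 2) g x =
      -(2 / r ^ 2) * M.cutoff x₀ r x * M.gam (M.sqDist x₀) g x := by
  refine M.gam_comp_left (φ := fun t : ℝ => max (1 - t / r ^ 2) 0 ^ 2)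
    ((M.contDiff_sqDist x₀).differentiable two_ne_zero x) ?_
  simpa [cutoff] using hasDerivAt_max_one_sub_div_pow r 0 (M.sqDist x₀ x)

theorem neg_gam_cutoff_sq_le (hr : 0 < r) (f : 𝔼 n → ℝ) (x₀ x : 𝔼 n) :
    -M.gam (fun x => M.cutoff x₀ r x ^ 2) f x ≤ 1 / 2 * (M.cutoff x₀ r x ^ 2 * M.gam f f x) +
      (ball x₀ r).indicator (fun _ => 8 * M.densityBound / r ^ 2) x := by
  have hbound := M.one_le_densityBound
  rw [M.gam_cutoff_sq]
  rcases eq_or_ne (M.cutoff x₀ r x) 0 with hτ | hτ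
  · simpa [hτ] using indicator_nonneg (fun _ _ => by positivity) x
  have hx : x ∈ ball x₀ r := by
    by_contra hx
    exact hτ (M.cutoff_eq_zero hr (by simpa [dist_eq_norm] using hx))
  have hgrad : M.gam (M.sqDist x₀) (M.sqDist x₀) x ≤ 4 * r ^ 2 * M.densityBound := calc
    _ ≤ 4 * M.sqDist x₀ x * M.density x := M.gam_sqDist_le x₀ x
    _ ≤ 4 * r ^ 2 * M.densityBound := by
      gcongr
      exacts [M.density_nonneg x, (M.sqDist_lt_of_cutoff_ne_zero hr hτ).le, M.density_le x]
  have hyoung := M.two_mul_gam_le (2 / r ^ 2) (M.cutoff x₀ r x) (M.sqDist x₀) f x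
  have hscaled : (2 / r ^ 2) ^ 2 * M.gam (M.sqDist x₀) (M.sqDist x₀) x ≤
      2 * (8 * M.densityBound / r ^ 2) := calc
    _ ≤ (2 / r ^ 2) ^ 2 * (4 * r ^ 2 * M.densityBound) := by gcongr
    _ = _ := by
      field_simp
      norm_num
  rw [indicator_of_mem hx]
  linarith

theorem indicator_sub_indicator_le (hG : ∀ x, M.gam f f x ≤ M.lap f x) (hr : 0 < r)
    (x₀ x : 𝔼 n) :
    (ball x₀ (r / M.scale)).indicator (fun x => M.ellip / 8 * ∑ k, pderiv k f x ^ 2) x -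
      (ball x₀ r).indicator (fun _ => 8 * M.densityBound / r ^ 2) x ≤
      M.cutoff x₀ r x ^ 2 * M.lap f x + M.gam (fun x => M.cutoff x₀ r x ^ 2) f x := by
  have hgam := M.gam_self_nonneg f x
  have hinner : (ball x₀ (r / M.scale)).indicator (fun x => M.ellip / 8 * ∑ k, pderiv k f x ^ 2) x
      ≤ 1 / 2 * (M.cutoff x₀ r x ^ 2 * M.gam f f x) := by
    by_cases hx : x ∈ ball x₀ (r / M.scale)
    · rw [indicator_of_mem hx]
      rw [mem_ball, dist_eq_norm, lt_div_iff₀ M.scale_pos, mul_comm] at hx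
      calc M.ellip / 8 * ∑ k, pderiv k f x ^ 2
          = 1 / 2 * ((1 / 2) ^ 2 * (M.ellip * ∑ k, pderiv k f x ^ 2)) := by ring
        _ ≤ 1 / 2 * ((1 / 2) ^ 2 * M.gam f f x) := by
          gcongr
          exact M.ellip_le x fun k => pderiv k f x
        _ ≤ 1 / 2 * (M.cutoff x₀ r x ^ 2 * M.gam f f x) := by
          gcongr
          exact M.half_le_cutoff hr hx.le
    · rw [indicator_of_notMem hx]
      positivity
  have hlap := mul_le_mul_of_nonneg_left (hG x) (sq_nonneg (M.cutoff x₀ r x))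
  linarith [M.neg_gam_cutoff_sq_le hr f x₀ x]

/-- The test function `cutoff²` in the weak form of `Γ(f, f) ≤ L f`. -/
theorem sq_mul_integral_sum_pderiv_sq_le (hf : ContDiff ℝ 2 f)
    (hG : ∀ x, M.gam f f x ≤ M.lap f x) (x₀ : 𝔼 n) (hR : 0 < R) :
    R ^ 2 * ∫ x in ball x₀ R, ∑ k, pderiv k f x ^ 2 ≤
      64 * M.densityBound / (M.ellip * M.scale ^ 2) * M.scale ^ n * volume.real (ball x₀ R) := by
  have hscale := M.scale_pos
  have hellip := M.ellip_pos
  have hf1 : ContDiff ℝ 1 f := hf.of_le one_le_two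
  set r := M.scale * R
  have hr : 0 < r := mul_pos hscale hR
  have hrR : r / M.scale = R := mul_div_cancel_left₀ R hscale.ne'
  have hτ : ContDiff ℝ 1 fun x => M.cutoff x₀ r x ^ 2 := M.contDiff_cutoff_pow x₀ r one_le_two
  have hτc := M.hasCompactSupport_cutoff_pow x₀ hr two_ne_zero
  have int_inner : Integrable
      ((ball x₀ (r / M.scale)).indicator fun x => M.ellip / 8 * ∑ k, pderiv k f x ^ 2) :=
    (integrable_indicator_iff measurableSet_ball).2 (integrableOn_ball
      ((continuous_finsetSum _ fun k _ => (continuous_pderiv hf1 k).pow 2).const_mul _) _ _)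
  have int_outer : Integrable
      ((ball x₀ r).indicator fun _ : 𝔼 n => 8 * M.densityBound / r ^ 2) :=
    (integrable_indicator_iff measurableSet_ball).2 (integrableOn_ball continuous_const _ _)
  have hle := integral_mono (int_inner.sub int_outer)
    (M.integrable_mul_lap_add_gam hτ hf hτc) (M.indicator_sub_indicator_le hG hr x₀)
  simp only [Pi.sub_apply] at hle
  rw [M.integral_mul_lap_add_gam hτ hf (.inl hτc), integral_sub int_inner int_outer,
    integral_indicator measurableSet_ball, integral_indicator measurableSet_ball,
    integral_const_mul, setIntegral_const, smul_eq_mul, measureReal_ball x₀ hr, hrR] at hle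
  rw [measureReal_ball x₀ hR]
  set I := ∫ x in ball x₀ R, ∑ k, pderiv k f x ^ 2
  set v₁ := volume.real (ball (0 : 𝔼 n) 1)
  calc R ^ 2 * I = R ^ 2 * (8 / M.ellip) * (M.ellip / 8 * I) := by field_simp
    _ ≤ R ^ 2 * (8 / M.ellip) * (r ^ n * v₁ * (8 * M.densityBound / r ^ 2)) := by
        refine mul_le_mul_of_nonneg_left ?_ (by positivity)
        linarith
    _ = _ := by
        simp only [r, mul_pow]
        field_simp
        ring

theorem integral_ball_le_of_gam_le_lap (hf : ContDiff ℝ 2 f) (hf0 : ∀ x, 0 ≤ f x)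
    (hG : ∀ x, M.gam f f x ≤ M.lap f x) (hR : 0 < R) {A : Set (𝔼 n)} (hA : A ⊆ ball x₀ R)
    (hAm : MeasurableSet A) {l θ : ℝ} (hl0 : 0 ≤ l) (hl : ∀ x ∈ A, f x ≤ l) (hθ : 0 < θ)
    (hθA : θ * volume.real (ball x₀ R) ≤ volume.real A) :
    ∫ x in ball x₀ R, f x ≤
      (l + 2 ^ n * (64 * M.densityBound / (M.ellip * M.scale ^ 2) * M.scale ^ n + 1) / θ) *
        volume.real (ball x₀ R) := by
  have hf1 : ContDiff ℝ 1 f := hf.of_le one_le_two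
  have hpoincare := measureReal_mul_integral_ball_le hf1 hf0 hR.le hA hAm hl0 hl
  have hgrad := (two_mul_integral_norm_fderiv_le hf1 x₀ R).trans
    (add_le_add_left (M.sq_mul_integral_sum_pderiv_sq_le hf hG x₀ hR) _)
  have hV := measureReal_ball_pos x₀ hR
  have hscale := M.scale_pos
  have hellip := M.ellip_pos
  have hbound := M.one_le_densityBound
  set C := 64 * M.densityBound / (M.ellip * M.scale ^ 2) * M.scale ^ n
  set V := volume.real (ball x₀ R)
  have hC : 0 ≤ C := by positivity
  refine le_of_mul_le_mul_left ?_ ((mul_pos hθ hV).trans_le hθA)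
  calc volume.real A * ∫ x in ball x₀ R, f x
      ≤ volume.real A * V * l + 2 ^ n * V * (2 * R * ∫ z in ball x₀ R, ‖fderiv ℝ f z‖) := by
        linarith
    _ ≤ volume.real A * V * l + 2 ^ n * V * (C * V + V) := by gcongr
    _ = volume.real A * V * l + θ * V * (2 ^ n * (C + 1) / θ * V) := by field_simp
    _ ≤ volume.real A * V * l + volume.real A * (2 ^ n * (C + 1) / θ * V) := by gcongr
    _ = _ := by ring

/-- Apply the mean value inequality to the subsolution `log ((w + ε) / w)`. -/
theorem weak_harnack {θ : ℝ} (hθ : 0 < θ) : ∃ κ : ℝ, 0 < κ ∧ ∀ w : 𝔼 n → ℝ, ContDiff ℝ 2 w →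
    (∀ x, 0 < w x) → (∀ x, M.lap w x ≤ 0) → ∀ (x₀ : 𝔼 n) (R ε : ℝ), 0 < R → 0 < ε →
    θ * volume.real (ball x₀ R) ≤ volume.real ({x | ε ≤ w x} ∩ ball x₀ R) → κ * ε ≤ w x₀ := by
  set C := 8 * M.scale ^ n * M.densityBound *
    (log 2 + 2 ^ n * (64 * M.densityBound / (M.ellip * M.scale ^ 2) * M.scale ^ n + 1) / θ)
  refine ⟨exp (-C), exp_pos _, fun w hw hw0 hL x₀ R ε hR hε hA => ?_⟩
  have hwε (x) : 0 < w x + ε := add_pos (hw0 x) hε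
  set f : 𝔼 n → ℝ := fun x => log (w x + ε) - log (w x)
  have hf : ContDiff ℝ 2 f := ((hw.add contDiff_const).log fun x => (hwε x).ne').sub
    (hw.log fun x => (hw0 x).ne')
  have hf0 (x) : 0 ≤ f x := sub_nonneg.2 (log_le_log (hw0 x) (by linarith))
  have hG := M.gam_le_lap_log_add_sub_log hw hw0 hL hε
  have hAm : MeasurableSet ({x | ε ≤ w x} ∩ ball x₀ R) :=
    (measurableSet_le measurable_const hw.continuous.measurable).inter measurableSet_ball
  have hflog : ∀ x ∈ {x | ε ≤ w x} ∩ ball x₀ R, f x ≤ log 2 := by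
    rintro x ⟨hx, -⟩
    rw [sub_le_iff_le_add, ← log_mul two_ne_zero (hw0 x).ne']
    exact log_le_log (hwε x) (by linarith [show ε ≤ w x from hx])
  have hmean := M.mul_volume_ball_le_integral hf hf0
    (fun x => (M.gam_self_nonneg f x).trans (hG x)) x₀ hR
  have hint := M.integral_ball_le_of_gam_le_lap hf hf0 hG hR inter_subset_right hAm
    (log_nonneg one_le_two) hflog hθ hA
  have hfx : f x₀ ≤ C := by
    have hbound := M.one_le_densityBound
    have hscale := M.scale_pos
    refine le_of_mul_le_mul_right ?_ (measureReal_ball_pos x₀ hR)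
    exact hmean.trans ((mul_le_mul_of_nonneg_left hint (by positivity)).trans_eq (by ring))
  simp only [f] at hfx
  rw [← log_div (hwε x₀).ne' (hw0 x₀).ne', log_le_iff_le_exp (div_pos (hwε x₀) (hw0 x₀)),
    div_le_iff₀ (hw0 x₀)] at hfx
  rw [exp_neg, inv_mul_le_iff₀ (exp_pos _)]
  linarith [hw0 x₀]

end MinimalGraphOperator

/-! ### Angles of supercritical phase -/

section Angles

theorem tan_add_tan_le_tan_add {a b : ℝ} (ha : 0 ≤ a) (hb : 0 ≤ b) (hab : a + b < π / 2) :
    tan a + tan b ≤ tan (a + b) := by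
  have cos_pos : ∀ {t}, 0 ≤ t → t < π / 2 → 0 < cos t := fun h₀ h₁ =>
    cos_pos_of_mem_Ioo ⟨by linarith [pi_pos], h₁⟩
  have sin_nonneg : ∀ {t}, 0 ≤ t → t < π / 2 → 0 ≤ sin t := fun h₀ h₁ =>
    sin_nonneg_of_nonneg_of_le_pi h₀ (by linarith [pi_pos])
  have hca : 0 < cos a := cos_pos ha (by linarith)
  have hcb : 0 < cos b := cos_pos hb (by linarith)
  have hsum : tan a + tan b = sin (a + b) / (cos a * cos b) := by
    rw [tan_eq_sin_div_cos, tan_eq_sin_div_cos, sin_add]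
    field_simp
  rw [hsum, tan_eq_sin_div_cos]
  refine div_le_div_of_nonneg_left (sin_nonneg (by linarith) hab) (cos_pos (by linarith) hab) ?_
  rw [cos_add]
  linarith [mul_nonneg (sin_nonneg ha (by linarith)) (sin_nonneg hb (by linarith))]

theorem sum_tan_le_tan_sum {ι : Type*} (s : Finset ι) (φ : ι → ℝ) (hφ : ∀ i ∈ s, 0 ≤ φ i)
    (hs : ∑ i ∈ s, φ i < π / 2) : ∑ i ∈ s, tan (φ i) ≤ tan (∑ i ∈ s, φ i) := by
  classical
  induction s using Finset.induction_on with
  | empty => simp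
  | insert a s ha ih =>
    rw [Finset.sum_insert ha] at hs ⊢
    rw [Finset.sum_insert ha]
    have hφa : 0 ≤ φ a := hφ a (by simp)
    have hφs : ∀ i ∈ s, 0 ≤ φ i := fun i hi => hφ i (by simp [hi])
    have := ih hφs (by linarith)
    have := tan_add_tan_le_tan_add hφa (Finset.sum_nonneg hφs) hs
    linarith

theorem sq_sum_le_sum_inv_mul_sum {ι : Type*} {s : Finset ι} {c : ι → ℝ}
    (hc : ∀ i ∈ s, 0 < c i) (y : ι → ℝ) :
    (∑ i ∈ s, y i) ^ 2 ≤ (∑ i ∈ s, (c i)⁻¹) * ∑ i ∈ s, c i * y i ^ 2 :=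
  Finset.sum_sq_le_sum_mul_sum_of_sq_le_mul _ (fun i hi => (inv_pos.2 (hc i hi)).le)
    (fun i hi => mul_nonneg (hc i hi).le (sq_nonneg _))
    fun i hi => (inv_mul_cancel_left₀ (hc i hi).ne' _).ge

variable {ι : Type*} [Fintype ι] {θ : ι → ℝ}

theorem sum_pi_div_two_sub (θ : ι → ℝ) :
    ∑ i, (π / 2 - θ i) = Fintype.card ι * (π / 2) - ∑ i, θ i := by
  simp [Finset.sum_sub_distrib]

theorem add_pos_of_supercritical (hθ : ∀ i, |θ i| < π / 2)
    (hsum : ((Fintype.card ι : ℝ) - 2) * π / 2 < ∑ i, θ i) {i j : ι} (hij : i ≠ j) :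
    0 < θ i + θ j := by
  classical
  have hle : ∑ k ∈ ({i, j} : Finset ι), (π / 2 - θ k) ≤ ∑ k, (π / 2 - θ k) :=
    Finset.sum_le_sum_of_subset_of_nonneg (Finset.subset_univ _) fun k _ _ =>
      sub_nonneg.2 (abs_lt.1 (hθ k)).2.le
  rw [sum_pi_div_two_sub, Finset.sum_pair hij] at hle
  linarith

theorem tan_add_tan_pos_of_supercritical (hθ : ∀ i, |θ i| < π / 2)
    (hsum : ((Fintype.card ι : ℝ) - 2) * π / 2 < ∑ i, θ i) {i j : ι} (hij : i ≠ j) :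
    0 < tan (θ i) + tan (θ j) := by
  have hpos := add_pos_of_supercritical hθ hsum hij
  have hi := abs_lt.1 (hθ i)
  have hj := abs_lt.1 (hθ j)
  have : tan (-θ j) < tan (θ i) :=
    tan_lt_tan_of_lt_of_lt_pi_div_two (by linarith) (by linarith) (by linarith)
  rw [tan_neg] at this
  linarith

theorem tan_pi_div_two_add (t : ℝ) : tan (π / 2 + t) = (-tan t)⁻¹ := by
  rw [← tan_neg, ← tan_pi_div_two_sub, sub_neg_eq_add]

theorem sum_inv_tan_le_of_supercritical [DecidableEq ι] (hθ : ∀ i, |θ i| < π / 2)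
    (hsum : ((Fintype.card ι : ℝ) - 2) * π / 2 < ∑ i, θ i) {m : ι} (hm : θ m < 0) :
    ∑ i ∈ Finset.univ.erase m, (tan (θ i))⁻¹ ≤ (-tan (θ m))⁻¹ := by
  have hnn : ∀ i ∈ Finset.univ.erase m, 0 ≤ π / 2 - θ i := fun i _ =>
    sub_nonneg.2 (abs_lt.1 (hθ i)).2.le
  have hlt : ∑ i ∈ Finset.univ.erase m, (π / 2 - θ i) < π / 2 + θ m := by
    have hall := sum_pi_div_two_sub θ
    rw [← Finset.add_sum_erase _ _ (Finset.mem_univ m)] at hall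
    linarith
  calc ∑ i ∈ Finset.univ.erase m, (tan (θ i))⁻¹
      = ∑ i ∈ Finset.univ.erase m, tan (π / 2 - θ i) := by simp only [tan_pi_div_two_sub]
    _ ≤ tan (∑ i ∈ Finset.univ.erase m, (π / 2 - θ i)) :=
        sum_tan_le_tan_sum _ _ hnn (by linarith)
    _ ≤ tan (π / 2 + θ m) :=
        (tan_lt_tan_of_nonneg_of_lt_pi_div_two (Finset.sum_nonneg hnn) (by linarith) hlt).le
    _ = (-tan (θ m))⁻¹ := tan_pi_div_two_add _

theorem sum_tan_mul_sq_nonneg_of_supercritical (hθ : ∀ i, |θ i| < π / 2)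
    (hsum : ((Fintype.card ι : ℝ) - 2) * π / 2 < ∑ i, θ i) {y : ι → ℝ} (hy : ∑ i, y i = 0) :
    0 ≤ ∑ i, tan (θ i) * y i ^ 2 := by
  classical
  by_cases hall : ∀ i, 0 ≤ θ i
  · exact Finset.sum_nonneg fun i _ => mul_nonneg
      (tan_nonneg_of_nonneg_of_le_pi_div_two (hall i) (abs_lt.1 (hθ i)).2.le) (sq_nonneg _)
  push Not at hall
  obtain ⟨m, hm⟩ := hall
  have htan : ∀ i ∈ Finset.univ.erase m, 0 < tan (θ i) := fun i hi => by
    have := add_pos_of_supercritical hθ hsum (Finset.ne_of_mem_erase hi)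
    exact tan_pos_of_pos_of_lt_pi_div_two (by linarith) (abs_lt.1 (hθ i)).2
  have htan_m : 0 < -tan (θ m) := by
    have := abs_lt.1 (hθ m)
    rw [← tan_neg]
    exact tan_pos_of_pos_of_lt_pi_div_two (by linarith) (by linarith)
  rw [← Finset.add_sum_erase _ _ (Finset.mem_univ m)] at hy ⊢
  set Q := ∑ i ∈ Finset.univ.erase m, tan (θ i) * y i ^ 2
  have hQ : 0 ≤ Q := Finset.sum_nonneg fun i hi => mul_nonneg (htan i hi).le (sq_nonneg _)
  have hym : y m ^ 2 ≤ (-tan (θ m))⁻¹ * Q := by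
    rw [eq_neg_of_add_eq_zero_left hy, neg_sq]
    exact (sq_sum_le_sum_inv_mul_sum htan y).trans
      (mul_le_mul_of_nonneg_right (sum_inv_tan_le_of_supercritical hθ hsum hm) hQ)
  rw [inv_mul_eq_div, le_div_iff₀ htan_m] at hym
  linarith

theorem sum_cos_sq_mul_tan_add_tan_mul_sq_nonneg (hθ : ∀ i, |θ i| < π / 2)
    (hsum : ((Fintype.card ι : ℝ) - 2) * π / 2 < ∑ i, θ i) (B : Matrix ι ι ℝ)
    (hB : ∑ i, cos (θ i) ^ 2 * B i i = 0) :
    0 ≤ ∑ i, ∑ j, cos (θ i) ^ 2 * cos (θ j) ^ 2 * (tan (θ i) + tan (θ j)) * B i j ^ 2 := by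
  classical
  have hdiag := sum_tan_mul_sq_nonneg_of_supercritical hθ hsum hB
  calc (0 : ℝ) ≤ ∑ i, 2 * (tan (θ i) * (cos (θ i) ^ 2 * B i i) ^ 2) := by
        rw [← Finset.mul_sum]; linarith
    _ ≤ _ := Finset.sum_le_sum fun i _ => by
        rw [← Finset.add_sum_erase _ _ (Finset.mem_univ i)]
        have hoff : 0 ≤ ∑ j ∈ Finset.univ.erase i,
            cos (θ i) ^ 2 * cos (θ j) ^ 2 * (tan (θ i) + tan (θ j)) * B i j ^ 2 :=
          Finset.sum_nonneg fun j hj => by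
            have := tan_add_tan_pos_of_supercritical hθ hsum (Finset.ne_of_mem_erase hj).symm
            positivity
        linarith

end Angles

/-! ### The induced metric of a symmetric matrix -/

section InvMetric

variable {ι : Type*} [Fintype ι] {H : Matrix ι ι ℝ}

theorem dotProduct_mulVec_comm (hH : H.IsSymm) (v w : ι → ℝ) : v ⬝ᵥ (H *ᵥ w) = (H *ᵥ v) ⬝ᵥ w := by
  rw [dotProduct_mulVec, ← mulVec_transpose, hH.eq]

variable [DecidableEq ι]

/-- The inverse `(1 + H²)⁻¹` of the metric that the gradient graph of a function with Hessian `H`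
inherits from the ambient space. -/
noncomputable def invMetric (H : Matrix ι ι ℝ) : Matrix ι ι ℝ := (1 + H * H)⁻¹

theorem isUnit_det_one_add_mul_self (hH : H.IsSymm) : IsUnit (1 + H * H).det := by
  have hpos : (1 + H * H).PosDef := by
    have := Matrix.PosDef.one.add_posSemidef (posSemidef_conjTranspose_mul_self H)
    rwa [conjTranspose_eq_transpose_of_trivial, hH.eq] at this
  exact hpos.det_pos.ne'.isUnit

theorem one_add_mul_self_mul_invMetric (hH : H.IsSymm) : (1 + H * H) * invMetric H = 1 :=
  mul_nonsing_inv _ (isUnit_det_one_add_mul_self hH)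

theorem isSymm_invMetric (hH : H.IsSymm) : (invMetric H).IsSymm := by
  rw [IsSymm, invMetric, transpose_nonsing_inv, transpose_add, transpose_one, transpose_mul, hH.eq]

theorem commute_invMetric (hH : H.IsSymm) : Commute (invMetric H) H := by
  have hunit := isUnit_det_one_add_mul_self hH
  have hcomm : H * (1 + H * H) = (1 + H * H) * H := by
    rw [Matrix.mul_add, Matrix.add_mul, Matrix.mul_one, Matrix.one_mul, Matrix.mul_assoc]
  calc invMetric H * H = invMetric H * (H * (1 + H * H)) * invMetric H := by
        rw [Matrix.mul_assoc, Matrix.mul_assoc, one_add_mul_self_mul_invMetric hH, Matrix.mul_one]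
    _ = H * invMetric H := by
        rw [hcomm, ← Matrix.mul_assoc, invMetric, nonsing_inv_mul _ hunit, Matrix.one_mul]

-- The left side is the squared length of the tangential part of `(p, q)` along the graph.
theorem dotProduct_invMetric_mulVec_le (hH : H.IsSymm) (p q : ι → ℝ) :
    (p + H *ᵥ q) ⬝ᵥ (invMetric H *ᵥ (p + H *ᵥ q)) ≤ p ⬝ᵥ p + q ⬝ᵥ q := by
  set y := p + H *ᵥ q with hy
  set z := invMetric H *ᵥ y with hz
  have hzy : z + H *ᵥ (H *ᵥ z) = y := by
    calc z + H *ᵥ (H *ᵥ z) = (1 + H * H) *ᵥ z := by rw [add_mulVec, one_mulVec, mulVec_mulVec]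
      _ = y := by rw [hz, mulVec_mulVec, one_add_mul_self_mul_invMetric hH, one_mulVec]
  have hself : y ⬝ᵥ z = z ⬝ᵥ z + (H *ᵥ z) ⬝ᵥ (H *ᵥ z) := by
    conv_lhs => rw [← hzy]
    rw [add_dotProduct, ← dotProduct_mulVec_comm hH (H *ᵥ z)]
  have hpq : y ⬝ᵥ z = p ⬝ᵥ z + q ⬝ᵥ (H *ᵥ z) := by
    rw [hy, add_dotProduct, dotProduct_mulVec_comm hH]
  have hsq : ∀ v w : ι → ℝ, 2 * (v ⬝ᵥ w) ≤ v ⬝ᵥ v + w ⬝ᵥ w := fun v w => by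
    have h : 0 ≤ (v - w) ⬝ᵥ (v - w) := Finset.sum_nonneg fun i _ => mul_self_nonneg _
    simp only [sub_dotProduct, dotProduct_sub, dotProduct_comm w v] at h
    linarith
  linarith [hsq p z, hsq q (H *ᵥ z)]

end InvMetric

/-! ### Matrices with prescribed Lagrangian angles -/

section ConjDiagonal

variable {ι : Type*} [Fintype ι] [DecidableEq ι] {U : Matrix ι ι ℝ}

/-- The symmetric matrix with eigenvalues `f`, the columns of the orthogonal matrix `U` being the
corresponding eigenvectors. -/
def conjDiagonal (U : Matrix ι ι ℝ) (f : ι → ℝ) : Matrix ι ι ℝ := U * diagonal f * Uᵀ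

theorem conjDiagonal_one (hU : U * Uᵀ = 1) : conjDiagonal U (fun _ => 1) = 1 := by
  rw [conjDiagonal, diagonal_one, Matrix.mul_one, hU]

theorem conjDiagonal_add (f g : ι → ℝ) :
    conjDiagonal U f + conjDiagonal U g = conjDiagonal U (fun i => f i + g i) := by
  simp only [conjDiagonal, ← Matrix.add_mul, ← Matrix.mul_add, diagonal_add]

theorem smul_conjDiagonal (t : ℝ) (f : ι → ℝ) :
    t • conjDiagonal U f = conjDiagonal U (fun i => t * f i) := by
  rw [conjDiagonal, conjDiagonal, ← Matrix.smul_mul, ← Matrix.mul_smul, ← diagonal_smul]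
  rfl

theorem conjDiagonal_mul (hU : U * Uᵀ = 1) (f g : ι → ℝ) :
    conjDiagonal U f * conjDiagonal U g = conjDiagonal U (fun i => f i * g i) := by
  calc U * diagonal f * Uᵀ * (U * diagonal g * Uᵀ)
      = U * diagonal f * (Uᵀ * U) * diagonal g * Uᵀ := by simp only [Matrix.mul_assoc]
    _ = U * diagonal (fun i => f i * g i) * Uᵀ := by
        rw [mul_eq_one_comm.1 hU, Matrix.mul_one, Matrix.mul_assoc U, diagonal_mul_diagonal]

theorem isSymm_conjDiagonal (U : Matrix ι ι ℝ) (f : ι → ℝ) : (conjDiagonal U f).IsSymm := by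
  rw [IsSymm, conjDiagonal, transpose_mul, transpose_mul, transpose_transpose, diagonal_transpose,
    Matrix.mul_assoc]

theorem dotProduct_conjDiagonal_mulVec (f ξ : ι → ℝ) :
    ξ ⬝ᵥ (conjDiagonal U f *ᵥ ξ) = ∑ i, f i * (Uᵀ *ᵥ ξ) i ^ 2 := by
  rw [conjDiagonal, Matrix.mul_assoc, ← mulVec_mulVec, dotProduct_mulVec, ← mulVec_transpose,
    ← mulVec_mulVec, dotProduct]
  refine Finset.sum_congr rfl fun i _ => ?_
  rw [mulVec_diagonal]
  ring

theorem sum_transpose_mulVec_sq (hU : U * Uᵀ = 1) (ξ : ι → ℝ) :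
    ∑ i, (Uᵀ *ᵥ ξ) i ^ 2 = ∑ i, ξ i ^ 2 := by
  have h := dotProduct_conjDiagonal_mulVec (U := U) (fun _ => 1) ξ
  simp only [conjDiagonal_one hU, one_mulVec, one_mul] at h
  rw [← h]
  simp only [dotProduct, sq]

theorem mul_sum_sq_le_dotProduct_conjDiagonal_mulVec (hU : U * Uᵀ = 1) {m : ℝ} {f : ι → ℝ}
    (hf : ∀ i, m ≤ f i) (ξ : ι → ℝ) : m * ∑ i, ξ i ^ 2 ≤ ξ ⬝ᵥ (conjDiagonal U f *ᵥ ξ) := by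
  rw [dotProduct_conjDiagonal_mulVec, ← sum_transpose_mulVec_sq hU ξ, Finset.mul_sum]
  gcongr with i
  exact hf i

theorem dotProduct_conjDiagonal_mulVec_le (hU : U * Uᵀ = 1) {m : ℝ} {f : ι → ℝ}
    (hf : ∀ i, f i ≤ m) (ξ : ι → ℝ) : ξ ⬝ᵥ (conjDiagonal U f *ᵥ ξ) ≤ m * ∑ i, ξ i ^ 2 := by
  rw [dotProduct_conjDiagonal_mulVec, ← sum_transpose_mulVec_sq hU ξ, Finset.mul_sum]
  gcongr with i
  exact hf i

theorem trace_conjDiagonal_mul (f : ι → ℝ) (T : Matrix ι ι ℝ) :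
    (conjDiagonal U f * T).trace = ∑ i, f i * (Uᵀ * T * U) i i := by
  calc (U * diagonal f * Uᵀ * T).trace = (U * (diagonal f * (Uᵀ * T))).trace := by
        simp only [Matrix.mul_assoc]
    _ = (diagonal f * (Uᵀ * T * U)).trace := by rw [trace_mul_comm, Matrix.mul_assoc]
    _ = ∑ i, f i * (Uᵀ * T * U) i i := by simp only [trace, diag_apply, diagonal_mul]

theorem trace_conjDiagonal_mul_mul_conjDiagonal_mul (f g : ι → ℝ) {T : Matrix ι ι ℝ}
    (hT : T.IsSymm) : (conjDiagonal U f * T * conjDiagonal U g * T).trace =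
      ∑ i, ∑ j, f i * g j * (Uᵀ * T * U) i j ^ 2 := by
  have hsymm : (Uᵀ * T * U).IsSymm := by
    rw [IsSymm, transpose_mul, transpose_mul, transpose_transpose, hT.eq, Matrix.mul_assoc]
  have hconj : Uᵀ * (T * conjDiagonal U g * T) * U =
      Uᵀ * T * U * diagonal g * (Uᵀ * T * U) := by
    simp only [conjDiagonal, Matrix.mul_assoc]
  rw [Matrix.mul_assoc, Matrix.mul_assoc, ← Matrix.mul_assoc T, trace_conjDiagonal_mul, hconj]
  simp only [Matrix.mul_apply (M := _ * diagonal g), mul_diagonal, Finset.mul_sum]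
  refine Finset.sum_congr rfl fun i _ => Finset.sum_congr rfl fun j _ => ?_
  rw [hsymm.apply i j]
  ring

end ConjDiagonal

section IsAngles

variable {ι : Type*} [Fintype ι] [DecidableEq ι]

/-- `H` has Lagrangian angles `θ`: its eigenvalues are `tan (θ i)`, with eigenvectors the columns
of the orthogonal matrix `U`. -/
structure IsAngles (H U : Matrix ι ι ℝ) (θ : ι → ℝ) : Prop where
  mul_transpose_eq_one : U * Uᵀ = 1
  eq_conjDiagonal : H = conjDiagonal U fun i => tan (θ i)
  abs_lt_pi_div_two : ∀ i, |θ i| < π / 2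

theorem isAngles_arctan_eigenvalues {H : Matrix ι ι ℝ} (hH : H.IsHermitian) :
    IsAngles H hH.eigenvectorUnitary fun i => arctan (hH.eigenvalues i) where
  mul_transpose_eq_one := by
    have h := Unitary.mul_star_self_of_mem hH.eigenvectorUnitary.2
    rwa [star_eq_conjTranspose, conjTranspose_eq_transpose_of_trivial] at h
  eq_conjDiagonal := by
    have h := hH.spectral_theorem
    rw [Unitary.conjStarAlgAut_apply, star_eq_conjTranspose,
      conjTranspose_eq_transpose_of_trivial] at h
    simpa only [tan_arctan] using! h
  abs_lt_pi_div_two i := abs_lt.2 ⟨neg_pi_div_two_lt_arctan _, arctan_lt_pi_div_two _⟩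

namespace IsAngles

variable {H U : Matrix ι ι ℝ} {θ : ι → ℝ}

theorem isSymm (h : IsAngles H U θ) : H.IsSymm := h.eq_conjDiagonal ▸ isSymm_conjDiagonal _ _

theorem cos_pos (h : IsAngles H U θ) (i : ι) : 0 < cos (θ i) :=
  cos_pos_of_mem_Ioo (abs_lt.1 (h.abs_lt_pi_div_two i))

theorem neg (h : IsAngles H U θ) : IsAngles (-H) U fun i => -θ i where
  mul_transpose_eq_one := h.mul_transpose_eq_one
  eq_conjDiagonal := by
    rw [← neg_one_smul ℝ H, h.eq_conjDiagonal, smul_conjDiagonal]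
    simp only [tan_neg, neg_one_mul]
  abs_lt_pi_div_two i := by simpa only [abs_neg] using h.abs_lt_pi_div_two i

theorem invMetric_eq (h : IsAngles H U θ) :
    invMetric H = conjDiagonal U fun i => cos (θ i) ^ 2 := by
  refine inv_eq_right_inv ?_
  rw [h.eq_conjDiagonal, conjDiagonal_mul h.mul_transpose_eq_one,
    ← conjDiagonal_one h.mul_transpose_eq_one, conjDiagonal_add,
    conjDiagonal_mul h.mul_transpose_eq_one]
  congr 1
  funext i
  rw [← sq, ← inv_one_add_tan_sq (h.cos_pos i).ne', mul_inv_cancel₀ (by positivity)]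

theorem invMetric_mul_eq (h : IsAngles H U θ) :
    invMetric H * H = conjDiagonal U fun i => cos (θ i) ^ 2 * tan (θ i) := by
  rw [h.invMetric_eq, h.eq_conjDiagonal, conjDiagonal_mul h.mul_transpose_eq_one]

theorem trace_invMetric_mul_nonneg (h : IsAngles H U θ)
    (hsum : ((Fintype.card ι : ℝ) - 2) * π / 2 < ∑ i, θ i) {T : Matrix ι ι ℝ} (hT : T.IsSymm)
    (htr : (invMetric H * T).trace = 0) :
    0 ≤ (invMetric H * (T * H + H * T) * invMetric H * T).trace := by
  have hB : ∑ i, cos (θ i) ^ 2 * (Uᵀ * T * U) i i = 0 := by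
    rw [← trace_conjDiagonal_mul, ← h.invMetric_eq, htr]
  refine (sum_cos_sq_mul_tan_add_tan_mul_sq_nonneg h.abs_lt_pi_div_two hsum _ hB).trans_eq ?_
  have hsplit : invMetric H * (T * H + H * T) * invMetric H * T =
      invMetric H * T * (invMetric H * H) * T + invMetric H * H * T * invMetric H * T := by
    rw [(commute_invMetric h.isSymm).eq]
    simp only [Matrix.mul_add, Matrix.add_mul, Matrix.mul_assoc]
    rw [← Matrix.mul_assoc (invMetric H) H, (commute_invMetric h.isSymm).eq, Matrix.mul_assoc]
  rw [hsplit, trace_add, h.invMetric_mul_eq, h.invMetric_eq,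
    trace_conjDiagonal_mul_mul_conjDiagonal_mul _ _ hT,
    trace_conjDiagonal_mul_mul_conjDiagonal_mul _ _ hT, ← Finset.sum_add_distrib]
  refine Finset.sum_congr rfl fun i _ => ?_
  rw [← Finset.sum_add_distrib]
  exact Finset.sum_congr rfl fun j _ => by ring

variable {c : ℝ}

theorem sq_mul_sum_sq_le_dotProduct_invMetric_mulVec (h : IsAngles H U θ) (hc₀ : 0 ≤ c)
    (hc : ∀ i, c ≤ cos (θ i)) (ξ : ι → ℝ) : c ^ 2 * ∑ i, ξ i ^ 2 ≤ ξ ⬝ᵥ (invMetric H *ᵥ ξ) :=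
  h.invMetric_eq ▸ mul_sum_sq_le_dotProduct_conjDiagonal_mulVec h.mul_transpose_eq_one
    (fun i => by gcongr; exact hc i) ξ

theorem sum_row_sq_le (h : IsAngles H U θ) (hc₀ : 0 < c) (hc : ∀ i, c ≤ cos (θ i)) (i : ι) :
    ∑ k, H i k ^ 2 ≤ (c ^ 2)⁻¹ := by
  have hrow : ∑ k, H i k ^ 2 = Pi.single i 1 ⬝ᵥ ((H * H) *ᵥ Pi.single i 1) := by
    rw [mulVec_single_one, single_one_dotProduct, col_apply, Matrix.mul_apply]
    exact Finset.sum_congr rfl fun k _ => by rw [h.isSymm.apply i k, sq]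
  have htan : ∀ j, tan (θ j) * tan (θ j) ≤ (c ^ 2)⁻¹ := fun j =>
    calc tan (θ j) * tan (θ j) ≤ (cos (θ j) ^ 2)⁻¹ := by
          rw [← inv_one_add_tan_sq (h.cos_pos j).ne', inv_inv]
          linarith
      _ ≤ (c ^ 2)⁻¹ := by
          gcongr
          exact hc j
  calc ∑ k, H i k ^ 2 ≤ (c ^ 2)⁻¹ * ∑ j, (Pi.single i 1 : ι → ℝ) j ^ 2 := by
        rw [hrow, h.eq_conjDiagonal, conjDiagonal_mul h.mul_transpose_eq_one]
        exact dotProduct_conjDiagonal_mulVec_le h.mul_transpose_eq_one htan _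
    _ = (c ^ 2)⁻¹ := by simp [Pi.single_apply]

theorem sq_mul_trace_le_trace_invMetric_mul (h : IsAngles H U θ) (hc₀ : 0 ≤ c)
    (hc : ∀ i, c ≤ cos (θ i)) {B : Matrix ι ι ℝ} (hB : ∀ e, 0 ≤ e ⬝ᵥ (B *ᵥ e)) :
    c ^ 2 * B.trace ≤ (invMetric H * B).trace := by
  have htr : B.trace = ∑ i, (Uᵀ * B * U) i i := by
    simpa only [conjDiagonal_one h.mul_transpose_eq_one, Matrix.one_mul, one_mul]
      using trace_conjDiagonal_mul (U := U) (fun _ => 1) B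
  rw [h.invMetric_eq, trace_conjDiagonal_mul, htr, Finset.mul_sum]
  gcongr with i
  · have hdiag : (Uᵀ * B * U) i i = (fun k => U k i) ⬝ᵥ (B *ᵥ fun k => U k i) := by
      rw [Matrix.mul_assoc, Matrix.mul_apply]
      rfl
    exact hdiag ▸ hB _
  · exact hc i

end IsAngles

end IsAngles

/-! ### The complex determinant of `1 + iH` -/

section PhaseDet

open scoped Matrix.Norms.Operator

variable {ι : Type*} [Fintype ι] [DecidableEq ι]

theorem contDiff_det {𝕜 E : Type*} [NormedField 𝕜] [NormedAlgebra ℝ 𝕜] [NormedAddCommGroup E]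
    [NormedSpace ℝ E] {m : WithTop ℕ∞} {F : E → Matrix ι ι 𝕜}
    (hF : ∀ i j, ContDiff ℝ m fun x => F x i j) : ContDiff ℝ m fun x => (F x).det := by
  simp only [det_apply']
  exact ContDiff.sum fun σ _ => contDiff_const.mul (contDiff_prod fun i _ => hF _ _)

theorem hasDerivAt_det_one_add_smul (N : Matrix ι ι ℂ) :
    HasDerivAt (fun r : ℝ => (1 + (r : ℂ) • N).det) N.trace 0 := by
  have hpoly := Polynomial.hasDerivAt (det (1 + (Polynomial.X : Polynomial ℂ) • N.map Polynomial.C))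
    ((0 : ℝ) : ℂ)
  rw [Complex.ofReal_zero, derivative_det_one_add_X_smul, ← Complex.ofReal_zero] at hpoly
  refine hpoly.comp_ofReal.congr_of_eventuallyEq (.of_forall fun r => ?_)
  refine Eq.trans ?_ (RingHom.map_det (Polynomial.evalRingHom (r : ℂ)) _).symm
  refine congrArg det (Matrix.ext fun i j => ?_)
  simpa [one_apply, apply_ite (Polynomial.eval (r : ℂ))] using mul_comm (r : ℂ) (N i j)

/-- The determinant of `1 + iH`, rotated by `-Θ`. For a symmetric `H` with Lagrangian angles of sum
`Θ` it is the volume element of the graph of `H`. -/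
noncomputable def phaseDet (Θ : ℝ) (H : Matrix ι ι ℝ) : ℂ :=
  Complex.exp (-(Θ * Complex.I)) * (1 + Complex.I • Complex.ofRealHom.mapMatrix H).det

theorem contDiff_phaseDet (Θ : ℝ) : ContDiff ℝ ∞ (phaseDet (ι := ι) Θ) := by
  refine contDiff_const.mul (contDiff_det fun i j => ?_)
  refine contDiff_const.add (contDiff_const.mul ?_)
  exact Complex.ofRealCLM.contDiff.comp
    (Matrix.entryLinearMap ℝ ℝ i j).toContinuousLinearMap.contDiff

variable {H : Matrix ι ι ℝ}

theorem one_add_I_smul_mul_invMetric_sub (hH : H.IsSymm) :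
    (1 + Complex.I • Complex.ofRealHom.mapMatrix H) *
      (Complex.ofRealHom.mapMatrix (invMetric H) -
        Complex.I • Complex.ofRealHom.mapMatrix (invMetric H * H)) = 1 := by
  have hinv : Complex.ofRealHom.mapMatrix (invMetric H) +
      Complex.ofRealHom.mapMatrix (H * (invMetric H * H)) = 1 := by
    rw [← map_add, (commute_invMetric hH).eq, ← Matrix.mul_assoc, ← one_add_mul,
      one_add_mul_self_mul_invMetric hH, map_one]
  rw [Matrix.add_mul, Matrix.one_mul, Matrix.mul_sub, Matrix.smul_mul, Matrix.smul_mul,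
    Matrix.mul_smul, smul_smul, Complex.I_mul_I, ← map_mul, ← map_mul,
    ← (commute_invMetric hH).eq, ← hinv]
  module

theorem trace_invMetric_sub_mul_I_smul (B : Matrix ι ι ℝ) :
    ((Complex.ofRealHom.mapMatrix (invMetric H) -
        Complex.I • Complex.ofRealHom.mapMatrix (invMetric H * H)) *
      (Complex.I • Complex.ofRealHom.mapMatrix B)).trace =
      (invMetric H * H * B).trace + (invMetric H * B).trace * Complex.I := by
  have htrace (M : Matrix ι ι ℝ) : (Complex.ofRealHom.mapMatrix M).trace = (M.trace : ℂ) :=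
    (AddMonoidHom.map_trace Complex.ofRealHom M).symm
  rw [Matrix.sub_mul, Matrix.mul_smul, Matrix.smul_mul, Matrix.mul_smul, smul_smul,
    Complex.I_mul_I, ← map_mul, ← map_mul, trace_sub, trace_smul, trace_smul, htrace, htrace,
    smul_eq_mul, smul_eq_mul]
  ring

theorem fderiv_phaseDet (Θ : ℝ) (hH : H.IsSymm) (B : Matrix ι ι ℝ) :
    fderiv ℝ (phaseDet Θ) H B = phaseDet Θ H *
      ((invMetric H * H * B).trace + (invMetric H * B).trace * Complex.I) := by
  set C := Complex.ofRealHom.mapMatrix (invMetric H) -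
    Complex.I • Complex.ofRealHom.mapMatrix (invMetric H * H) with hC
  set N := C * (Complex.I • Complex.ofRealHom.mapMatrix B) with hN
  have hline (r : ℝ) : phaseDet Θ (H + r • B) = phaseDet Θ H * (1 + (r : ℂ) • N).det := by
    rw [phaseDet, phaseDet, mul_assoc, ← det_mul, Matrix.mul_add, Matrix.mul_one, Matrix.mul_smul,
      hN, ← Matrix.mul_assoc, one_add_I_smul_mul_invMetric_sub hH, Matrix.one_mul]
    congr 2
    ext i j
    simp
    ring
  have hderiv : HasLineDerivAt ℝ (phaseDet Θ) (phaseDet Θ H * N.trace) H B := by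
    simp only [HasLineDerivAt, hline]
    exact (hasDerivAt_det_one_add_smul N).const_mul _
  rw [← trace_invMetric_sub_mul_I_smul, ← hC, ← hN]
  exact ((contDiff_phaseDet Θ).differentiable (by simp) H).hasFDerivAt.hasLineDerivAt B
    |>.unique hderiv

theorem one_add_I_mul_tan {t : ℝ} (h : cos t ≠ 0) :
    (1 : ℂ) + Complex.I * (tan t : ℝ) = ((cos t)⁻¹ : ℝ) * Complex.exp (t * Complex.I) := by
  have hcos : Complex.cos t ≠ 0 := by exact_mod_cast h
  rw [Complex.exp_mul_I, tan_eq_sin_div_cos]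
  push_cast
  field_simp

namespace IsAngles

variable {U : Matrix ι ι ℝ} {θ : ι → ℝ}

theorem phaseDet_eq (h : IsAngles H U θ) :
    phaseDet (∑ i, θ i) H = (∏ i, (cos (θ i))⁻¹ : ℝ) := by
  have hdiag : 1 + Complex.I • Complex.ofRealHom.mapMatrix H = Complex.ofRealHom.mapMatrix U *
      diagonal (fun i => 1 + Complex.I * (tan (θ i) : ℝ)) * Complex.ofRealHom.mapMatrix Uᵀ := by
    have hsplit : (diagonal fun i => 1 + Complex.I * (tan (θ i) : ℝ)) =
        1 + Complex.I • Complex.ofRealHom.mapMatrix (diagonal fun i => tan (θ i)) := by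
      ext i j
      by_cases hij : i = j <;> simp [hij]
    rw [hsplit, Matrix.mul_add, Matrix.add_mul, Matrix.mul_one, ← map_mul, h.mul_transpose_eq_one,
      map_one, Matrix.mul_smul, Matrix.smul_mul, ← map_mul, ← map_mul, h.eq_conjDiagonal,
      conjDiagonal]
  have hU : (Complex.ofRealHom.mapMatrix U).det * (Complex.ofRealHom.mapMatrix Uᵀ).det = 1 := by
    rw [← det_mul, ← map_mul, h.mul_transpose_eq_one, map_one, det_one]
  have hprod : ∏ i, ((1 : ℂ) + Complex.I * (tan (θ i) : ℝ)) =
      (∏ i, (cos (θ i))⁻¹ : ℝ) * Complex.exp ((∑ i, θ i : ℝ) * Complex.I) := by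
    rw [Finset.prod_congr rfl fun i _ => one_add_I_mul_tan (h.cos_pos i).ne',
      Finset.prod_mul_distrib, ← Complex.exp_sum, ← Finset.sum_mul]
    push_cast
    rfl
  rw [phaseDet, hdiag, det_mul, det_mul, mul_right_comm, hU, one_mul, det_diagonal, hprod,
    mul_left_comm, ← Complex.exp_add, neg_add_cancel, Complex.exp_zero, mul_one]

theorem one_le_prod_inv_cos (h : IsAngles H U θ) : 1 ≤ ∏ i, (cos (θ i))⁻¹ :=
  Finset.prod_const_one.symm.trans_le <| Finset.prod_le_prod (fun _ _ => zero_le_one) fun i _ =>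
    one_le_inv_iff₀.2 ⟨h.cos_pos i, cos_le_one _⟩

theorem prod_inv_cos_le (h : IsAngles H U θ) {c : ℝ} (hc₀ : 0 < c) (hc : ∀ i, c ≤ cos (θ i)) :
    ∏ i, (cos (θ i))⁻¹ ≤ c⁻¹ ^ Fintype.card ι := by
  rw [← Finset.card_univ, ← Finset.prod_const]
  refine Finset.prod_le_prod (fun i _ => (inv_pos.2 (h.cos_pos i)).le) fun i _ => ?_
  gcongr
  exact hc i

end IsAngles

end PhaseDet

/-! ### Special Lagrangian graphs as minimal graphs -/

section MatrixField

open scoped Matrix.Norms.Operator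

variable {ι : Type*} [Fintype ι] {x : 𝔼 n} {F : 𝔼 n → Matrix ι ι ℝ}

theorem contDiff_matrix_apply (hF : ContDiff ℝ ∞ F) (i j : ι) : ContDiff ℝ ∞ fun x => F x i j :=
  (Matrix.entryLinearMap ℝ ℝ i j).toContinuousLinearMap.contDiff.comp hF

theorem pderiv_matrix_apply (k : Fin n) (hF : DifferentiableAt ℝ F x) (i j : ι) :
    pderiv k (fun y => F y i j) x = pderiv k F x i j :=
  pderiv_clm_comp k (Matrix.entryLinearMap ℝ ℝ i j).toContinuousLinearMap hF

theorem pderiv_trace (k : Fin n) (hF : DifferentiableAt ℝ F x) :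
    pderiv k (fun y => (F y).trace) x = (pderiv k F x).trace :=
  pderiv_clm_comp k (Matrix.traceLinearMap ι ℝ ℝ).toContinuousLinearMap hF

theorem contDiff_matrix (hF : ∀ i j, ContDiff ℝ ∞ fun x => F x i j) : ContDiff ℝ ∞ F := by
  classical
  have hsum : F = fun x => ∑ i, ∑ j, F x i j • (Matrix.single i j 1 : Matrix ι ι ℝ) := by
    funext x
    simpa only [smul_single, smul_eq_mul, mul_one] using matrix_eq_sum_single (F x)
  rw [hsum]
  exact ContDiff.sum fun i _ => ContDiff.sum fun j _ => (hF i j).smul contDiff_const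

variable [DecidableEq ι]

theorem contDiff_invMetric (hF : ContDiff ℝ ∞ F) (hsymm : ∀ x, (F x).IsSymm) :
    ContDiff ℝ ∞ fun x => invMetric (F x) := by
  refine contDiff_iff_contDiffAt.2 fun x => ?_
  have hunit := (isUnit_iff_isUnit_det _).2 (isUnit_det_one_add_mul_self (hsymm x))
  simp only [invMetric, nonsing_inv_eq_ringInverse]
  exact (contDiffAt_ringInverse ℝ hunit.unit).comp x (contDiff_const.add (hF.mul hF)).contDiffAt

theorem pderiv_invMetric (k : Fin n) (hF : ContDiff ℝ ∞ F) (hsymm : ∀ x, (F x).IsSymm) (x : 𝔼 n) :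
    pderiv k (fun y => invMetric (F y)) x = -(invMetric (F x) *
      (pderiv k F x * F x + F x * pderiv k F x) * invMetric (F x)) := by
  have hd : Differentiable ℝ F := hF.differentiable (by simp)
  have hdG : Differentiable ℝ fun y => invMetric (F y) :=
    (contDiff_invMetric hF hsymm).differentiable (by simp)
  have hdsq : DifferentiableAt ℝ (fun y => F y * F y) x := (hd x).mul (hd x)
  have hdmetric : DifferentiableAt ℝ (fun y => 1 + F y * F y) x := hdsq.const_add 1
  have hmetric : pderiv k (fun y => 1 + F y * F y) x = pderiv k F x * F x + F x * pderiv k F x := by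
    rw [pderiv_add k (differentiableAt_const _) hdsq, pderiv_const, zero_add,
      pderiv_mul k (hd x) (hd x)]
  have hzero : pderiv k (fun y => invMetric (F y)) x * (1 + F x * F x) +
      invMetric (F x) * (pderiv k F x * F x + F x * pderiv k F x) = 0 := by
    rw [← hmetric, ← pderiv_mul k (hdG x) hdmetric]
    simp only [mul_eq_one_comm.1 (one_add_mul_self_mul_invMetric (hsymm _)), pderiv_const]
  calc pderiv k (fun y => invMetric (F y)) x
      = pderiv k (fun y => invMetric (F y)) x * (1 + F x * F x) * invMetric (F x) := by
        rw [Matrix.mul_assoc, one_add_mul_self_mul_invMetric (hsymm x), Matrix.mul_one]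
    _ = _ := by rw [eq_neg_of_add_eq_zero_left hzero, Matrix.neg_mul]

theorem pderiv_phaseDet (k : Fin n) (Θ : ℝ) (hF : DifferentiableAt ℝ F x) (hsymm : (F x).IsSymm) :
    pderiv k (fun y => phaseDet Θ (F y)) x = phaseDet Θ (F x) *
      ((invMetric (F x) * F x * pderiv k F x).trace +
        (invMetric (F x) * pderiv k F x).trace * Complex.I) := by
  have hd := ((contDiff_phaseDet Θ).differentiable (by simp) (F x)).hasFDerivAt
  rw [← fderiv_phaseDet Θ hsymm]
  exact DFunLike.congr_fun (hd.comp x hF.hasFDerivAt).fderiv _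

end MatrixField

/-- The graph of a smooth gradient map `grad` with supercritical constant phase, whose Lagrangian
angles stay away from `±π/2`. -/
structure SpecialLagrangianGraph (n : ℕ) where
  phase : ℝ
  lt_phase : ((n : ℝ) - 2) * π / 2 < phase
  grad : Fin n → 𝔼 n → ℝ
  contDiff_grad : ∀ i, ContDiff ℝ ∞ (grad i)
  cosBound : ℝ
  cosBound_pos : 0 < cosBound
  exists_isAngles : ∀ x, ∃ U θ, IsAngles (of fun i j => pderiv j (grad i) x) U θ ∧
    (∀ i, cosBound ≤ cos (θ i)) ∧ ∑ i, θ i = phase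

namespace SpecialLagrangianGraph

open scoped Matrix.Norms.Operator

variable (S : SpecialLagrangianGraph n)

/-- The Jacobian matrix of the gradient map. -/
noncomputable def hess (x : 𝔼 n) : Matrix (Fin n) (Fin n) ℝ := of fun i j => pderiv j (S.grad i) x

theorem isSymm_hess (x : 𝔼 n) : (S.hess x).IsSymm :=
  let ⟨_, _, h, _⟩ := S.exists_isAngles x
  h.isSymm

theorem contDiff_hess : ContDiff ℝ ∞ S.hess :=
  contDiff_matrix fun i j => contDiff_infty_pderiv (S.contDiff_grad i) j

theorem differentiable_hess : Differentiable ℝ S.hess := S.contDiff_hess.differentiable (by simp)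

theorem contDiff_hess_apply (i j : Fin n) : ContDiff ℝ ∞ fun x => S.hess x i j :=
  contDiff_infty_pderiv (S.contDiff_grad i) j

theorem pderiv_hess_apply (k : Fin n) (x : 𝔼 n) (i j : Fin n) :
    pderiv k S.hess x i j = pderiv k (pderiv j (S.grad i)) x :=
  (pderiv_matrix_apply k (S.differentiable_hess x) i j).symm

theorem pderiv_grad_comm (i j : Fin n) : pderiv j (S.grad i) = pderiv i (S.grad j) :=
  funext fun x => (S.isSymm_hess x).apply j i

theorem isSymm_pderiv_hess (k : Fin n) (x : 𝔼 n) : (pderiv k S.hess x).IsSymm :=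
  Matrix.ext fun i j => by
    rw [transpose_apply, S.pderiv_hess_apply, S.pderiv_hess_apply, S.pderiv_grad_comm]

theorem pderiv_hess_apply_comm (k j : Fin n) (x : 𝔼 n) (i : Fin n) :
    pderiv k S.hess x i j = pderiv j S.hess x i k := by
  rw [S.pderiv_hess_apply, S.pderiv_hess_apply,
    pderiv_comm ((S.contDiff_grad i).of_le (by norm_cast))]

/-- The volume element of the graph. -/
noncomputable def density (x : 𝔼 n) : ℝ := (phaseDet S.phase (S.hess x)).re

theorem exists_density_eq (x : 𝔼 n) : ∃ J : ℝ, phaseDet S.phase (S.hess x) = J ∧ 1 ≤ J ∧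
    J ≤ S.cosBound⁻¹ ^ n := by
  obtain ⟨U, θ, hθ, hcos, hsum⟩ := S.exists_isAngles x
  refine ⟨_, hsum ▸ hθ.phaseDet_eq, hθ.one_le_prod_inv_cos, ?_⟩
  simpa only [Fintype.card_fin] using hθ.prod_inv_cos_le S.cosBound_pos hcos

theorem phaseDet_hess (x : 𝔼 n) : phaseDet S.phase (S.hess x) = S.density x := by
  obtain ⟨J, hJ, -⟩ := S.exists_density_eq x
  rw [density, hJ, Complex.ofReal_re]

theorem one_le_density (x : 𝔼 n) : 1 ≤ S.density x := by
  obtain ⟨J, hJ, hone, -⟩ := S.exists_density_eq x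
  rwa [density, hJ, Complex.ofReal_re]

theorem density_le (x : 𝔼 n) : S.density x ≤ S.cosBound⁻¹ ^ n := by
  obtain ⟨J, hJ, -, hle⟩ := S.exists_density_eq x
  rwa [density, hJ, Complex.ofReal_re]

theorem contDiff_density : ContDiff ℝ ∞ S.density :=
  Complex.reCLM.contDiff.comp ((contDiff_phaseDet S.phase).comp S.contDiff_hess)

theorem ofReal_pderiv_density (k : Fin n) (x : 𝔼 n) : ((pderiv k S.density x : ℝ) : ℂ) =
    S.density x * ((invMetric (S.hess x) * S.hess x * pderiv k S.hess x).trace +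
      (invMetric (S.hess x) * pderiv k S.hess x).trace * Complex.I) := by
  rw [← S.phaseDet_hess, ← pderiv_phaseDet k _ (S.differentiable_hess x) (S.isSymm_hess x)]
  simp only [S.phaseDet_hess]
  exact (pderiv_clm_comp k Complex.ofRealCLM
    (S.contDiff_density.differentiable (by simp) x)).symm

theorem pderiv_density (k : Fin n) (x : 𝔼 n) : pderiv k S.density x =
    S.density x * (invMetric (S.hess x) * S.hess x * pderiv k S.hess x).trace := by
  simpa using congrArg Complex.re (S.ofReal_pderiv_density k x)

theorem trace_invMetric_mul_pderiv_hess (k : Fin n) (x : 𝔼 n) :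
    (invMetric (S.hess x) * pderiv k S.hess x).trace = 0 := by
  have him := congrArg Complex.im (S.ofReal_pderiv_density k x)
  simpa [(zero_lt_one.trans_le (S.one_le_density x)).ne'] using him

theorem sum_mul_pderiv_hess_mul_apply (P Q : Matrix (Fin n) (Fin n) ℝ) (x : 𝔼 n) (j : Fin n) :
    ∑ i, (P * pderiv i S.hess x * Q) i j = ∑ b, (P * pderiv b S.hess x).trace * Q b j := by
  simp only [Matrix.mul_apply (N := Q), trace, diag_apply, Finset.sum_mul]
  rw [Finset.sum_comm]
  refine Finset.sum_congr rfl fun b _ => Finset.sum_congr rfl fun i _ => ?_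
  simp only [Matrix.mul_apply, S.pderiv_hess_apply_comm i b]

theorem sum_pderiv_density_mul_invMetric (j : Fin n) (x : 𝔼 n) :
    ∑ i, pderiv i (fun y => S.density y * invMetric (S.hess y) i j) x = 0 := by
  have hG := contDiff_invMetric S.contDiff_hess S.isSymm_hess
  have hterm (i : Fin n) : pderiv i (fun y => S.density y * invMetric (S.hess y) i j) x =
      S.density x * ((invMetric (S.hess x) * S.hess x * pderiv i S.hess x).trace *
          invMetric (S.hess x) i j -
        (invMetric (S.hess x) * pderiv i S.hess x * (S.hess x * invMetric (S.hess x))) i j -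
        (invMetric (S.hess x) * S.hess x * pderiv i S.hess x * invMetric (S.hess x)) i j) := by
    rw [pderiv_mul i (S.contDiff_density.differentiable (by simp) x)
      ((contDiff_matrix_apply hG i j).differentiable (by simp) x), S.pderiv_density,
      pderiv_matrix_apply i (hG.differentiable (by simp) x),
      pderiv_invMetric i S.contDiff_hess S.isSymm_hess, Matrix.mul_add, Matrix.add_mul,
      Matrix.neg_apply, Matrix.add_apply]
    simp only [Matrix.mul_assoc]
    ring
  simp only [hterm, ← Finset.mul_sum, Finset.sum_sub_distrib, S.sum_mul_pderiv_hess_mul_apply,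
    S.trace_invMetric_mul_pderiv_hess, zero_mul, Finset.sum_const_zero, sub_zero, sub_self,
    mul_zero]

/-- The squared distance in `ℝⁿ × ℝⁿ` between the points of the graph above `x₀` and `x`. -/
noncomputable def sqDist (x₀ x : 𝔼 n) : ℝ :=
  ∑ i, ((x i - x₀ i) ^ 2 + (S.grad i x - S.grad i x₀) ^ 2)

theorem contDiff_grad_sub (i : Fin n) (t : ℝ) : ContDiff ℝ ∞ fun x : 𝔼 n => S.grad i x - t :=
  (S.contDiff_grad i).sub contDiff_const

theorem contDiff_sqDist (x₀ : 𝔼 n) : ContDiff ℝ ∞ (S.sqDist x₀) :=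
  ContDiff.sum fun i _ => ((contDiff_coord_sub i _).pow 2).add ((S.contDiff_grad_sub i _).pow 2)

theorem pderiv_grad_sub (k i : Fin n) (t : ℝ) (x : 𝔼 n) :
    pderiv k (fun y => S.grad i y - t) x = S.hess x i k := by
  rw [pderiv_sub k ((S.contDiff_grad i).differentiable (by simp) x) (differentiableAt_const t),
    pderiv_const, sub_zero]
  rfl

theorem pderiv_sqDist (x₀ : 𝔼 n) (k : Fin n) : pderiv k (S.sqDist x₀) = fun x =>
    2 * ((x k - x₀ k) + ∑ i, S.hess x k i * (S.grad i x - S.grad i x₀)) := by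
  funext x
  have hcoord (i : Fin n) := (contDiff_coord_sub i (x₀ i)).differentiable (by simp) x
  have hgrad (i : Fin n) := (S.contDiff_grad_sub i (S.grad i x₀)).differentiable (by simp) x
  have hterm (i : Fin n) : pderiv k (fun y : 𝔼 n => (y i - x₀ i) ^ 2 +
      (S.grad i y - S.grad i x₀) ^ 2) x = 2 * ((if k = i then 1 else 0) * (x i - x₀ i)) +
        2 * (S.hess x k i * (S.grad i x - S.grad i x₀)) := by
    rw [pderiv_add k ((hcoord i).fun_pow 2) ((hgrad i).fun_pow 2)]
    simp only [sq]
    rw [pderiv_mul k (hcoord i) (hcoord i), pderiv_mul k (hgrad i) (hgrad i), pderiv_coord_sub,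
      pderiv_grad_sub, (S.isSymm_hess x).apply k i]
    ring
  unfold sqDist
  rw [pderiv_sum k _ fun i _ => ((hcoord i).fun_pow 2).fun_add ((hgrad i).fun_pow 2)]
  simp only [hterm, Finset.sum_add_distrib, ← Finset.mul_sum, mul_add, ite_mul, one_mul, zero_mul,
    Finset.sum_ite_eq, Finset.mem_univ, if_true]

theorem pderiv_pderiv_sqDist (x₀ : 𝔼 n) (l k : Fin n) (x : 𝔼 n) :
    pderiv l (pderiv k (S.sqDist x₀)) x = 2 * (1 + S.hess x * S.hess x +
      ∑ i, (S.grad i x - S.grad i x₀) • pderiv i S.hess x) k l := by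
  have hcoord := (contDiff_coord_sub k (x₀ k)).differentiable (by simp) x
  have hhess (i : Fin n) := (S.contDiff_hess_apply k i).differentiable (by simp) x
  have hgrad (i : Fin n) := (S.contDiff_grad_sub i (S.grad i x₀)).differentiable (by simp) x
  have hterm (i : Fin n) : pderiv l (fun y => S.hess y k i * (S.grad i y - S.grad i x₀)) x =
      S.hess x k i * S.hess x i l + (S.grad i x - S.grad i x₀) * pderiv i S.hess x k l := by
    rw [pderiv_mul l (hhess i) (hgrad i), pderiv_grad_sub,
      pderiv_matrix_apply l (S.differentiable_hess x), S.pderiv_hess_apply_comm l i]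
    ring
  have hmul (i : Fin n) := (hhess i).fun_mul (hgrad i)
  have hsum := DifferentiableAt.fun_sum fun i (_ : i ∈ Finset.univ) => hmul i
  rw [S.pderiv_sqDist, pderiv_const_mul l (hcoord.fun_add hsum), pderiv_add l hcoord hsum,
    pderiv_sum l _ fun i _ => hmul i, pderiv_coord_sub]
  simp only [hterm, Finset.sum_add_distrib, Matrix.add_apply, Matrix.mul_apply, Matrix.sum_apply,
    Matrix.smul_apply, smul_eq_mul, one_apply, eq_comm (a := l), add_assoc]

theorem sum_density_mul_pderiv_pderiv_sqDist (x₀ x : 𝔼 n) :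
    ∑ i, ∑ j, S.density x * invMetric (S.hess x) i j * pderiv i (pderiv j (S.sqDist x₀)) x =
      2 * n * S.density x := by
  have htrace : (invMetric (S.hess x) * (1 + S.hess x * S.hess x +
      ∑ i, (S.grad i x - S.grad i x₀) • pderiv i S.hess x)).trace = n := by
    rw [Matrix.mul_add, mul_eq_one_comm.1 (one_add_mul_self_mul_invMetric (S.isSymm_hess x)),
      trace_add, trace_one, Fintype.card_fin, Finset.mul_sum, trace_sum]
    simp only [Matrix.mul_smul, trace_smul, S.trace_invMetric_mul_pderiv_hess, smul_zero,
      Finset.sum_const_zero, add_zero]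
  rw [mul_right_comm, ← htrace]
  simp only [S.pderiv_pderiv_sqDist, trace, diag_apply, Matrix.mul_apply (M := invMetric _),
    Finset.mul_sum]
  refine Finset.sum_congr rfl fun i _ => Finset.sum_congr rfl fun j _ => ?_
  ring

theorem sum_density_mul_invMetric_mul_mul (x : 𝔼 n) (ξ : Fin n → ℝ) :
    ∑ i, ∑ j, S.density x * invMetric (S.hess x) i j * ξ i * ξ j =
      S.density x * (ξ ⬝ᵥ (invMetric (S.hess x) *ᵥ ξ)) := by
  simp only [dotProduct, mulVec, Finset.mul_sum]
  refine Finset.sum_congr rfl fun i _ => Finset.sum_congr rfl fun j _ => ?_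
  ring

theorem sum_density_mul_pderiv_sqDist_mul_pderiv_sqDist_le (x₀ x : 𝔼 n) :
    ∑ i, ∑ j, S.density x * invMetric (S.hess x) i j * pderiv i (S.sqDist x₀) x *
      pderiv j (S.sqDist x₀) x ≤ 4 * S.sqDist x₀ x * S.density x := by
  set p : Fin n → ℝ := fun i => x i - x₀ i with hp
  set q : Fin n → ℝ := fun i => S.grad i x - S.grad i x₀ with hq
  have hgrad : (fun k => pderiv k (S.sqDist x₀) x) = (2 : ℝ) • (p + S.hess x *ᵥ q) := by
    funext k
    rw [S.pderiv_sqDist]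
    rfl
  have hdist : p ⬝ᵥ p + q ⬝ᵥ q = S.sqDist x₀ x := by
    simp only [sqDist, dotProduct, ← Finset.sum_add_distrib, sq, hp, hq]
  rw [S.sum_density_mul_invMetric_mul_mul x fun k => pderiv k (S.sqDist x₀) x, hgrad, mulVec_smul,
    smul_dotProduct, dotProduct_smul, smul_eq_mul, smul_eq_mul, ← hdist]
  nlinarith [dotProduct_invMetric_mulVec_le (S.isSymm_hess x) p q, S.one_le_density x]

theorem grad_sub_sq_le (i : Fin n) (x₀ x : 𝔼 n) :
    (S.grad i x - S.grad i x₀) ^ 2 ≤ (S.cosBound ^ 2)⁻¹ * ‖x - x₀‖ ^ 2 := by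
  have hfderiv : ∀ y ∈ (univ : Set (𝔼 n)), ‖fderiv ℝ (S.grad i) y‖ ≤ S.cosBound⁻¹ := fun y _ => by
    obtain ⟨U, θ, hθ, hcos, -⟩ := S.exists_isAngles y
    refine le_of_sq_le_sq ((norm_fderiv_sq_le_sum_pderiv_sq _ y).trans ?_)
      (inv_pos.2 S.cosBound_pos).le
    exact inv_pow S.cosBound 2 ▸ hθ.sum_row_sq_le S.cosBound_pos hcos i
  have hlip := convex_univ.norm_image_sub_le_of_norm_fderiv_le
    (fun y _ => (S.contDiff_grad i).differentiable (by simp) y) hfderiv (mem_univ x₀) (mem_univ x)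
  rw [← inv_pow, ← mul_pow, ← sq_abs]
  exact pow_le_pow_left₀ (abs_nonneg _) hlip 2

theorem sqDist_eq (x₀ x : 𝔼 n) :
    S.sqDist x₀ x = ‖x - x₀‖ ^ 2 + ∑ i, (S.grad i x - S.grad i x₀) ^ 2 := by
  simp [sqDist, Finset.sum_add_distrib, EuclideanSpace.norm_sq_eq]

theorem sqDist_le (x₀ x : 𝔼 n) :
    S.sqDist x₀ x ≤ (1 + n * (S.cosBound ^ 2)⁻¹) * ‖x - x₀‖ ^ 2 := by
  have hsum := Finset.sum_le_sum fun i (_ : i ∈ Finset.univ) => S.grad_sub_sq_le i x₀ x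
  rw [Finset.sum_const, Finset.card_univ, Fintype.card_fin, nsmul_eq_mul] at hsum
  rw [sqDist_eq]
  linarith

/-- The operator `density • Δ`, where `Δ` is the Laplacian of the graph. -/
noncomputable def minimalGraphOperator : MinimalGraphOperator n where
  coeff i j x := S.density x * invMetric (S.hess x) i j
  contDiff_coeff i j := (S.contDiff_density.mul (contDiff_matrix_apply
    (contDiff_invMetric S.contDiff_hess S.isSymm_hess) i j)).of_le (by norm_cast)
  coeff_comm i j x := by rw [(isSymm_invMetric (S.isSymm_hess x)).apply i j]
  div_coeff := S.sum_pderiv_density_mul_invMetric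
  ellip := S.cosBound ^ 2
  ellip_pos := pow_pos S.cosBound_pos 2
  ellip_le x ξ := by
    obtain ⟨U, θ, hθ, hcos, -⟩ := S.exists_isAngles x
    have hle := hθ.sq_mul_sum_sq_le_dotProduct_invMetric_mulVec S.cosBound_pos.le hcos ξ
    rw [S.sum_density_mul_invMetric_mul_mul]
    exact hle.trans (le_mul_of_one_le_left (hle.trans' (by positivity)) (S.one_le_density x))
  density := S.density
  continuous_density := S.contDiff_density.continuous
  one_le_density := S.one_le_density
  densityBound := S.cosBound⁻¹ ^ n
  density_le := S.density_le
  sqDist := S.sqDist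
  contDiff_sqDist x₀ := (S.contDiff_sqDist x₀).of_le (by norm_cast)
  distortion := 1 + n * (S.cosBound ^ 2)⁻¹
  one_le_distortion := le_add_of_nonneg_right (by positivity)
  norm_sq_le_sqDist x₀ x := by
    rw [sqDist_eq]
    exact le_add_of_nonneg_right (by positivity)
  sqDist_le := S.sqDist_le
  lap_sqDist := S.sum_density_mul_pderiv_pderiv_sqDist
  gam_sqDist_le := S.sum_density_mul_pderiv_sqDist_mul_pderiv_sqDist_le

end SpecialLagrangianGraph

/-! ### Simultaneous maximisation of subharmonic functions -/

namespace EllipticOperator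

theorem lap_const_sub (L : EllipticOperator n) {f : 𝔼 n → ℝ} (hf : ContDiff ℝ 2 f) (c : ℝ)
    (x : 𝔼 n) : L.lap (fun y => c - f y) x = -L.lap f x := by
  have hφ (t : ℝ) : HasDerivAt (fun t => c - t) (-1) t := by
    simpa using (hasDerivAt_id t).const_sub c
  rw [L.lap_comp (φ := fun t => c - t) (φ' := fun _ => -1) hf x (fun _ => hφ _)
    (hasDerivAt_const _ _)]
  ring

end EllipticOperator

namespace MinimalGraphOperator

open Metric

variable (M : MinimalGraphOperator n)

theorem eventually_measureReal_le_iSup_sub_inter_ball_lt {f : 𝔼 n → ℝ} (hf : ContDiff ℝ 2 f)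
    (hbdd : BddAbove (range f)) (hsub : ∀ x, 0 ≤ M.lap f x) {θ ε : ℝ} (hθ : 0 < θ) (hε : 0 < ε) :
    ∀ᶠ R in atTop, volume.real ({x | f x ≤ (⨆ y, f y) - ε} ∩ ball 0 R) <
      θ * volume.real (ball (0 : 𝔼 n) R) := by
  obtain ⟨κ, hκ, harnack⟩ := M.weak_harnack (θ := θ / 2 ^ n) (by positivity)
  have hη : 0 < κ * ε / 2 := by positivity
  obtain ⟨x₀, hx₀⟩ := exists_lt_of_lt_ciSup (sub_lt_self (⨆ y, f y) hη)
  filter_upwards [eventually_gt_atTop 0, eventually_ge_atTop ‖x₀‖] with R hR hx₀R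
  by_contra! hlarge
  set w : 𝔼 n → ℝ := fun x => (⨆ y, f y) + κ * ε / 2 - f x
  have hsubset : {x | f x ≤ (⨆ y, f y) - ε} ∩ ball 0 R ⊆ {x | ε ≤ w x} ∩ ball x₀ (2 * R) := by
    rintro x ⟨hfx, hx⟩
    rw [mem_ball_zero_iff] at hx
    refine ⟨by simp only [w, mem_ofPred_eq] at hfx ⊢; linarith, ?_⟩
    rw [mem_ball, dist_eq_norm]
    linarith [norm_sub_le x x₀]
  have hvol : θ / 2 ^ n * volume.real (ball x₀ (2 * R)) = θ * volume.real (ball (0 : 𝔼 n) R) := by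
    rw [measureReal_ball x₀ (by positivity), measureReal_ball 0 hR, mul_pow]
    field_simp
  have hle := harnack w (contDiff_const.sub hf)
    (fun x => by simp only [w]; linarith [le_ciSup hbdd x])
    (fun x => by rw [M.lap_const_sub hf]; linarith [hsub x]) x₀ (2 * R) ε (by positivity) hε
    ((hvol.trans_le hlarge).trans (measureReal_mono hsubset
      ((measure_mono inter_subset_right).trans_lt measure_ball_lt_top).ne))
  simp only [w] at hle
  linarith

theorem exists_forall_iSup_sub_lt {ι : Type*} (s : Finset ι) {f : ι → 𝔼 n → ℝ}
    (hf : ∀ i ∈ s, ContDiff ℝ 2 (f i)) (hbdd : ∀ i ∈ s, BddAbove (range (f i)))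
    (hsub : ∀ i ∈ s, ∀ x, 0 ≤ M.lap (f i) x) {ε : ℝ} (hε : 0 < ε) :
    ∃ y, ∀ i ∈ s, (⨆ x, f i x) - ε < f i y := by
  set θ : ℝ := ((s.card : ℝ) + 1)⁻¹ with hθ
  have hsmall := (eventually_all_finset s).2 fun i hi =>
    M.eventually_measureReal_le_iSup_sub_inter_ball_lt (hf i hi) (hbdd i hi) (hsub i hi)
      (θ := θ) (by positivity) hε
  obtain ⟨R, hR, hmeas⟩ := ((eventually_gt_atTop 0).and hsmall).exists
  by_contra! hno
  have hcover : ball (0 : 𝔼 n) R ⊆ ⋃ i ∈ s, {x | f i x ≤ (⨆ y, f i y) - ε} ∩ ball 0 R :=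
    fun y hy => let ⟨i, hi, hle⟩ := hno y; mem_biUnion hi ⟨hle, hy⟩
  have hfinite : volume (⋃ i ∈ s, {x | f i x ≤ (⨆ y, f i y) - ε} ∩ ball 0 R) ≠ ⊤ :=
    ((measure_mono (iUnion₂_subset fun _ _ => inter_subset_right)).trans_lt
      measure_ball_lt_top).ne
  have hcard : volume.real (ball (0 : 𝔼 n) R) ≤ s.card * (θ * volume.real (ball (0 : 𝔼 n) R)) :=
    calc volume.real (ball (0 : 𝔼 n) R)
        ≤ ∑ i ∈ s, volume.real ({x | f i x ≤ (⨆ y, f i y) - ε} ∩ ball 0 R) :=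
          (measureReal_mono hcover hfinite).trans (measureReal_biUnion_finset_le _ _)
      _ ≤ ∑ _i ∈ s, θ * volume.real (ball (0 : 𝔼 n) R) :=
          Finset.sum_le_sum fun i hi => (hmeas i hi).le
      _ = s.card * (θ * volume.real (ball (0 : 𝔼 n) R)) := by rw [Finset.sum_const, nsmul_eq_mul]
  have hlt : (s.card : ℝ) * θ < 1 := by
    rw [hθ, ← div_eq_mul_inv, div_lt_one (by positivity)]
    exact lt_add_one _
  nlinarith [measureReal_ball_pos (0 : 𝔼 n) hR]

end MinimalGraphOperator

/-! ### Constancy of the Hessian -/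

section Matrices

variable {ι : Type*} [Fintype ι]

theorem abs_apply_le_trace {B : Matrix ι ι ℝ} (hB : B.PosSemidef) (i j : ι) :
    |B i j| ≤ B.trace := by
  classical
  have hdiag (k : ι) : B k k ≤ B.trace :=
    Finset.single_le_sum (f := fun k => B k k) (fun k _ => hB.diag_nonneg) (Finset.mem_univ k)
  have hadd := hB.dotProduct_mulVec_nonneg (Pi.single i 1 + Pi.single j 1)
  have hsub := hB.dotProduct_mulVec_nonneg (Pi.single i 1 - Pi.single j 1)
  have hsymm : B j i = B i j := hB.isHermitian.apply i j
  simp only [star_trivial, mulVec_add, dotProduct_add, add_dotProduct, mulVec_sub, dotProduct_sub,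
    sub_dotProduct, mulVec_single_one, single_one_dotProduct, col_apply] at hadd hsub
  rw [abs_le]
  constructor <;> linarith [hdiag i, hdiag j]

open scoped Matrix.Norms.Operator

theorem norm_le_card_mul_trace {B : Matrix ι ι ℝ} (hB : B.PosSemidef) :
    ‖B‖ ≤ Fintype.card ι * B.trace := by
  lift B.trace to NNReal using hB.trace_nonneg with t ht
  rw [linfty_opNorm_def]
  have hrow (i : ι) : ∑ j, ‖B i j‖₊ ≤ Fintype.card ι * t := by
    refine (Finset.sum_le_card_nsmul _ _ t fun j _ => ?_).trans_eq (nsmul_eq_mul _ _)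
    rw [← NNReal.coe_le_coe, ht]
    exact abs_apply_le_trace hB i j
  exact_mod_cast Finset.sup_le fun i _ => hrow i

variable [DecidableEq ι]

theorem exists_pos_mul_trace_le_trace_invMetric_mul {A : Matrix ι ι ℝ} (hA : A.IsSymm) :
    ∃ c : ℝ, 0 < c ∧ ∀ B : Matrix ι ι ℝ, B.PosSemidef → c * B.trace ≤ (invMetric A * B).trace := by
  have hθ := isAngles_arctan_eigenvalues ((conjTranspose_eq_transpose_of_trivial A).trans hA)
  have hcos : ∀ᶠ c in 𝓝[>] (0 : ℝ), ∀ i, c ≤ cos _ := eventually_all.2 fun i =>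
    mem_of_superset (Ioo_mem_nhdsGT (hθ.cos_pos i)) fun c hc => hc.2.le
  obtain ⟨c, hc, hc₀⟩ := (hcos.and self_mem_nhdsWithin).exists
  exact ⟨c ^ 2, pow_pos hc₀ 2, fun B hB =>
    hθ.sq_mul_trace_le_trace_invMetric_mul (le_of_lt hc₀) hc hB.dotProduct_mulVec_nonneg⟩

/-- The phase is strictly increasing at `A` in positive semidefinite directions, so no other matrix
below `A` and close to it has the same phase. -/
theorem eventually_eq_of_posSemidef_sub {Θ : ℝ} {A : Matrix ι ι ℝ} (hA : A.IsSymm)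
    (him : (phaseDet Θ A).im = 0) (hre : 0 < (phaseDet Θ A).re) :
    ∀ᶠ H in 𝓝 A, (phaseDet Θ H).im = 0 → (A - H).PosSemidef → H = A := by
  obtain ⟨c, hc, htrace⟩ := exists_pos_mul_trace_le_trace_invMetric_mul hA
  have hderiv := ((contDiff_phaseDet Θ).differentiable (by simp) A).hasFDerivAt
  set ε : ℝ := (phaseDet Θ A).re * c / (Fintype.card ι + 1) with hε
  have hlittle : ∀ᶠ H in 𝓝 A, ‖phaseDet Θ H - phaseDet Θ A - fderiv ℝ (phaseDet Θ) A (H - A)‖ ≤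
      ε * ‖H - A‖ := hderiv.isLittleO.def (by positivity)
  filter_upwards [hlittle] with H hH himH hB
  set B := A - H with hBdef
  have hlin : (phaseDet Θ A).re * (invMetric A * B).trace ≤ ε * ‖B‖ := by
    have hle := (Complex.abs_im_le_norm _).trans hH
    rw [fderiv_phaseDet Θ hA, ← neg_sub A H, norm_neg, ← hBdef] at hle
    refine (le_abs_self _).trans (Eq.trans_le ?_ hle)
    simp [him, himH]
  have hεcard : ε * (Fintype.card ι * B.trace) + ε * B.trace = (phaseDet Θ A).re * c * B.trace := by
    rw [hε]
    field_simp
  have hBtrace : ε * B.trace ≤ 0 := by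
    have hlow := mul_le_mul_of_nonneg_left (htrace B hB) hre.le
    have hupp := mul_le_mul_of_nonneg_left (norm_le_card_mul_trace hB) (show 0 ≤ ε by positivity)
    linarith
  have htrace0 : B.trace = 0 :=
    (nonpos_of_mul_nonpos_right hBtrace (by positivity)).antisymm hB.trace_nonneg
  exact (sub_eq_zero.1 (hB.trace_eq_zero_iff.1 htrace0)).symm

end Matrices

section FormCLM

/-- The evaluation of quadratic forms at `e`, as a continuous linear functional of their matrix. -/
noncomputable def formCLM {ι : Type*} [Fintype ι] (e : ι → ℝ) : Matrix ι ι ℝ →L[ℝ] ℝ where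
  toFun B := e ⬝ᵥ (B *ᵥ e)
  map_add' B C := by rw [add_mulVec, dotProduct_add]
  map_smul' t B := by rw [smul_mulVec, dotProduct_smul, RingHom.id_apply]
  cont := by fun_prop

end FormCLM

namespace SpecialLagrangianGraph

open scoped Matrix.Norms.Operator

variable (S : SpecialLagrangianGraph n)

theorem pderiv_pderiv_hess_apply_comm (k l : Fin n) (x : 𝔼 n) (i j : Fin n) :
    pderiv k (pderiv l S.hess) x i j = pderiv j (pderiv i S.hess) x l k := by
  have hpd (l : Fin n) (x : 𝔼 n) : DifferentiableAt ℝ (pderiv l S.hess) x :=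
    (contDiff_infty_pderiv S.contDiff_hess l).differentiable (by simp) x
  calc pderiv k (pderiv l S.hess) x i j
      = pderiv k (fun y => pderiv l S.hess y i j) x := (pderiv_matrix_apply k (hpd l x) i j).symm
    _ = pderiv k (pderiv j fun y => S.hess y i l) x := by
        congr 1
        funext y
        rw [S.pderiv_hess_apply_comm l j, pderiv_matrix_apply j (S.differentiable_hess y)]
    _ = pderiv j (pderiv k fun y => S.hess y i l) x :=
        pderiv_comm ((S.contDiff_hess_apply i l).of_le (by norm_cast)) k j x
    _ = pderiv j (fun y => pderiv i S.hess y l k) x := by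
        congr 1
        funext y
        rw [pderiv_matrix_apply k (S.differentiable_hess y), ← (S.isSymm_pderiv_hess k y).apply,
          S.pderiv_hess_apply_comm k i]
    _ = pderiv j (pderiv i S.hess) x l k := pderiv_matrix_apply j (hpd i x) l k

theorem trace_invMetric_mul_pderiv_pderiv_hess (i j : Fin n) (x : 𝔼 n) :
    (invMetric (S.hess x) * pderiv j (pderiv i S.hess) x).trace =
      (invMetric (S.hess x) * (pderiv j S.hess x * S.hess x + S.hess x * pderiv j S.hess x) *
        invMetric (S.hess x) * pderiv i S.hess x).trace := by
  have hG := (contDiff_invMetric S.contDiff_hess S.isSymm_hess).differentiable (by simp) x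
  have hT := (contDiff_infty_pderiv S.contDiff_hess i).differentiable (by simp) x
  have hzero := pderiv_trace j (hG.fun_mul hT)
  simp only [S.trace_invMetric_mul_pderiv_hess, pderiv_const] at hzero
  rw [pderiv_mul j hG hT, pderiv_invMetric j S.contDiff_hess S.isSymm_hess, trace_add,
    Matrix.neg_mul, trace_neg] at hzero
  linarith

/-- The second derivative of the potential in the direction `e`. -/
noncomputable def hessForm (e : Fin n → ℝ) (x : 𝔼 n) : ℝ := e ⬝ᵥ (S.hess x *ᵥ e)

theorem contDiff_hessForm (e : Fin n → ℝ) : ContDiff ℝ ∞ (S.hessForm e) :=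
  (formCLM e).contDiff.comp S.contDiff_hess

theorem pderiv_pderiv_hessForm (e : Fin n → ℝ) (k l : Fin n) (x : 𝔼 n) :
    pderiv k (pderiv l (S.hessForm e)) x = e ⬝ᵥ (pderiv k (pderiv l S.hess) x *ᵥ e) := by
  have hfirst : pderiv l (S.hessForm e) = fun y => formCLM e (pderiv l S.hess y) :=
    funext fun y => pderiv_clm_comp l (formCLM e) (S.differentiable_hess y)
  rw [hfirst]
  exact pderiv_clm_comp k (formCLM e)
    ((contDiff_infty_pderiv S.contDiff_hess l).differentiable (by simp) x)

theorem lap_hessForm (e : Fin n → ℝ) (x : 𝔼 n) : S.minimalGraphOperator.lap (S.hessForm e) x =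
    S.density x *
      ∑ i, ∑ j, e i * e j * (invMetric (S.hess x) * pderiv j (pderiv i S.hess) x).trace := by
  have hform (k l : Fin n) : pderiv k (pderiv l (S.hessForm e)) x =
      ∑ i, ∑ j, e i * e j * pderiv j (pderiv i S.hess) x l k := by
    simp only [S.pderiv_pderiv_hessForm, dotProduct, mulVec, Finset.mul_sum,
      ← S.pderiv_pderiv_hess_apply_comm k l x]
    exact Finset.sum_congr rfl fun i _ => Finset.sum_congr rfl fun j _ => by ring
  simp only [EllipticOperator.lap, hform, minimalGraphOperator, Finset.mul_sum, trace, diag_apply,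
    Matrix.mul_apply]
  rw [Finset.sum_congr rfl fun k _ => Finset.sum_comm, Finset.sum_comm]
  refine Finset.sum_congr rfl fun i _ => ?_
  rw [Finset.sum_congr rfl fun k _ => Finset.sum_comm, Finset.sum_comm]
  refine Finset.sum_congr rfl fun j _ => Finset.sum_congr rfl fun k _ =>
    Finset.sum_congr rfl fun l _ => ?_
  ring

theorem lap_hessForm_nonneg (e : Fin n → ℝ) (x : 𝔼 n) :
    0 ≤ S.minimalGraphOperator.lap (S.hessForm e) x := by
  obtain ⟨U, θ, hθ, -, hsum⟩ := S.exists_isAngles x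
  set T := ∑ i, e i • pderiv i S.hess x with hT
  have hsymm : T.IsSymm := by
    rw [IsSymm, hT, transpose_sum]
    exact Finset.sum_congr rfl fun i _ => by rw [transpose_smul, (S.isSymm_pderiv_hess i x).eq]
  have htrace : (invMetric (S.hess x) * T).trace = 0 := by
    simp only [hT, Finset.mul_sum, trace_sum, Matrix.mul_smul, trace_smul,
      S.trace_invMetric_mul_pderiv_hess, smul_zero, Finset.sum_const_zero]
  have hexpand : (invMetric (S.hess x) * (T * S.hess x + S.hess x * T) *
      invMetric (S.hess x) * T).trace =
      ∑ i, ∑ j, e i * e j * (invMetric (S.hess x) * pderiv j (pderiv i S.hess) x).trace := by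
    simp only [S.trace_invMetric_mul_pderiv_pderiv_hess, hT, Finset.sum_mul, Finset.mul_sum,
      Matrix.smul_mul, Matrix.mul_smul, trace_sum, trace_smul, ← Finset.sum_add_distrib,
      ← smul_add, smul_smul, smul_eq_mul]
  rw [S.lap_hessForm, ← hexpand]
  refine mul_nonneg (zero_le_one.trans (S.one_le_density x))
    (hθ.trace_invMetric_mul_nonneg ?_ hsymm htrace)
  rw [hsum, Fintype.card_fin]
  exact S.lt_phase

theorem abs_hess_apply_le (x : 𝔼 n) (i j : Fin n) : |S.hess x i j| ≤ S.cosBound⁻¹ := by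
  obtain ⟨U, θ, hθ, hcos, -⟩ := S.exists_isAngles x
  refine abs_le_of_sq_le_sq ?_ (inv_pos.2 S.cosBound_pos).le
  rw [inv_pow]
  exact (Finset.single_le_sum (f := fun k => S.hess x i k ^ 2) (fun k _ => sq_nonneg _)
    (Finset.mem_univ j)).trans (hθ.sum_row_sq_le S.cosBound_pos hcos i)

theorem isCompact_closure_range_hess : IsCompact (closure (range S.hess)) := by
  have hbox : IsCompact {A : Matrix (Fin n) (Fin n) ℝ | ∀ i j, A i j ∈
      Icc (-S.cosBound⁻¹) S.cosBound⁻¹} :=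
    isCompact_pi_infinite fun _ => isCompact_pi_infinite fun _ => isCompact_Icc
  refine hbox.of_isClosed_subset isClosed_closure (closure_minimal ?_ hbox.isClosed)
  rintro _ ⟨x, rfl⟩ i j
  exact abs_le.1 (S.abs_hess_apply_le x i j)

theorem bddAbove_range_hessForm (e : Fin n → ℝ) : BddAbove (range (S.hessForm e)) := by
  refine (S.isCompact_closure_range_hess.image (formCLM e).continuous).bddAbove.mono ?_
  rintro _ ⟨x, rfl⟩
  exact mem_image_of_mem _ (subset_closure (mem_range_self x))

theorem phaseDet_of_mem_closure_range_hess {A : Matrix (Fin n) (Fin n) ℝ}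
    (hA : A ∈ closure (range S.hess)) :
    A.IsSymm ∧ (phaseDet S.phase A).im = 0 ∧ 1 ≤ (phaseDet S.phase A).re := by
  have hcont := (contDiff_phaseDet (ι := Fin n) S.phase).continuous
  have hclosed : IsClosed {A : Matrix (Fin n) (Fin n) ℝ |
      A.IsSymm ∧ (phaseDet S.phase A).im = 0 ∧ 1 ≤ (phaseDet S.phase A).re} :=
    (isClosed_eq continuous_id.matrix_transpose continuous_id).inter
      ((isClosed_eq (Complex.continuous_im.comp hcont) continuous_const).inter
        (isClosed_le continuous_const (Complex.continuous_re.comp hcont)))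
  refine closure_minimal ?_ hclosed hA
  rintro _ ⟨x, rfl⟩
  refine ⟨S.isSymm_hess x, ?_, S.one_le_density x⟩
  rw [S.phaseDet_hess, Complex.ofReal_im]

theorem exists_forall_iSup_hessForm_sub_le (u : Finset ((Fin n → ℝ) × Ioi (0 : ℝ))) :
    ∃ y, ∀ p ∈ u, (⨆ x, S.hessForm p.1 x) - p.2 ≤ S.hessForm p.1 y := by
  have hmin : ∀ᶠ ε in 𝓝[>] (0 : ℝ), ∀ p ∈ u, ε ≤ (p.2 : ℝ) := (eventually_all_finset u).2 fun p _ =>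
    mem_of_superset (Ioo_mem_nhdsGT p.2.2) fun ε hε => hε.2.le
  obtain ⟨ε, hle, hε⟩ := (hmin.and self_mem_nhdsWithin).exists
  obtain ⟨y, hy⟩ := S.minimalGraphOperator.exists_forall_iSup_sub_lt u
    (f := fun p => S.hessForm p.1) (fun p _ => (S.contDiff_hessForm p.1).of_le (by norm_cast))
    (fun p _ => S.bddAbove_range_hessForm p.1) (fun p _ => S.lap_hessForm_nonneg p.1) hε
  exact ⟨y, fun p hp => (sub_le_sub_left (hle p hp) _).trans (hy p hp).le⟩

theorem exists_mem_closure_range_hess_posSemidef_sub :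
    ∃ A ∈ closure (range S.hess), ∀ x, (A - S.hess x).PosSemidef := by
  have hfinite (u : Finset ((Fin n → ℝ) × Ioi (0 : ℝ))) : (closure (range S.hess) ∩
      ⋂ p ∈ u, {A | (⨆ x, S.hessForm p.1 x) - p.2 ≤ formCLM p.1 A}).Nonempty := by
    obtain ⟨y, hy⟩ := S.exists_forall_iSup_hessForm_sub_le u
    exact ⟨S.hess y, subset_closure (mem_range_self y), mem_iInter₂.2 hy⟩
  obtain ⟨A, hA, hmax⟩ := S.isCompact_closure_range_hess.inter_iInter_nonempty
    (fun p : (Fin n → ℝ) × Ioi (0 : ℝ) => {A | (⨆ x, S.hessForm p.1 x) - p.2 ≤ formCLM p.1 A})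
    (fun p => isClosed_le continuous_const (formCLM p.1).continuous) hfinite
  refine ⟨A, hA, fun x => .of_dotProduct_mulVec_nonneg ?_ fun e => ?_⟩
  · rw [IsHermitian, conjTranspose_eq_transpose_of_trivial, transpose_sub,
      (S.phaseDet_of_mem_closure_range_hess hA).1.eq, (S.isSymm_hess x).eq]
  · have hle : S.hessForm e x ≤ formCLM e A := le_of_forall_pos_sub_le fun ε hε =>
      (sub_le_sub_right (le_ciSup (S.bddAbove_range_hessForm e) x) ε).trans
        (mem_iInter.1 hmax (e, ⟨ε, hε⟩))
    rw [star_trivial, sub_mulVec, dotProduct_sub]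
    exact sub_nonneg.2 hle

theorem exists_forall_hess_eq : ∃ A, ∀ x, S.hess x = A := by
  obtain ⟨A, hA, hle⟩ := S.exists_mem_closure_range_hess_posSemidef_sub
  obtain ⟨hsymm, him, hre⟩ := S.phaseDet_of_mem_closure_range_hess hA
  have himH (x : 𝔼 n) : (phaseDet S.phase (S.hess x)).im = 0 := by
    rw [S.phaseDet_hess, Complex.ofReal_im]
  have hnear := eventually_eq_of_posSemidef_sub hsymm him (zero_lt_one.trans_le hre)
  have hcont := S.contDiff_hess.continuous
  have hopen : IsOpen {x | S.hess x = A} := isOpen_iff_mem_nhds.2 fun x hx => by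
    filter_upwards [(hcont.tendsto' x A hx).eventually hnear] with y hy using hy (himH y) (hle y)
  have hne : {x | S.hess x = A}.Nonempty := by
    obtain ⟨_, ⟨x, rfl⟩, hx⟩ := ((mem_closure_iff_frequently.1 hA).and_eventually hnear).exists
    exact ⟨x, hx (himH x) (hle x)⟩
  have huniv := IsClopen.eq_univ ⟨isClosed_eq hcont continuous_const, hopen⟩ hne
  exact ⟨A, eq_univ_iff_forall.1 huniv⟩

end SpecialLagrangianGraph

/-! ### Global inverses of strongly monotone maps -/

section StronglyMonotone

variable {E : Type*} [NormedAddCommGroup E] [InnerProductSpace ℝ E] {X : E → E} {m : ℝ}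

theorem mul_norm_sq_le_inner_sub_of_fderiv (hX : Differentiable ℝ X)
    (hmono : ∀ x v, m * ‖v‖ ^ 2 ≤ inner ℝ (fderiv ℝ X x v) v) (a b : E) :
    m * ‖a - b‖ ^ 2 ≤ inner ℝ (X a - X b) (a - b) := by
  have hderiv (t : ℝ) : HasDerivAt (fun t : ℝ => inner ℝ (X (b + t • (a - b))) (a - b))
      (inner ℝ (fderiv ℝ X (b + t • (a - b)) (a - b)) (a - b)) t := by
    have hline : HasDerivAt (fun t : ℝ => b + t • (a - b)) (a - b) t := by
      simpa using ((hasDerivAt_id t).smul_const (a - b)).const_add b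
    simpa using ((hX _).hasFDerivAt.comp_hasDerivAt t hline).inner ℝ (hasDerivAt_const t (a - b))
  have hle := mul_sub_le_image_sub_of_le_deriv (fun t => (hderiv t).differentiableAt)
    (C := m * ‖a - b‖ ^ 2) (fun t => (hderiv t).deriv ▸ hmono _ _) zero_le_one
  simpa [inner_sub_left] using hle

theorem antilipschitzWith_of_mul_norm_sq_le_inner_sub (hm : 0 < m)
    (hmono : ∀ a b, m * ‖a - b‖ ^ 2 ≤ inner ℝ (X a - X b) (a - b)) :
    AntilipschitzWith (Real.toNNReal m⁻¹) X := by
  refine AntilipschitzWith.of_le_mul_dist fun a b => ?_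
  rw [Real.coe_toNNReal _ (inv_nonneg.2 hm.le), dist_eq_norm, dist_eq_norm, inv_mul_eq_div,
    le_div_iff₀ hm]
  rcases (norm_nonneg (a - b)).eq_or_lt with hzero | hpos
  · rw [← hzero, zero_mul]
    exact norm_nonneg _
  · have hle := (hmono a b).trans (real_inner_le_norm _ _)
    nlinarith

theorem surjective_of_isOpenMap_of_antilipschitzWith [ProperSpace E] {K : NNReal}
    (hcont : Continuous X) (hopen : IsOpenMap X) (hanti : AntilipschitzWith K X) :
    Function.Surjective X := by
  have hproper : IsProperMap X := by
    rw [isProperMap_iff_tendsto_cocompact, ← Metric.cobounded_eq_cocompact]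
    exact ⟨hcont, hanti.tendsto_cobounded⟩
  rw [← range_eq_univ]
  exact IsClopen.eq_univ ⟨hproper.isClosedMap.isClosed_range, hopen.isOpen_range⟩ (range_nonempty X)

theorem exists_contDiff_inverse_of_mul_norm_sq_le_inner_fderiv [FiniteDimensional ℝ E]
    (hX : ContDiff ℝ ∞ X) (hm : 0 < m)
    (hmono : ∀ x v, m * ‖v‖ ^ 2 ≤ inner ℝ (fderiv ℝ X x v) v) :
    ∃ Y : E → E, ContDiff ℝ ∞ Y ∧ Function.LeftInverse Y X ∧ Function.RightInverse Y X := by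
  have hd : Differentiable ℝ X := hX.differentiable (by simp)
  have hanti := antilipschitzWith_of_mul_norm_sq_le_inner_sub hm
    (mul_norm_sq_le_inner_sub_of_fderiv hd hmono)
  have hinj (x : E) : Function.Injective (fderiv ℝ X x : E →ₗ[ℝ] E) :=
    (antilipschitzWith_of_mul_norm_sq_le_inner_sub (X := fderiv ℝ X x) hm fun a b => by
      rw [← map_sub]
      exact hmono x (a - b)).injective
  let X' (x : E) : E ≃L[ℝ] E := (LinearEquiv.ofInjectiveEndo _ (hinj x)).toContinuousLinearEquiv
  have hX' (x : E) : HasFDerivAt X (X' x : E →L[ℝ] E) x := (hd x).hasFDerivAt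
  have hopen : IsOpenMap X := isOpenMap_iff_nhds_le.2 fun x =>
    ((hX.contDiffAt.hasStrictFDerivAt' (hX' x) (by simp)).map_nhds_eq_of_equiv).ge
  have hsurj := surjective_of_isOpenMap_of_antilipschitzWith hd.continuous hopen hanti
  let e : E ≃ₜ E := (Equiv.ofBijective X ⟨hanti.injective, hsurj⟩).toHomeomorphOfContinuousOpen
    hd.continuous hopen
  exact ⟨e.symm, e.contDiff_symm (f₀' := X') hX' hX, e.symm_apply_apply, e.apply_symm_apply⟩

end StronglyMonotone

/-! ### Jacobian matrices -/

section Jacobian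

variable {F G : 𝔼 n → 𝔼 n} {x : 𝔼 n}

/-- The Jacobian matrix of a self-map of Euclidean space. -/
noncomputable def jacobian (F : 𝔼 n → 𝔼 n) (x : 𝔼 n) : Matrix (Fin n) (Fin n) ℝ :=
  of fun i j => pderiv j (fun y => F y i) x

theorem fderiv_apply_eq_jacobian_mulVec (hF : DifferentiableAt ℝ F x) (v : 𝔼 n) (i : Fin n) :
    fderiv ℝ F x v i = (jacobian F x *ᵥ v) i := by
  have hproj : fderiv ℝ (fun y => F y i) x v = fderiv ℝ F x v i :=
    DFunLike.congr_fun ((EuclideanSpace.proj i : 𝔼 n →L[ℝ] ℝ).hasFDerivAt.comp x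
      hF.hasFDerivAt).fderiv v
  rw [← hproj, fderiv_apply_eq_sum_pderiv]
  exact Finset.sum_congr rfl fun k _ => mul_comm _ _

theorem inner_fderiv_eq_dotProduct_jacobian_mulVec (hF : DifferentiableAt ℝ F x) (v : 𝔼 n) :
    inner ℝ (fderiv ℝ F x v) v = v ⬝ᵥ (jacobian F x *ᵥ v) := by
  rw [PiLp.inner_apply]
  exact Finset.sum_congr rfl fun i _ => by rw [fderiv_apply_eq_jacobian_mulVec hF]; rfl

theorem jacobian_comp (hG : DifferentiableAt ℝ G (F x)) (hF : DifferentiableAt ℝ F x) :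
    jacobian (G ∘ F) x = jacobian G (F x) * jacobian F x := by
  ext i j
  have hFcol (k : Fin n) : fderiv ℝ F x (EuclideanSpace.single j 1) k = jacobian F x k j := by
    rw [fderiv_apply_eq_jacobian_mulVec hF]
    simp
  have hcomp : jacobian (G ∘ F) x i j =
      fderiv ℝ G (F x) (fderiv ℝ F x (EuclideanSpace.single j 1)) i :=
    DFunLike.congr_fun ((EuclideanSpace.proj i : 𝔼 n →L[ℝ] ℝ).hasFDerivAt.comp x
      (hG.hasFDerivAt.comp x hF.hasFDerivAt)).fderiv _
  rw [hcomp, fderiv_apply_eq_jacobian_mulVec hG, mulVec, dotProduct, Matrix.mul_apply]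
  exact Finset.sum_congr rfl fun k _ => by rw [hFcol]

theorem jacobian_id : jacobian (id : 𝔼 n → 𝔼 n) x = 1 := by
  ext i j
  simp [jacobian, pderiv_coord, Matrix.one_apply, eq_comm]

theorem jacobian_mul_jacobian_eq_one (hG : Differentiable ℝ G) (hF : Differentiable ℝ F)
    (hGF : Function.RightInverse F G) (x : 𝔼 n) : jacobian G (F x) * jacobian F x = 1 := by
  rw [← jacobian_comp (hG _) (hF x), hGF.comp_eq_id, jacobian_id]

end Jacobian

/-! ### Functions with constant Hessian -/

section Quadratic

variable {u : 𝔼 n → ℝ}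

theorem hessianMatrix_apply (u : 𝔼 n → ℝ) (x : 𝔼 n) (i j : Fin n) :
    hessianMatrix u x i j = pderiv i (pderiv j u) x := rfl

theorem isSymm_hessianMatrix (hu : ContDiff ℝ 2 u) (x : 𝔼 n) : (hessianMatrix u x).IsSymm := by
  ext i j
  exact pderiv_comm hu j i x

theorem pderiv_sum_mul_coord (b : Fin n → ℝ) (k : Fin n) (x : 𝔼 n) :
    pderiv k (fun y : 𝔼 n => ∑ i, b i * y i) x = b k := by
  rw [pderiv_sum k _ fun i _ => by fun_prop]
  simp [pderiv_const_mul k ((contDiff_coord _).differentiable (by simp) x), pderiv_coord]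

theorem pderiv_half_sum_mul_coord_mul_coord {A : Matrix (Fin n) (Fin n) ℝ} (hA : A.IsSymm)
    (k : Fin n) (x : 𝔼 n) :
    pderiv k (fun y : 𝔼 n => 1 / 2 * ∑ i, ∑ j, A i j * y i * y j) x = ∑ j, A j k * x j := by
  have hrow (i : Fin n) : pderiv k (fun y : 𝔼 n => y i * ∑ j, A i j * y j) x =
      (if k = i then 1 else 0) * ∑ j, A i j * x j + x i * A i k := by
    rw [pderiv_mul k (by fun_prop) (by fun_prop), pderiv_coord, pderiv_sum_mul_coord]
  have hfactor (y : 𝔼 n) : ∑ i, ∑ j, A i j * y i * y j = ∑ i, y i * ∑ j, A i j * y j := by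
    simp only [Finset.mul_sum]
    exact Finset.sum_congr rfl fun i _ => Finset.sum_congr rfl fun j _ => by ring
  simp only [hfactor]
  rw [pderiv_const_mul k (by fun_prop), pderiv_sum k _ fun i _ => by fun_prop]
  simp only [hrow, Finset.sum_add_distrib, ite_mul, one_mul, zero_mul, Finset.sum_ite_eq,
    Finset.mem_univ, if_true, hA.apply k, mul_comm (x _)]
  ring

theorem isQuadraticPoly_of_hessianMatrix_eq_const (hu : ContDiff ℝ 2 u)
    {A : Matrix (Fin n) (Fin n) ℝ} (hA : ∀ x, hessianMatrix u x = A) : IsQuadraticPoly u := by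
  have hsymm : A.IsSymm := hA 0 ▸ isSymm_hessianMatrix hu 0
  have hd : Differentiable ℝ u := hu.differentiable (by simp)
  have hdgrad (k : Fin n) : Differentiable ℝ (pderiv k u) :=
    (contDiff_pderiv (m := 1) hu (by norm_num) k).differentiable (by simp)
  have hgrad (k : Fin n) (x : 𝔼 n) : pderiv k u x = ∑ j, A j k * x j + pderiv k u 0 := by
    have hconst := eq_const_of_pderiv_eq_zero
      (f := fun y => pderiv k u y - ∑ j, A j k * y j) (by fun_prop) (fun l y => by
        rw [pderiv_sub l (by fun_prop) (by fun_prop), pderiv_sum_mul_coord, ← hessianMatrix_apply,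
          hA, sub_self]) x 0
    simp only [PiLp.zero_apply, mul_zero, Finset.sum_const_zero, sub_zero] at hconst
    linarith
  refine ⟨A, fun k => pderiv k u 0, u 0, hsymm, fun x => ?_⟩
  have hconst := eq_const_of_pderiv_eq_zero (f := fun y => u y -
    1 / 2 * (∑ i, ∑ j, A i j * y i * y j) - ∑ k, pderiv k u 0 * y k) (by fun_prop) (fun k y => by
      rw [pderiv_sub k (by fun_prop) (by fun_prop), pderiv_sub k (by fun_prop) (by fun_prop),
        pderiv_sum_mul_coord, pderiv_half_sum_mul_coord_mul_coord hsymm, hgrad k y]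
      ring) x 0
  simp only [PiLp.zero_apply, mul_zero, Finset.sum_const_zero, sub_zero] at hconst
  linarith

theorem hessianMatrix_neg (u : 𝔼 n → ℝ) (x : 𝔼 n) :
    hessianMatrix (fun y => -u y) x = -hessianMatrix u x := by
  ext i j
  simp [hessianMatrix, fderiv_fun_neg]

theorem isQuadraticPoly_of_neg (h : IsQuadraticPoly fun x => -u x) : IsQuadraticPoly u := by
  obtain ⟨A, b, c, hA, hquad⟩ := h
  refine ⟨-A, -b, -c, hA.neg, fun x => ?_⟩
  simp only [Matrix.neg_apply, Pi.neg_apply, neg_mul, Finset.sum_neg_distrib]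
  linarith [hquad x]

end Quadratic

/-! ### Rotation of the gradient graph -/

section Angles

variable {ι : Type*} [Fintype ι] {θ : ι → ℝ} {α : ℝ}

theorem abs_sub_le_of_supercritical (hθ : ∀ i, |θ i| < π / 2)
    (hsum : ((Fintype.card ι : ℝ) - 2) * π / 2 + 2 * α ≤ ∑ i, θ i) (i : ι) :
    |θ i - α| ≤ π / 2 - α := by
  have hle : π / 2 - θ i ≤ ∑ j, (π / 2 - θ j) :=
    Finset.single_le_sum (fun j _ => sub_nonneg.2 (abs_lt.1 (hθ j)).2.le) (Finset.mem_univ i)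
  rw [sum_pi_div_two_sub] at hle
  rw [abs_le]
  constructor <;> linarith [(abs_lt.1 (hθ i)).2]

theorem sin_le_cos_of_abs_le {t : ℝ} (hα : 0 < α) (ht : |t| ≤ π / 2 - α) : sin α ≤ cos t := by
  rw [← cos_pi_div_two_sub, ← cos_abs t]
  exact cos_le_cos_of_nonneg_of_le_pi (abs_nonneg t) (by linarith [pi_pos]) ht

namespace IsAngles

variable [DecidableEq ι] {H U D : Matrix ι ι ℝ}

theorem cos_smul_one_add_sin_smul (h : IsAngles H U θ) (α : ℝ) :
    cos α • (1 : Matrix ι ι ℝ) + sin α • H =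
      conjDiagonal U fun i => cos (θ i - α) / cos (θ i) := by
  rw [h.eq_conjDiagonal, ← conjDiagonal_one h.mul_transpose_eq_one, smul_conjDiagonal,
    smul_conjDiagonal, conjDiagonal_add]
  congr 1
  funext i
  have := (h.cos_pos i).ne'
  rw [tan_eq_sin_div_cos, cos_sub]
  field_simp

theorem rotate (h : IsAngles H U θ) (hα : sin α ≠ 0) (hθ : ∀ i, |θ i - α| < π / 2)
    (hD : (cos α • (1 : Matrix ι ι ℝ) + sin α • H) * D = 1) :
    IsAngles ((sin α)⁻¹ • (cos α • (1 : Matrix ι ι ℝ) - D)) U fun i => θ i - α := by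
  have hcos (i : ι) : cos (θ i - α) ≠ 0 := (cos_pos_of_mem_Ioo (abs_lt.1 (hθ i))).ne'
  have hD' : D = conjDiagonal U fun i => cos (θ i) / cos (θ i - α) := by
    refine (left_inv_eq_right_inv ?_ hD).symm
    rw [h.cos_smul_one_add_sin_smul, conjDiagonal_mul h.mul_transpose_eq_one,
      ← conjDiagonal_one h.mul_transpose_eq_one]
    congr 1
    funext i
    rw [div_mul_div_cancel₀ (hcos i), div_self (h.cos_pos i).ne']
  refine ⟨h.mul_transpose_eq_one, ?_, hθ⟩
  rw [hD', ← conjDiagonal_one h.mul_transpose_eq_one, sub_eq_add_neg, ← neg_one_smul ℝ,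
    smul_conjDiagonal, smul_conjDiagonal, conjDiagonal_add, smul_conjDiagonal]
  congr 1
  funext i
  have hadd : cos (θ i) = cos (θ i - α) * cos α - sin (θ i - α) * sin α := by
    rw [← cos_add, sub_add_cancel]
  have := hcos i
  rw [tan_eq_sin_div_cos, hadd]
  field_simp
  ring

end IsAngles

end Angles

section LewyRotation

variable {u : 𝔼 n → ℝ} {α Θ : ℝ}

/-- The first component of the gradient graph `(x, ∇u x)` after its rotation by the angle `-α` in
each coordinate plane `(xᵢ, pᵢ)`. -/
noncomputable def lewyMap (α : ℝ) (u : 𝔼 n → ℝ) (x : 𝔼 n) : 𝔼 n :=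
  WithLp.toLp 2 fun i => cos α * x i + sin α * pderiv i u x

theorem contDiff_lewyMap (hu : ContDiff ℝ ∞ u) : ContDiff ℝ ∞ (lewyMap α u) :=
  contDiff_euclidean.2 fun i =>
    (contDiff_const.mul (contDiff_coord i)).add (contDiff_const.mul (contDiff_infty_pderiv hu i))

theorem jacobian_lewyMap (hu : ContDiff ℝ 2 u) (x : 𝔼 n) :
    jacobian (lewyMap α u) x =
      cos α • (1 : Matrix (Fin n) (Fin n) ℝ) + sin α • hessianMatrix u x := by
  ext i j
  have hdgrad : DifferentiableAt ℝ (pderiv i u) x :=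
    (contDiff_pderiv (m := 1) hu (by norm_num) i).differentiable (by simp) x
  have hdcoord : DifferentiableAt ℝ (fun y : 𝔼 n => y i) x := by fun_prop
  rw [← (isSymm_hessianMatrix hu x).eq]
  change pderiv j (fun y => cos α * y i + sin α * pderiv i u y) x = _
  rw [pderiv_add j (hdcoord.const_mul _) (hdgrad.const_mul _), pderiv_const_mul j hdcoord,
    pderiv_const_mul j hdgrad, pderiv_coord]
  simp [hessianMatrix_apply, Matrix.one_apply, eq_comm]

theorem sin_mul_norm_sq_le_inner_fderiv_lewyMap (hu : ContDiff ℝ ∞ u) (hα : 0 < α)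
    (hsin : 0 ≤ sin α) {x : 𝔼 n} {U : Matrix (Fin n) (Fin n) ℝ} {θ : Fin n → ℝ}
    (h : IsAngles (hessianMatrix u x) U θ) (hθ : ∀ i, |θ i - α| ≤ π / 2 - α) (v : 𝔼 n) :
    sin α * ‖v‖ ^ 2 ≤ inner ℝ (fderiv ℝ (lewyMap α u) x v) v := by
  rw [inner_fderiv_eq_dotProduct_jacobian_mulVec
    ((contDiff_lewyMap hu).differentiable (by simp) x), jacobian_lewyMap (hu.of_le (by norm_cast)),
    h.cos_smul_one_add_sin_smul, EuclideanSpace.real_norm_sq_eq]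
  refine mul_sum_sq_le_dotProduct_conjDiagonal_mulVec h.mul_transpose_eq_one (fun i => ?_) v
  rw [le_div_iff₀ (h.cos_pos i)]
  exact (mul_le_of_le_one_right hsin (cos_le_one _)).trans (sin_le_cos_of_abs_le hα (hθ i))

theorem pderiv_inv_sin_mul_cos_mul_coord_sub {Y : 𝔼 n → 𝔼 n} (hY : Differentiable ℝ Y)
    (z : 𝔼 n) : (of fun i j => pderiv j (fun z => (sin α)⁻¹ * (cos α * z i - Y z i)) z) =
      (sin α)⁻¹ • (cos α • (1 : Matrix (Fin n) (Fin n) ℝ) - jacobian Y z) := by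
  ext i j
  rw [of_apply, pderiv_const_mul j (by fun_prop), pderiv_sub j (by fun_prop) (by fun_prop),
    pderiv_const_mul j (by fun_prop), pderiv_coord]
  simp [jacobian, Matrix.one_apply, eq_comm]

theorem exists_specialLagrangianGraph_of_rightInverse_lewyMap (hu : ContDiff ℝ ∞ u) (hα : 0 < α)
    (hsin : 0 < sin α) (hΘ : ((n : ℝ) - 2) * π / 2 + n * α < Θ)
    (hangle : ∀ x, ∃ U θ, IsAngles (hessianMatrix u x) U θ ∧ (∀ i, |θ i - α| ≤ π / 2 - α) ∧
      ∑ i, θ i = Θ)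
    {Y : 𝔼 n → 𝔼 n} (hY : ContDiff ℝ ∞ Y) (hXY : Function.RightInverse Y (lewyMap α u)) :
    ∃ S : SpecialLagrangianGraph n, ∀ z,
      S.hess z = (sin α)⁻¹ • (cos α • (1 : Matrix (Fin n) (Fin n) ℝ) - jacobian Y z) := by
  have hdY : Differentiable ℝ Y := hY.differentiable (by simp)
  refine ⟨{
    phase := Θ - n * α
    lt_phase := by linarith
    grad := fun i z => (sin α)⁻¹ * (cos α * z i - Y z i)
    contDiff_grad := fun i => contDiff_const.mul
      ((contDiff_const.mul (contDiff_coord i)).sub (contDiff_euclidean.1 hY i))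
    cosBound := sin α
    cosBound_pos := hsin
    exists_isAngles := fun z => ?_ }, pderiv_inv_sin_mul_cos_mul_coord_sub hdY⟩
  obtain ⟨U, θ, h, hθ, hsum⟩ := hangle (Y z)
  refine ⟨U, fun i => θ i - α, ?_, fun i => sin_le_cos_of_abs_le hα (hθ i), ?_⟩
  · rw [pderiv_inv_sin_mul_cos_mul_coord_sub hdY]
    refine h.rotate hsin.ne' (fun i => (hθ i).trans_lt (by linarith)) ?_
    rw [← jacobian_lewyMap (hu.of_le (by norm_cast))]
    exact jacobian_mul_jacobian_eq_one ((contDiff_lewyMap hu).differentiable (by simp)) hdY hXY z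
  · rw [Finset.sum_sub_distrib, hsum]
    simp

theorem exists_forall_hessianMatrix_eq (hu : ContDiff ℝ ∞ u) (hα : 0 < α) (hsin : 0 < sin α)
    (hΘ : ((n : ℝ) - 2) * π / 2 + n * α < Θ)
    (hangle : ∀ x, ∃ U θ, IsAngles (hessianMatrix u x) U θ ∧ (∀ i, |θ i - α| ≤ π / 2 - α) ∧
      ∑ i, θ i = Θ) :
    ∃ A, ∀ x, hessianMatrix u x = A := by
  have hX := contDiff_lewyMap (α := α) hu
  have hmono (x v : 𝔼 n) : sin α * ‖v‖ ^ 2 ≤ inner ℝ (fderiv ℝ (lewyMap α u) x v) v := by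
    obtain ⟨U, θ, h, hθ, -⟩ := hangle x
    exact sin_mul_norm_sq_le_inner_fderiv_lewyMap hu hα hsin.le h hθ v
  obtain ⟨Y, hY, hYX, hXY⟩ := exists_contDiff_inverse_of_mul_norm_sq_le_inner_fderiv hX hsin hmono
  obtain ⟨S, hS⟩ :=
    exists_specialLagrangianGraph_of_rightInverse_lewyMap hu hα hsin hΘ hangle hY hXY
  obtain ⟨B, hB⟩ := S.exists_forall_hess_eq
  have hjacY (z : 𝔼 n) : jacobian Y z = jacobian Y 0 := by
    have hz := (hS z).symm.trans ((hB z).trans ((hB 0).symm.trans (hS 0)))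
    exact sub_right_injective (smul_right_injective _ (inv_ne_zero hsin.ne') hz)
  have hinv (x : 𝔼 n) : (cos α • (1 : Matrix (Fin n) (Fin n) ℝ) + sin α • hessianMatrix u x) *
      jacobian Y 0 = 1 := by
    rw [← jacobian_lewyMap (hu.of_le (by norm_cast)), ← hjacY (lewyMap α u x)]
    nth_rw 1 [← hYX x]
    exact jacobian_mul_jacobian_eq_one (hX.differentiable (by simp)) (hY.differentiable (by simp))
      hXY _
  refine ⟨hessianMatrix u 0, fun x => ?_⟩
  have hx := left_inv_eq_right_inv (hinv x) (mul_eq_one_comm.1 (hinv 0))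
  exact smul_right_injective _ hsin.ne' (add_right_injective _ hx)

theorem isQuadraticPoly_of_lt_sum_angles (hu : ContDiff ℝ ∞ u) (hΘ : ((n : ℝ) - 2) * π / 2 < Θ)
    (hangle : ∀ x, ∃ U θ, IsAngles (hessianMatrix u x) U θ ∧ ∑ i, θ i = Θ) :
    IsQuadraticPoly u := by
  have hΘ_le : Θ ≤ n * (π / 2) := by
    obtain ⟨U, θ, h, hsum⟩ := hangle 0
    have hle := Finset.sum_le_card_nsmul Finset.univ θ (π / 2) fun i _ =>
      (abs_lt.1 (h.abs_lt_pi_div_two i)).2.le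
    rwa [hsum, nsmul_eq_mul, Finset.card_univ, Fintype.card_fin] at hle
  obtain ⟨α, hαdef⟩ : ∃ α, (2 * (n + 1)) * α = Θ - ((n : ℝ) - 2) * π / 2 :=
    ⟨(Θ - ((n : ℝ) - 2) * π / 2) / (2 * (n + 1)), by field_simp⟩
  have hα : 0 < α := pos_of_mul_pos_right (hαdef ▸ sub_pos.2 hΘ) (by positivity)
  have hnα : 0 ≤ n * α := by positivity
  have hsin : 0 < sin α := sin_pos_of_pos_of_lt_pi hα (by linarith [pi_pos])
  obtain ⟨A, hA⟩ := exists_forall_hessianMatrix_eq hu hα hsin (Θ := Θ) (by linarith) fun x => by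
    obtain ⟨U, θ, h, hsum⟩ := hangle x
    refine ⟨U, θ, h, abs_sub_le_of_supercritical h.abs_lt_pi_div_two ?_, hsum⟩
    rw [hsum, Fintype.card_fin]
    linarith
  exact isQuadraticPoly_of_hessianMatrix_eq_const (hu.of_le (by norm_cast)) hA

end LewyRotation

end SpecialLagrangian

/-- Yuan's rigidity theorem for the special Lagrangian equation with large phase
`|Θ| > (n−2)π/2`: entire smooth solutions are quadratic polynomials. -/
theorem yuan_rigidity_special_lagrangian (n : ℕ) (hn : 2 ≤ n) (Θ : ℝ)
    (hΘ : ((n : ℝ) - 2) * Real.pi / 2 < |Θ|)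
    (u : EuclideanSpace ℝ (Fin n) → ℝ)
    (hu : ContDiff ℝ (⊤ : ℕ∞) u)
    (hsym : ∀ x, (hessianMatrix u x).IsHermitian)
    (hSL : ∀ x, ∑ i, Real.arctan ((hsym x).eigenvalues i) = Θ) :
    IsQuadraticPoly u := by
  have hangle (x) := SpecialLagrangian.isAngles_arctan_eigenvalues (hsym x)
  rcases le_total 0 Θ with hpos | hneg
  · rw [abs_of_nonneg hpos] at hΘ
    exact SpecialLagrangian.isQuadraticPoly_of_lt_sum_angles hu hΘ
      fun x => ⟨_, _, hangle x, hSL x⟩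
  · rw [abs_of_nonpos hneg] at hΘ
    refine SpecialLagrangian.isQuadraticPoly_of_neg
      (SpecialLagrangian.isQuadraticPoly_of_lt_sum_angles hu.neg hΘ fun x => ?_)
    rw [SpecialLagrangian.hessianMatrix_neg]
    exact ⟨_, _, (hangle x).neg, by rw [Finset.sum_neg_distrib, hSL x]⟩
end

section
/- (Convexity of the level sets of ∑ arctan) Let n ≥ 2 and let x ∈ ℝⁿ satisfy ∑_{i=1}^n arctan(xᵢ) ≥ (n−2)π/2. Then for every z ∈ ℝⁿ with ∑_{i=1}^n zᵢ(1+xᵢ²)^{-1} = 0, one has ∑_{i=1}^n xᵢ zᵢ² (1+xᵢ²)^{-2} ≥ 0. -/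
open Real

/-!
Put `θᵢ = π/2 - arctan xᵢ` and `wᵢ = zᵢ / (1 + xᵢ²)`. Then `xᵢ = cot θᵢ` with `θᵢ > 0` and
`∑ θᵢ ≤ π`, and the claim is that `∑ cot θᵢ wᵢ² ≥ 0` whenever `∑ wᵢ = 0`. The two-term inequality
`cot (a + b) (u + v)² ≤ cot a u² + cot b v²` merges all the terms but one into a single term;
as `∑ wᵢ = 0`, the two terms that remain add up to `(cot a + cot b) u²` with `a + b ≤ π`, and
`cot a + cot b = sin (a + b) / (sin a sin b)`.
-/

theorem cot_pi_div_two_sub_arctan (x : ℝ) : cot (π / 2 - arctan x) = x := by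
  rw [cot_eq_cos_div_sin, cos_pi_div_two_sub, sin_pi_div_two_sub, ← tan_eq_sin_div_cos, tan_arctan]

section TwoAngles

variable {a b : ℝ}

theorem cot_add_cot (ha : sin a ≠ 0) (hb : sin b ≠ 0) :
    cot a + cot b = sin (a + b) / (sin a * sin b) := by
  rw [cot_eq_cos_div_sin, cot_eq_cos_div_sin, sin_add]
  field_simp
  ring

theorem cot_sub_cot (ha : sin a ≠ 0) (hb : sin b ≠ 0) :
    cot a - cot b = sin (b - a) / (sin a * sin b) := by
  rw [cot_eq_cos_div_sin, cot_eq_cos_div_sin, sin_sub]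
  field_simp

theorem cot_add_cot_nonneg (ha : 0 < a) (hb : 0 < b) (hab : a + b ≤ π) :
    0 ≤ cot a + cot b := by
  have hsin_a : 0 < sin a := sin_pos_of_pos_of_lt_pi ha (by linarith)
  have hsin_b : 0 < sin b := sin_pos_of_pos_of_lt_pi hb (by linarith)
  have hsin_add : 0 ≤ sin (a + b) := sin_nonneg_of_nonneg_of_le_pi (by linarith) hab
  rw [cot_add_cot hsin_a.ne' hsin_b.ne']
  positivity

theorem cot_mul_sq_add_cot_mul_sq_sub_cot_add_mul_sq (ha : sin a ≠ 0) (hb : sin b ≠ 0)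
    (hab : sin (a + b) ≠ 0) (u v : ℝ) :
    cot a * u ^ 2 + cot b * v ^ 2 - cot (a + b) * (u + v) ^ 2 =
      ((u * sin b - cos (a + b) * (v * sin a)) ^ 2 + (sin (a + b) * (v * sin a)) ^ 2) /
        (sin a * sin b * sin (a + b)) := by
  have cot_sub_left : cot a - cot (a + b) = sin b / (sin a * sin (a + b)) := by
    rw [cot_sub_cot ha hab, add_sub_cancel_left]
  have cot_sub_right : cot b - cot (a + b) = sin a / (sin b * sin (a + b)) := by
    rw [cot_sub_cot hb hab, add_sub_cancel_right]
  calc cot a * u ^ 2 + cot b * v ^ 2 - cot (a + b) * (u + v) ^ 2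
      = (cot a - cot (a + b)) * u ^ 2 + (cot b - cot (a + b)) * v ^ 2
          - 2 * cot (a + b) * u * v := by ring
    _ = ((u * sin b) ^ 2 + (v * sin a) ^ 2 - 2 * cos (a + b) * (u * sin b) * (v * sin a)) /
          (sin a * sin b * sin (a + b)) := by
        rw [cot_sub_left, cot_sub_right, cot_eq_cos_div_sin]
        field_simp
    _ = _ := by
        congr 1
        linear_combination -(v * sin a) ^ 2 * sin_sq_add_cos_sq (a + b)

theorem cot_add_mul_sq_le (ha : 0 < a) (hb : 0 < b) (hab : a + b < π) (u v : ℝ) :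
    cot (a + b) * (u + v) ^ 2 ≤ cot a * u ^ 2 + cot b * v ^ 2 := by
  have hsin_a : 0 < sin a := sin_pos_of_pos_of_lt_pi ha (by linarith)
  have hsin_b : 0 < sin b := sin_pos_of_pos_of_lt_pi hb (by linarith)
  have hsin_add : 0 < sin (a + b) := sin_pos_of_pos_of_lt_pi (by linarith) hab
  rw [← sub_nonneg,
    cot_mul_sq_add_cot_mul_sq_sub_cot_add_mul_sq hsin_a.ne' hsin_b.ne' hsin_add.ne']
  positivity

end TwoAngles

section FinitelyManyAngles

variable {ι : Type*} {s : Finset ι} {θ : ι → ℝ}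

theorem cot_sum_mul_sq_le (hθ_pos : ∀ i ∈ s, 0 < θ i) (hθ_sum : ∑ i ∈ s, θ i < π)
    (w : ι → ℝ) :
    cot (∑ i ∈ s, θ i) * (∑ i ∈ s, w i) ^ 2 ≤ ∑ i ∈ s, cot (θ i) * w i ^ 2 := by
  rcases s.eq_empty_or_nonempty with rfl | hs
  · simp
  induction hs using Finset.Nonempty.cons_induction with
  | singleton k => simp
  | cons k t _ ht ih =>
    rw [Finset.forall_mem_cons] at hθ_pos
    obtain ⟨hθk_pos, hθt_pos⟩ := hθ_pos
    simp only [Finset.sum_cons] at hθ_sum ⊢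
    have hθt_sum_pos : 0 < ∑ i ∈ t, θ i := Finset.sum_pos hθt_pos ht
    calc cot (θ k + ∑ i ∈ t, θ i) * (w k + ∑ i ∈ t, w i) ^ 2
        ≤ cot (θ k) * w k ^ 2 + cot (∑ i ∈ t, θ i) * (∑ i ∈ t, w i) ^ 2 :=
          cot_add_mul_sq_le hθk_pos hθt_sum_pos hθ_sum _ _
      _ ≤ cot (θ k) * w k ^ 2 + ∑ i ∈ t, cot (θ i) * w i ^ 2 := by
          gcongr
          exact ih hθt_pos (by linarith)

theorem sum_cot_mul_sq_nonneg (hθ_pos : ∀ i ∈ s, 0 < θ i) (hθ_sum : ∑ i ∈ s, θ i ≤ π)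
    {w : ι → ℝ} (hw : ∑ i ∈ s, w i = 0) : 0 ≤ ∑ i ∈ s, cot (θ i) * w i ^ 2 := by
  rcases s.eq_empty_or_nonempty with rfl | hs
  · simp
  cases hs using Finset.Nonempty.cons_induction with
  | singleton k => simp_all
  | cons k t _ ht =>
    rw [Finset.forall_mem_cons] at hθ_pos
    obtain ⟨hθk_pos, hθt_pos⟩ := hθ_pos
    rw [Finset.sum_cons] at hθ_sum hw ⊢
    have hwt : ∑ i ∈ t, w i = -w k := by linarith
    calc 0 ≤ (cot (θ k) + cot (∑ i ∈ t, θ i)) * w k ^ 2 :=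
          mul_nonneg (cot_add_cot_nonneg hθk_pos (Finset.sum_pos hθt_pos ht) hθ_sum) (sq_nonneg _)
      _ = cot (θ k) * w k ^ 2 + cot (∑ i ∈ t, θ i) * (∑ i ∈ t, w i) ^ 2 := by rw [hwt]; ring
      _ ≤ cot (θ k) * w k ^ 2 + ∑ i ∈ t, cot (θ i) * w i ^ 2 := by
          gcongr
          exact cot_sum_mul_sq_le hθt_pos (by linarith) w

end FinitelyManyAngles

/-- Convexity of the level sets of `x ↦ ∑ arctan xᵢ` above height `(n−2)π/2`:
for tangent vectors `z`, the quantity `−(1/2)D²H(z,z)` is nonnegative. -/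
theorem arctan_level_set_convexity (n : ℕ) (hn : 2 ≤ n) (x : Fin n → ℝ)
    (hx : ((n : ℝ) - 2) * Real.pi / 2 ≤ ∑ i, Real.arctan (x i))
    (z : Fin n → ℝ) (hz : ∑ i, z i * (1 + x i ^ 2)⁻¹ = 0) :
    0 ≤ ∑ i, x i * z i ^ 2 * ((1 + x i ^ 2) ^ 2)⁻¹ := by
  have hθ_pos : ∀ i ∈ Finset.univ, 0 < π / 2 - arctan (x i) := fun i _ =>
    sub_pos.2 (arctan_lt_pi_div_two (x i))
  have hθ_sum : ∑ i, (π / 2 - arctan (x i)) ≤ π := by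
    rw [Finset.sum_sub_distrib, Fin.sum_const, nsmul_eq_mul]
    linarith
  calc 0 ≤ ∑ i, cot (π / 2 - arctan (x i)) * (z i * (1 + x i ^ 2)⁻¹) ^ 2 :=
        sum_cot_mul_sq_nonneg hθ_pos hθ_sum hz
    _ = ∑ i, x i * z i ^ 2 * ((1 + x i ^ 2) ^ 2)⁻¹ := by
        simp only [cot_pi_div_two_sub_arctan, mul_pow, inv_pow, mul_assoc]
end

section
/- Let n ≥ 2 and let x ∈ ℝⁿ satisfy ∑_{i=1}^n arctan(xᵢ) ≥ (n−2)π/2, and suppose that xₙ = min_i xᵢ < 0. Then xᵢ > 0 for every i ≠ n, and ∑_{i=1}^n xᵢ^{-1} ≤ 0. -/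
open Real

/-!
Let `x k < 0`. Pairing `k` with any other index `i` and bounding the remaining `n - 2` arctangents
by `π / 2` gives `0 ≤ arctan (x i) + arctan (x k)`, so `x i ≥ -x k > 0`. The hypothesis then reads
`∑_{i ≠ k} (π / 2 - arctan (x i)) ≤ π / 2 + arctan (x k)`, that is,
`∑_{i ≠ k} arctan (x i)⁻¹ ≤ arctan (-(x k)⁻¹)`, and subadditivity of `arctan` on `[0, ∞)` moves the
sum on the left inside the arctangent.
-/

lemma pi_div_two_le_arctan_add_arctan {a b : ℝ} (hb : 0 ≤ b) (hab : 1 ≤ a * b) :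
    π / 2 ≤ arctan a + arctan b := by
  have hb_pos : 0 < b := hb.lt_of_ne (by rintro rfl; norm_num at hab)
  have hinv : arctan b⁻¹ ≤ arctan a := arctan_mono ((inv_le_iff_one_le_mul₀ hb_pos).2 hab)
  rw [arctan_inv_of_pos hb_pos] at hinv
  linarith

lemma arctan_add_le_arctan_add_arctan {a b : ℝ} (ha : 0 ≤ a) (hb : 0 ≤ b) :
    arctan (a + b) ≤ arctan a + arctan b := by
  rcases lt_or_ge (a * b) 1 with hab | hab
  · rw [arctan_add hab]
    exact arctan_mono (le_div_self (by positivity) (by linarith) (by nlinarith))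
  · exact (arctan_lt_pi_div_two _).le.trans (pi_div_two_le_arctan_add_arctan hb hab)

section FinsetSums

variable {ι : Type*} {s : Finset ι} {x : ι → ℝ}

lemma arctan_sum_le_sum_arctan (hx : ∀ i ∈ s, 0 ≤ x i) :
    arctan (∑ i ∈ s, x i) ≤ ∑ i ∈ s, arctan (x i) :=
  Finset.le_sum_of_subadditive_on_pred arctan (0 ≤ ·) arctan_zero.le
    (fun _ _ => arctan_add_le_arctan_add_arctan) (fun _ _ => add_nonneg) x hx

lemma arctan_sum_inv_le_card_mul_sub_sum_arctan (hx : ∀ i ∈ s, 0 < x i) :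
    arctan (∑ i ∈ s, (x i)⁻¹) ≤ s.card * (π / 2) - ∑ i ∈ s, arctan (x i) :=
  calc arctan (∑ i ∈ s, (x i)⁻¹)
    _ ≤ ∑ i ∈ s, arctan (x i)⁻¹ :=
      arctan_sum_le_sum_arctan fun i hi => (inv_pos.2 (hx i hi)).le
    _ = ∑ i ∈ s, (π / 2 - arctan (x i)) :=
      Finset.sum_congr rfl fun i hi => arctan_inv_of_pos (hx i hi)
    _ = s.card * (π / 2) - ∑ i ∈ s, arctan (x i) := by
      rw [Finset.sum_sub_distrib, Finset.sum_const, nsmul_eq_mul]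

lemma sum_arctan_le_card_mul_pi_div_two (s : Finset ι) (x : ι → ℝ) :
    ∑ i ∈ s, arctan (x i) ≤ s.card * (π / 2) := by
  simpa only [nsmul_eq_mul] using
    Finset.sum_le_card_nsmul s _ _ fun i _ => (arctan_lt_pi_div_two (x i)).le

lemma add_nonneg_of_le_sum_arctan (hx : ((s.card : ℝ) - 2) * π / 2 ≤ ∑ i ∈ s, arctan (x i))
    {i j : ι} (hi : i ∈ s) (hj : j ∈ s) (hij : i ≠ j) : 0 ≤ x i + x j := by
  classical
  have hi' : i ∈ s.erase j := Finset.mem_erase.2 ⟨hij, hi⟩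
  have hrest := sum_arctan_le_card_mul_pi_div_two ((s.erase j).erase i) x
  rw [Finset.cast_card_erase_of_mem hi', Finset.cast_card_erase_of_mem hj] at hrest
  rw [← Finset.add_sum_erase s _ hj, ← Finset.add_sum_erase _ _ hi'] at hx
  have hpair : arctan (-x j) ≤ arctan (x i) := by
    rw [arctan_neg]
    linarith
  linarith [arctan_le_arctan_iff.1 hpair]

theorem arctan_sum_min_negative_general
    (hx : ((s.card : ℝ) - 2) * π / 2 ≤ ∑ i ∈ s, arctan (x i))
    {k : ι} (hk : k ∈ s) (hneg : x k < 0) :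
    (∀ i ∈ s, i ≠ k → 0 < x i) ∧ ∑ i ∈ s, (x i)⁻¹ ≤ 0 := by
  classical
  have hpos : ∀ i ∈ s, i ≠ k → 0 < x i := fun i hi hik => by
    linarith [add_nonneg_of_le_sum_arctan hx hi hk hik]
  refine ⟨hpos, ?_⟩
  have hothers := arctan_sum_inv_le_card_mul_sub_sum_arctan (s := s.erase k) (x := x) fun i hi =>
    hpos i (Finset.mem_of_mem_erase hi) (Finset.ne_of_mem_erase hi)
  rw [Finset.cast_card_erase_of_mem hk] at hothers
  rw [← Finset.add_sum_erase s _ hk] at hx ⊢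
  have hle : arctan (∑ i ∈ s.erase k, (x i)⁻¹) ≤ arctan (-(x k)⁻¹) := by
    rw [arctan_neg, arctan_inv_of_neg hneg]
    linarith
  linarith [arctan_le_arctan_iff.1 hle]

end FinsetSums

/-- If `∑ arctan xᵢ ≥ (n−2)π/2` and the smallest entry `xₙ` is negative, then all
other entries are positive and `∑ xᵢ⁻¹ ≤ 0`. -/
theorem arctan_sum_min_negative (n : ℕ) (hn : 2 ≤ n) (x : Fin n → ℝ)
    (hx : ((n : ℝ) - 2) * Real.pi / 2 ≤ ∑ i, Real.arctan (x i))
    (last : Fin n) (hlast : (last : ℕ) = n - 1)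
    (hmin : ∀ i, x last ≤ x i) (hneg : x last < 0) :
    (∀ i, i ≠ last → 0 < x i) ∧ ∑ i, (x i)⁻¹ ≤ 0 := by
  simpa using arctan_sum_min_negative_general (by simpa using hx) (Finset.mem_univ last) hneg
end
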